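/- Let K be a compact metric space with dim K = 2 and dim K² = 3 (for instance the Boltyanskiĭ surface), and let σ: K^ℤ → K^ℤ be the full shift on the alphabet K. Then mdim(K^ℤ, σ) = 1; in particular mdim(K^ℤ, σ) < dim K, so the inequality mdim(K^ℤ, σ) ≤ dim K can be strict. -/

import Mathlib

open Filter Set
open scoped ENNReal

namespace MeanDimPaper

variable {X : Type*} [TopologicalSpace X]

/-- `α` is an open cover of `X`. -/
def IsOpenCover (α : Set (Set X)) : Prop :=
  (∀ U ∈ α, IsOpen U) ∧ ⋃₀ α = Set.univ

/-- The order of a cover `α`: the maximum `n ≥ 0` such that there exist `n + 1`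
pairwise distinct members of `α` with nonempty common intersection. -/
noncomputable def ord (α : Set (Set X)) : ℕ∞ :=
  ⨆ n ∈ {n : ℕ | ∃ f : Fin (n + 1) → Set X,
      Function.Injective f ∧ (∀ i, f i ∈ α) ∧ (⋂ i, f i).Nonempty}, (n : ℕ∞)

/-- `β` refines `α`: every member of `β` is contained in some member of `α`. -/
def Refines (β α : Set (Set X)) : Prop := ∀ V ∈ β, ∃ U ∈ α, V ⊆ U

/-- `D(α)`: the minimum of `ord β` over open covers `β` refining `α`. -/
noncomputable def covD (α : Set (Set X)) : ℕ∞ :=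
  ⨅ β ∈ {β : Set (Set X) | IsOpenCover β ∧ Refines β α}, ord β

/-- Topological (covering) dimension: the supremum of `D(α)` over open covers `α`. -/
noncomputable def topDim (X : Type*) [TopologicalSpace X] : ℕ∞ :=
  ⨆ α ∈ {α : Set (Set X) | IsOpenCover α}, covD α

/-- Diameter of a set with respect to a distance function `d`. -/
noncomputable def diamD (d : X → X → ℝ) (U : Set X) : ℝ :=
  sSup {r | ∃ x ∈ U, ∃ y ∈ U, r = d x y}

/-- Mesh of a cover: the supremum of the diameters of its members. -/
noncomputable def mesh (d : X → X → ℝ) (α : Set (Set X)) : ℝ :=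
  sSup (diamD d '' α)

/-- `widim_ε(X, d)`: the minimum of `D(α)` over open covers `α` with `mesh(α, d) < ε`. -/
noncomputable def widim (ε : ℝ) (d : X → X → ℝ) : ℕ∞ :=
  ⨅ α ∈ {α : Set (Set X) | IsOpenCover α ∧ mesh d α < ε}, covD α

/-- `d` is a metric on `X` compatible with the topology of `X`. -/
structure IsCompatMetric {X : Type*} [TopologicalSpace X] (d : X → X → ℝ) : Prop where
  refl : ∀ x, d x x = 0
  eq_of : ∀ x y, d x y = 0 → x = y
  symm : ∀ x y, d x y = d y x
  triangle : ∀ x y z, d x z ≤ d x y + d y z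
  isOpen_iff : ∀ U : Set X, IsOpen U ↔ ∀ x ∈ U, ∃ ε > 0, ∀ y, d x y < ε → y ∈ U

/-- The dynamical distance `d_n(x, y) = max_{0 ≤ i < n} d(Tⁱ x, Tⁱ y)`. -/
noncomputable def dynDist (d : X → X → ℝ) (T : X → X) (n : ℕ) (x y : X) : ℝ :=
  sSup {r | ∃ i < n, r = d (T^[i] x) (T^[i] y)}

/-- Mean dimension `mdim(X, T)` computed with the metric `d`:
`lim_{ε → 0} lim_{n → ∞} widim_ε(X, d_n) / n`.  The inner limit exists (by
subadditivity of `n ↦ widim_ε(X, d_n)`) so it coincides with the liminf, and the inner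
quantity is monotone as `ε` decreases, so the limit as `ε → 0` is the supremum over
`ε > 0`. -/
noncomputable def mdim (T : X → X) (d : X → X → ℝ) : ℝ≥0∞ :=
  ⨆ (ε : ℝ) (_ : 0 < ε),
    Filter.liminf (fun n : ℕ => (widim ε (dynDist d T n) : ℝ≥0∞) / (n : ℝ≥0∞)) Filter.atTop

/-- The full shift `σ` on the alphabet `K`: `σ((xₙ)ₙ) = (xₙ₊₁)ₙ`. -/
def shift (K : Type*) : (ℤ → K) → ℤ → K := fun x n => x (n + 1)

/-!
The dimension of a compact metric space is detected by ordered chains of small simplices. Over a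
field, a finite-dimensional space either has an essential relative class in its top degree, or its
small chains can be pushed, by arbitrarily small moves, into one dimension less; and by the
shuffle product and the Alexander–Whitney map, products of essential classes are essential.

If `dim K ≤ 2` and `dim K² ≤ 3`, an essential class of degree `2` in `K` would have an essential
square of degree `4` in `K²`. Hence over every field `K` is approximately one-dimensional, and so
`Kᴺ` is approximately `N`-dimensional. By universal coefficients the integral cocycles of degree
`> N + 1` are coboundaries at small scales, so obstruction theory deforms maps to nerves of covers
of `Kᴺ` off the simplices of dimension `> N + 1`. This gives `dim Kᴺ ≤ N + 1`, and the mean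
dimension of the shift is at most `lim (N + 1) / N = 1`.

Conversely, if `dim K > 0` then `K` has an essential class of degree `1` at some scale, whose
`N`-th power is an essential class of `Kᴺ` at the same scale; hence the width dimension of `K^ℤ`
for `d_N` is at least `N`.
-/

open Finsupp (linearCombination)

open Function (support)

section Chains

variable {R : Type*} [CommRing R] {X Y Z : Type*}

/-- The augmented ordered simplicial chains on the vertex set `X`. A list of length `n + 1` is
an ordered `n`-simplex, and the empty list is the augmentation generator in degree `-1`. -/
abbrev OrderedChain (R : Type*) [CommRing R] (X : Type*) := List X →₀ R

/-- The basis element of the free module `α →₀ R` indexed by `l`. -/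
noncomputable abbrev gen (R : Type*) [CommRing R] {α : Type*} (l : α) : α →₀ R := Finsupp.single l 1

/-- The finitely supported functions that vanish outside `{l | P l}`. -/
abbrev supportedOn (R : Type*) [CommRing R] {α : Type*} (P : α → Prop) : Submodule R (α →₀ R) :=
  Finsupp.supported R R {l | P l}

theorem linearCombination_gen {α M : Type*} [AddCommGroup M] [Module R M] (f : α → M) (l : α) :
    linearCombination R f (gen R l) = f l := by simp

theorem linearMap_ext_gen {α M : Type*} [AddCommGroup M] [Module R M] {f g : (α →₀ R) →ₗ[R] M}
    (h : ∀ l, f (gen R l) = g (gen R l)) : f = g := by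
  apply Finsupp.lhom_ext'
  intro l
  ext
  exact h l

theorem gen_mem_supportedOn {α : Type*} {P : α → Prop} {l : α} (h : P l) :
    gen R l ∈ supportedOn R P :=
  Finsupp.single_mem_supported R _ h

theorem supportedOn_le {α : Type*} {P : α → Prop} {N : Submodule R (α →₀ R)}
    (h : ∀ l, P l → gen R l ∈ N) : supportedOn R P ≤ N := by
  rw [supportedOn, Finsupp.supported_eq_span_single, Submodule.span_le]
  rintro _ ⟨l, hl, rfl⟩
  exact h l hl

theorem map_mem_of_gen {α M : Type*} [AddCommGroup M] [Module R M] {P : α → Prop}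
    {N : Submodule R M} {f : (α →₀ R) →ₗ[R] M} (h : ∀ l, P l → f (gen R l) ∈ N) {c : α →₀ R}
    (hc : c ∈ supportedOn R P) : f c ∈ N := by
  have : supportedOn R P ≤ N.comap f := supportedOn_le h
  exact this hc

theorem map_eq_of_gen {α M : Type*} [AddCommGroup M] [Module R M] {P : α → Prop}
    {f g : (α →₀ R) →ₗ[R] M} (h : ∀ l, P l → f (gen R l) = g (gen R l)) {c : α →₀ R}
    (hc : c ∈ supportedOn R P) : f c = g c := by
  have : supportedOn R P ≤ LinearMap.ker (f - g) := supportedOn_le fun l hl => by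
    simp [LinearMap.mem_ker, h l hl]
  have := this hc
  simpa [LinearMap.mem_ker, sub_eq_zero] using this

theorem map_eq_zero_of_gen {α M : Type*} [AddCommGroup M] [Module R M] {P : α → Prop}
    {f : (α →₀ R) →ₗ[R] M} (h : ∀ l, P l → f (gen R l) = 0) {c : α →₀ R}
    (hc : c ∈ supportedOn R P) : f c = 0 := by
  have := map_eq_of_gen (f := f) (g := 0) (by simpa using h) hc
  simpa using this

theorem supportedOn_mono {α : Type*} {P Q : α → Prop} (h : ∀ l, P l → Q l) :
    supportedOn R P ≤ supportedOn R Q :=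
  Finsupp.supported_mono h

theorem mem_supportedOn_and {α : Type*} {P Q : α → Prop} {c : α →₀ R} (h1 : c ∈ supportedOn R P)
    (h2 : c ∈ supportedOn R Q) : c ∈ supportedOn R (fun l => P l ∧ Q l) :=
  fun _ hx => ⟨h1 hx, h2 hx⟩

/-- The cone operator with apex `x`, which prepends `x` to every simplex. -/
noncomputable def cone (x : X) : OrderedChain R X →ₗ[R] OrderedChain R X :=
  linearCombination R (fun l => gen R (x :: l))

@[simp] theorem cone_gen (x : X) (l : List X) : cone x (gen R l) = gen R (x :: l) :=
  linearCombination_gen _ _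

/-- The boundary of a single ordered simplex, by recursion through `∂ (x * l) = l - x * ∂ l`. -/
noncomputable def boundaryList (R : Type*) [CommRing R] : List X → OrderedChain R X
  | [] => 0
  | x :: l => gen R l - cone x (boundaryList R l)

/-- The boundary operator of the augmented ordered chain complex. -/
noncomputable def boundary : OrderedChain R X →ₗ[R] OrderedChain R X :=
  linearCombination R (boundaryList R)

theorem boundary_gen (l : List X) : boundary (gen R l) = boundaryList R l :=
  linearCombination_gen _ _

@[simp] theorem boundary_nil : boundary (gen R ([] : List X)) = 0 := by rw [boundary_gen]; rfl

theorem boundary_cons (x : X) (l : List X) :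
    boundary (gen R (x :: l)) = gen R l - cone x (boundary (gen R l)) := by
  rw [boundary_gen, boundary_gen]; rfl

theorem boundary_cone (x : X) (c : OrderedChain R X) :
    boundary (cone x c) = c - cone x (boundary c) := by
  have : (boundary ∘ₗ cone x : OrderedChain R X →ₗ[R] OrderedChain R X) =
      LinearMap.id - cone x ∘ₗ boundary :=
    linearMap_ext_gen fun l => by simp [boundary_cons]
  exact LinearMap.congr_fun this c

theorem boundary_boundary_gen (l : List X) : boundary (boundary (gen R l)) = 0 := by
  induction l with
  | nil => simp
  | cons x l ih => rw [boundary_cons, map_sub, boundary_cone, ih]; simp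

theorem boundary_boundary (c : OrderedChain R X) : boundary (boundary c) = 0 := by
  have : (boundary ∘ₗ boundary : OrderedChain R X →ₗ[R] OrderedChain R X) = 0 :=
    linearMap_ext_gen fun l => by simpa using boundary_boundary_gen l
  exact LinearMap.congr_fun this c

theorem boundary_gen_mem (l : List X) :
    boundary (gen R l) ∈ supportedOn R (fun m => m.length + 1 = l.length ∧ m.Sublist l) := by
  induction l with
  | nil => simp
  | cons x l ih =>
    rw [boundary_cons]
    refine Submodule.sub_mem _ (gen_mem_supportedOn (by simp)) ?_
    refine map_mem_of_gen ?_ ih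
    rintro m ⟨h1, h2⟩
    rw [cone_gen]
    exact gen_mem_supportedOn (by simp [h1, h2])

/-- Augmentation-preserving chain maps between augmented ordered chain complexes. -/
structure IsChainMap (Q : OrderedChain R X →ₗ[R] OrderedChain R Y) : Prop where
  comm : ∀ l, boundary (Q (gen R l)) = Q (boundary (gen R l))
  nil : Q (gen R []) = gen R []
  len : ∀ l, Q (gen R l) ∈ supportedOn R (fun m => m.length = l.length)

theorem IsChainMap.boundary_map {Q : OrderedChain R X →ₗ[R] OrderedChain R Y} (h : IsChainMap Q)
    (c : OrderedChain R X) : boundary (Q c) = Q (boundary c) := by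
  have : boundary ∘ₗ Q = Q ∘ₗ boundary := linearMap_ext_gen fun l => by simpa using h.comm l
  exact LinearMap.congr_fun this c

theorem IsChainMap.comp {Q : OrderedChain R X →ₗ[R] OrderedChain R Y}
    {Q' : OrderedChain R Y →ₗ[R] OrderedChain R Z} (h' : IsChainMap Q')
    (h : IsChainMap Q) : IsChainMap (Q' ∘ₗ Q) where
  comm l := by simp [h'.boundary_map, h.boundary_map]
  nil := by simp [h.nil, h'.nil]
  len l := by
    rw [LinearMap.comp_apply]
    refine map_mem_of_gen ?_ (h.len l)
    intro m hm
    simpa [hm] using h'.len m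

/-- The chain map induced by a map of vertices. -/
noncomputable def vertexMap (φ : X → Y) : OrderedChain R X →ₗ[R] OrderedChain R Y :=
  linearCombination R (fun l => gen R (l.map φ))

@[simp] theorem vertexMap_gen (φ : X → Y) (l : List X) : vertexMap φ (gen R l) = gen R (l.map φ) :=
  linearCombination_gen _ _

theorem vertexMap_cone (φ : X → Y) (x : X) (c : OrderedChain R X) :
    vertexMap φ (cone x c) = cone (φ x) (vertexMap φ c) := by
  have : (vertexMap φ ∘ₗ cone x : OrderedChain R X →ₗ[R] OrderedChain R Y) =
      cone (φ x) ∘ₗ vertexMap φ :=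
    linearMap_ext_gen fun l => by simp
  exact LinearMap.congr_fun this c

theorem isChainMap_vertexMap (φ : X → Y) : IsChainMap (vertexMap (R := R) φ) where
  comm l := by
    induction l with
    | nil => simp
    | cons x l ih =>
      rw [vertexMap_gen, List.map_cons, boundary_cons, boundary_cons, map_sub, vertexMap_cone,
        ← ih]
      simp
  nil := by simp
  len l := by rw [vertexMap_gen]; exact gen_mem_supportedOn (by simp)

/-- The value of `homotopy Q` on lists of length `n`, by recursion on `n`. -/
noncomputable def homotopyAux (Q : OrderedChain R X →ₗ[R] OrderedChain R X) :
    ℕ → List X → OrderedChain R X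
  | 0, _ => 0
  | _ + 1, [] => 0
  | n + 1, x :: l =>
    cone x (gen R (x :: l) - Q (gen R (x :: l)) -
      linearCombination R (homotopyAux Q n) (boundaryList R (x :: l)))

/-- A chain homotopy from a chain map `Q` to the identity: on a list `x :: l`, the cycle that
has to be filled is coned off from the first vertex `x`. -/
noncomputable def homotopy (Q : OrderedChain R X →ₗ[R] OrderedChain R X) :
    OrderedChain R X →ₗ[R] OrderedChain R X :=
  linearCombination R (fun l => homotopyAux Q l.length l)

theorem homotopy_nil (Q : OrderedChain R X →ₗ[R] OrderedChain R X) : homotopy Q (gen R []) = 0 := by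
  rw [homotopy, linearCombination_gen]; rfl

theorem homotopy_cons (Q : OrderedChain R X →ₗ[R] OrderedChain R X) (x : X) (l : List X) :
    homotopy Q (gen R (x :: l)) =
      cone x (gen R (x :: l) - Q (gen R (x :: l)) - homotopy Q (boundary (gen R (x :: l)))) := by
  have h : homotopy Q (boundary (gen R (x :: l))) =
      linearCombination R (homotopyAux Q l.length) (boundaryList R (x :: l)) := by
    rw [boundary_gen]
    refine map_eq_of_gen (P := fun m : List X => m.length = l.length) ?_ ?_
    · intro m hm; rw [homotopy, linearCombination_gen, linearCombination_gen, hm]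
    · rw [← boundary_gen]
      exact supportedOn_mono (by simp +contextual) (boundary_gen_mem (R := R) (x :: l))
  rw [h, homotopy, linearCombination_gen]; rfl

theorem boundary_homotopy_gen {Q : OrderedChain R X →ₗ[R] OrderedChain R X} (hQ : IsChainMap Q)
    (l : List X) :
    boundary (homotopy Q (gen R l)) + homotopy Q (boundary (gen R l)) = gen R l - Q (gen R l) := by
  induction h : l.length generalizing l with
  | zero =>
    obtain rfl := List.length_eq_zero_iff.1 h
    simp [homotopy_nil, hQ.nil]
  | succ n ih =>
    cases l with
    | nil => simp at h
    | cons x l =>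
      have key : boundary (homotopy Q (boundary (gen R (x :: l)))) =
          boundary (gen R (x :: l)) - Q (boundary (gen R (x :: l))) := by
        have : (boundary ∘ₗ homotopy Q) (boundary (gen R (x :: l))) =
            (LinearMap.id - Q - homotopy Q ∘ₗ boundary : OrderedChain R X →ₗ[R] OrderedChain R X)
            (boundary (gen R (x :: l))) := by
          refine map_eq_of_gen (P := fun m : List X => m.length = l.length) ?_ ?_
          · intro m hm
            have := ih m (by simp at h; omega)
            simp only [LinearMap.comp_apply, LinearMap.sub_apply, LinearMap.id_apply]
            rw [← this]; abel
          · exact supportedOn_mono (by simp +contextual) (boundary_gen_mem (R := R) (x :: l))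
        simpa [boundary_boundary] using this
      rw [homotopy_cons, boundary_cone, map_sub (boundary (R := R) (X := X)), key,
        map_sub (boundary (R := R) (X := X)), hQ.boundary_map]
      simp

theorem eq_add_boundary_homotopy {Q : OrderedChain R X →ₗ[R] OrderedChain R X} (hQ : IsChainMap Q)
    (c : OrderedChain R X) :
    c = Q c + boundary (homotopy Q c) + homotopy Q (boundary c) := by
  have : (LinearMap.id : OrderedChain R X →ₗ[R] OrderedChain R X) =
      Q + boundary ∘ₗ homotopy Q + homotopy Q ∘ₗ boundary :=
    linearMap_ext_gen fun l => by
      simp only [LinearMap.add_apply, LinearMap.comp_apply, LinearMap.id_apply]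
      rw [add_assoc, boundary_homotopy_gen hQ l]
      abel
  exact LinearMap.congr_fun this c

theorem homotopy_gen_mem_length {Q : OrderedChain R X →ₗ[R] OrderedChain R X} (hQ : IsChainMap Q)
    (l : List X) :
    homotopy Q (gen R l) ∈ supportedOn R (fun m => m.length = l.length + 1) := by
  induction h : l.length generalizing l with
  | zero =>
    obtain rfl := List.length_eq_zero_iff.1 h
    simp [homotopy_nil]
  | succ n ih =>
    cases l with
    | nil => simp at h
    | cons x l =>
      rw [homotopy_cons]
      have key : gen R (x :: l) - Q (gen R (x :: l)) - homotopy Q (boundary (gen R (x :: l))) ∈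
          supportedOn R (fun m => m.length = n + 1) := by
        refine Submodule.sub_mem _ (Submodule.sub_mem _ (gen_mem_supportedOn h) ?_) ?_
        · rw [← h]; exact hQ.len _
        · refine map_mem_of_gen ?_ (boundary_gen_mem (R := R) (x :: l))
          rintro m ⟨h1, _⟩
          exact ih m (by omega)
      refine map_mem_of_gen ?_ key
      intro m hm
      rw [cone_gen]; exact gen_mem_supportedOn (by simp [hm])

end Chains

section Metric

variable {R : Type*} [CommRing R] {X : Type*} [MetricSpace X]

/-- The simplex `l` has diameter less than `δ`, that is, it belongs to the Vietoris–Rips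
complex at scale `δ`. -/
def IsSmall (δ : ℝ) (l : List X) : Prop := ∀ u ∈ l, ∀ v ∈ l, dist u v < δ

/-- Every vertex of `m` lies within `ε` of some vertex of `l`. -/
def IsNear (ε : ℝ) (l m : List X) : Prop := ∀ v ∈ m, ∃ u ∈ l, dist v u < ε

theorem IsSmall.subset {δ : ℝ} {l m : List X} (h : IsSmall δ l) (hm : m ⊆ l) : IsSmall δ m :=
  fun u hu v hv => h u (hm hu) v (hm hv)

theorem IsSmall.mono {δ δ' : ℝ} {l : List X} (h : IsSmall δ l) (hd : δ ≤ δ') : IsSmall δ' l :=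
  fun u hu v hv => (h u hu v hv).trans_le hd

theorem IsSmall.map {Y : Type*} [MetricSpace Y] {f : X → Y} (hf : LipschitzWith 1 f) {δ : ℝ}
    {l : List X} (h : IsSmall δ l) : IsSmall δ (l.map f) := by
  intro _ hu _ hv
  obtain ⟨u, hu', rfl⟩ := List.mem_map.1 hu
  obtain ⟨v, hv', rfl⟩ := List.mem_map.1 hv
  exact (hf.dist_le_mul u v).trans_lt (by simpa using h u hu' v hv')

theorem IsNear.mono {δ δ' : ℝ} {l m : List X} (h : IsNear δ l m) (hd : δ ≤ δ') : IsNear δ' l m :=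
  fun u hu => let ⟨v, hv, h⟩ := h u hu; ⟨v, hv, h.trans_le hd⟩

theorem IsNear.of_subset {ε : ℝ} {l l' m : List X} (h : IsNear ε l m) (hl : l ⊆ l') :
    IsNear ε l' m :=
  fun u hu => let ⟨v, hv, h⟩ := h u hu; ⟨v, hl hv, h⟩

theorem IsNear.isSmall {δ ε : ℝ} {l m : List X} (h : IsNear ε l m) (hl : IsSmall δ l) :
    IsSmall (δ + 2 * ε) m := by
  intro u hu v hv
  obtain ⟨u', hu', h1⟩ := h u hu
  obtain ⟨v', hv', h2⟩ := h v hv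
  have := hl u' hu' v' hv'
  have h3 := dist_triangle4 u u' v' v
  rw [dist_comm v' v] at h3
  linarith

theorem isNear_of_subset {ε : ℝ} (hε : 0 < ε) {l m : List X} (h : m ⊆ l) : IsNear ε l m :=
  fun u hu => ⟨u, h hu, by simpa⟩

/-- The operator `Q` moves simplices of diameter less than `δ` by less than `ε`. -/
def IsNearId (δ ε : ℝ) (Q : OrderedChain R X →ₗ[R] OrderedChain R X) : Prop :=
  ∀ l, IsSmall δ l → Q (gen R l) ∈ supportedOn R (IsNear ε l)

theorem boundary_gen_mem_isSmall {δ : ℝ} {l : List X} (h : IsSmall δ l) :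
    boundary (gen R l) ∈ supportedOn R (fun m => m.length + 1 = l.length ∧ m ⊆ l ∧ IsSmall δ m) :=
  supportedOn_mono (fun _ hm => ⟨hm.1, hm.2.subset, h.subset hm.2.subset⟩)
    (boundary_gen_mem (R := R) l)

theorem homotopy_isNearId {δ ε : ℝ} (hε : 0 < ε) {Q : OrderedChain R X →ₗ[R] OrderedChain R X}
    (hn : IsNearId δ ε Q) : IsNearId δ ε (homotopy Q) := by
  intro l hl
  induction h : l.length generalizing l with
  | zero =>
    obtain rfl := List.length_eq_zero_iff.1 h
    simp [homotopy_nil]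
  | succ n ih =>
    cases l with
    | nil => simp at h
    | cons x l =>
      rw [homotopy_cons]
      have key : gen R (x :: l) - Q (gen R (x :: l)) - homotopy Q (boundary (gen R (x :: l))) ∈
          supportedOn R (IsNear ε (x :: l)) := by
        refine Submodule.sub_mem _ (Submodule.sub_mem _ (gen_mem_supportedOn
          (isNear_of_subset hε (by simp))) ?_) ?_
        · exact hn _ hl
        · refine map_mem_of_gen ?_ (boundary_gen_mem_isSmall (R := R) hl)
          rintro m ⟨h1, h2, h3⟩
          exact supportedOn_mono (fun _ hm => hm.of_subset h2) (ih m h3 (by omega))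
      refine map_mem_of_gen ?_ key
      intro m hm
      rw [cone_gen]; refine gen_mem_supportedOn ?_
      intro v hv
      rcases List.mem_cons.1 hv with rfl | hv
      · exact ⟨v, by simp, by simpa⟩
      · exact hm v hv

end Metric

section Alternation

variable {R : Type*} [CommRing R] {X : Type*} [LinearOrder X]

/-- The signed insertion of a vertex into an increasing list: a transposition costs a sign and
a repeated vertex gives `0`. -/
noncomputable def signedInsert (R : Type*) [CommRing R] (x : X) : List X → OrderedChain R X
  | [] => gen R [x]
  | y :: m =>
    if x < y then gen R (x :: y :: m) else if x = y then 0 else -cone y (signedInsert R x m)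

/-- The signed sort of a single ordered simplex. -/
noncomputable def signedSortList (R : Type*) [CommRing R] : List X → OrderedChain R X
  | [] => gen R []
  | x :: l => linearCombination R (signedInsert R x) (signedSortList R l)

/-- The alternation operator: it sorts the vertices of a simplex, multiplies by the sign of the
sorting permutation and kills degenerate simplices. -/
noncomputable def signedSort : OrderedChain R X →ₗ[R] OrderedChain R X :=
  linearCombination R (signedSortList R)

theorem signedSort_gen (l : List X) : signedSort (gen R l) = signedSortList R l :=
  linearCombination_gen _ _

@[simp] theorem signedSort_nil : signedSort (gen R ([] : List X)) = gen R [] := by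
  rw [signedSort_gen]; rfl

theorem signedSort_cons (x : X) (l : List X) :
    signedSort (gen R (x :: l)) =
      linearCombination R (signedInsert R x) (signedSort (gen R l)) := by
  rw [signedSort_gen, signedSort_gen]; rfl

theorem signedInsert_of_lt {x : X} {m : List X} (h : ∀ y ∈ m, x < y) :
    signedInsert R x m = gen R (x :: m) := by
  cases m with
  | nil => rfl
  | cons y m => simp [signedInsert, h y (by simp)]

theorem signedInsert_mem (x : X) (m : List X) (hm : m.Pairwise (· < ·)) :
    signedInsert R x m ∈ supportedOn R (fun n => n.Pairwise (· < ·) ∧ n.length = m.length + 1 ∧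
      ∀ y, y ∈ n ↔ (y = x ∨ y ∈ m)) := by
  induction m with
  | nil => exact gen_mem_supportedOn (by simp)
  | cons y m ih =>
    rw [List.pairwise_cons] at hm
    rw [signedInsert]
    split_ifs with h1 h2
    · refine gen_mem_supportedOn ⟨?_, by simp, by simp⟩
      simp only [List.pairwise_cons, List.mem_cons]
      refine ⟨?_, hm⟩
      rintro z (rfl | hz)
      · exact h1
      · exact h1.trans (hm.1 z hz)
    · exact Submodule.zero_mem _
    · refine Submodule.neg_mem _ ?_
      refine map_mem_of_gen ?_ (ih hm.2)
      rintro n ⟨h3, h4, h5⟩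
      rw [cone_gen]
      refine gen_mem_supportedOn ⟨?_, by simp [h4], ?_⟩
      · rw [List.pairwise_cons]
        refine ⟨?_, h3⟩
        intro z hz
        rcases (h5 z).1 hz with rfl | hz
        · exact lt_of_le_of_ne (not_lt.1 h1) (Ne.symm h2)
        · exact hm.1 z hz
      · intro z
        simp only [List.mem_cons, h5]; tauto

theorem signedInsert_of_mem {x : X} {m : List X} (hm : m.Pairwise (· < ·)) (hx : x ∈ m) :
    signedInsert R x m = 0 := by
  induction m with
  | nil => simp at hx
  | cons y m ih =>
    rw [List.pairwise_cons] at hm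
    rw [signedInsert]
    rcases List.mem_cons.1 hx with rfl | hx
    · simp
    · have := hm.1 x hx
      rw [if_neg (not_lt.2 this.le), if_neg this.ne', ih hm.2 hx]; simp

theorem signedInsert_cone_of_gt {x y : X} (h : y < x) (c : OrderedChain R X) :
    linearCombination R (signedInsert R x) (cone y c) =
      -cone y (linearCombination R (signedInsert R x) c) := by
  have : linearCombination R (signedInsert R x) ∘ₗ cone y =
      -(cone y ∘ₗ linearCombination R (signedInsert R x)) :=
    linearMap_ext_gen fun l => by
      simp only [LinearMap.comp_apply, LinearMap.neg_apply, cone_gen, linearCombination_gen]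
      rw [signedInsert, if_neg (not_lt.2 h.le), if_neg h.ne']
  exact LinearMap.congr_fun this c

theorem signedInsert_cone_self (x : X) (c : OrderedChain R X) :
    linearCombination R (signedInsert R x) (cone x c) = 0 := by
  have : linearCombination R (signedInsert R x) ∘ₗ cone x = 0 :=
    linearMap_ext_gen fun l => by simp [signedInsert]
  exact LinearMap.congr_fun this c

theorem boundary_signedInsert (x : X) (m : List X) (hm : m.Pairwise (· < ·)) :
    boundary (signedInsert R x m) =
      gen R m - linearCombination R (signedInsert R x) (boundary (gen R m)) := by
  induction m with
  | nil => rw [signedInsert, boundary_cons]; simp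
  | cons y m ih =>
    have hm' := hm
    rw [List.pairwise_cons] at hm
    rcases lt_trichotomy x y with h | rfl | h
    · have hall : ∀ z ∈ y :: m, x < z := by
        intro z hz
        rcases List.mem_cons.1 hz with rfl | hz
        · exact h
        · exact h.trans (hm.1 z hz)
      rw [signedInsert_of_lt hall, boundary_cons]
      congr 1
      refine map_eq_of_gen ?_ (boundary_gen_mem (R := R) (y :: m))
      rintro n ⟨_, h2⟩
      rw [cone_gen, linearCombination_gen, signedInsert_of_lt]
      exact fun z hz => hall z (h2.subset hz)
    · rw [signedInsert_of_mem hm' (by simp), boundary_cons, map_sub, signedInsert_cone_self,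
        linearCombination_gen, signedInsert_of_lt hm.1]
      simp
    · rw [signedInsert, if_neg (not_lt.2 h.le), if_neg h.ne', map_neg, boundary_cone, ih hm.2,
        boundary_cons, map_sub, map_sub, signedInsert_cone_of_gt h, linearCombination_gen, cone_gen]
      abel

theorem signedSort_gen_mem (l : List X) :
    signedSort (gen R l) ∈ supportedOn R (fun n => n.Pairwise (· < ·) ∧ n.length = l.length ∧
      ∀ y, y ∈ n ↔ y ∈ l) := by
  induction l with
  | nil => rw [signedSort_nil]; exact gen_mem_supportedOn (by simp)
  | cons x l ih =>
    rw [signedSort_cons]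
    refine map_mem_of_gen ?_ ih
    rintro m ⟨h1, h2, h3⟩
    rw [linearCombination_gen]
    refine supportedOn_mono ?_ (signedInsert_mem x m h1)
    rintro n ⟨h4, h5, h6⟩
    exact ⟨h4, by simp [h5, h2], by intro y; rw [h6, h3]; simp⟩

theorem isChainMap_signedSort : IsChainMap (signedSort (R := R) (X := X)) where
  comm l := by
    induction l with
    | nil => simp
    | cons x l ih =>
      have h1 : boundary (linearCombination R (signedInsert R x) (signedSort (gen R l))) =
          signedSort (gen R l) -
            linearCombination R (signedInsert R x) (boundary (signedSort (gen R l))) := by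
        have := map_eq_of_gen (f := boundary ∘ₗ linearCombination R (signedInsert R x))
          (g := LinearMap.id - linearCombination R (signedInsert R x) ∘ₗ boundary)
          (P := fun n => n.Pairwise (· < ·))
          (fun m hm => by simpa [linearCombination_gen] using boundary_signedInsert (R := R) x m hm)
          (supportedOn_mono (fun _ h => h.1) (signedSort_gen_mem (R := R) l))
        simpa using this
      rw [signedSort_cons, h1, boundary_cons, map_sub, ih]
      congr 1
      have : linearCombination R (signedInsert R x) ∘ₗ signedSort = signedSort ∘ₗ cone x :=
        linearMap_ext_gen fun m => by simp [signedSort_cons]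
      exact LinearMap.congr_fun this _
  nil := by simp
  len l := supportedOn_mono (fun _ h => h.2.1) (signedSort_gen_mem l)

theorem signedSort_of_not_nodup {l : List X} (h : ¬ l.Nodup) : signedSort (gen R l) = 0 := by
  induction l with
  | nil => simp at h
  | cons x l ih =>
    rw [signedSort_cons]
    by_cases hl : l.Nodup
    · have hx : x ∈ l := by
        by_contra hx; exact h (List.nodup_cons.2 ⟨hx, hl⟩)
      refine map_eq_zero_of_gen ?_ (signedSort_gen_mem (R := R) l)
      rintro m ⟨h1, _, h3⟩
      rw [linearCombination_gen, signedInsert_of_mem h1 ((h3 x).2 hx)]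
    · rw [ih hl]; simp

theorem signedSort_of_pairwise_lt {l : List X} (h : l.Pairwise (· < ·)) :
    signedSort (gen R l) = gen R l := by
  induction l with
  | nil => simp
  | cons x l ih =>
    rw [List.pairwise_cons] at h
    rw [signedSort_cons, ih h.2, linearCombination_gen, signedInsert_of_lt h.1]

end Alternation

section Covers

variable {X : Type*}

theorem ord_le_iff {β : Set (Set X)} {n : ℕ} :
    ord β ≤ n ↔ ∀ x, ∀ L : List (Set X), L.Nodup → (∀ U ∈ L, U ∈ β ∧ x ∈ U) → L.length ≤ n + 1 := by
  constructor
  · intro h x L hL hm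
    by_contra hc
    obtain ⟨m, hmL⟩ : ∃ m, L.length = m + 1 := ⟨L.length - 1, by omega⟩
    have : (m : ℕ∞) ≤ ord β := by
      refine le_iSup₂_of_le (i := m) ?_ le_rfl
      refine ⟨fun i => L.get (i.cast hmL.symm), ?_, ?_, x, ?_⟩
      · intro i j hij
        have := (List.nodup_iff_injective_get.1 hL) hij
        simpa using this
      · intro i; exact (hm _ (List.get_mem _ _)).1
      · simp only [mem_iInter]; intro i; exact (hm _ (List.get_mem _ _)).2
    have h2 := this.trans h
    have : m ≤ n := by exact_mod_cast h2
    omega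
  · intro h
    refine iSup₂_le ?_
    rintro m ⟨f, hf, hm, x, hx⟩
    have := h x (List.ofFn f) (List.nodup_ofFn.2 hf) (by
      intro U hU
      rw [List.mem_ofFn] at hU
      obtain ⟨i, rfl⟩ := hU
      exact ⟨hm i, mem_iInter.1 hx i⟩)
    rw [List.length_ofFn] at this
    exact_mod_cast (by omega : m ≤ n)

theorem ord_range_le {ι : Type*} {U : ι → Set X} {n : ℕ}
    (h : ∀ x, ∀ L : List ι, L.Nodup → (∀ i ∈ L, x ∈ U i) → L.length ≤ n + 1) :
    ord (range U) ≤ n := by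
  rw [ord_le_iff]
  intro x L hL hm
  have hex : ∀ V ∈ L, ∃ i, U i = V := fun V hV => (hm V hV).1
  rcases L with - | ⟨V₀, L⟩
  · simp
  have : Nonempty ι := ⟨(hex V₀ (by simp)).choose⟩
  choose! g hg using hex
  have := h x ((V₀ :: L).map g) ?_ ?_
  · simpa using this
  · refine List.Nodup.map_on ?_ hL
    intro V hV W hW hVW
    rw [← hg V hV, ← hg W hW, hVW]
  · intro i hi
    obtain ⟨V, hV, rfl⟩ := List.mem_map.1 hi
    rw [hg V hV]; exact (hm V hV).2

theorem ord_mono {β γ : Set (Set X)} (h : β ⊆ γ) : ord β ≤ ord γ := by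
  refine iSup₂_le ?_
  rintro m ⟨f, hf, hm, hx⟩
  exact le_iSup₂_of_le (i := m) ⟨f, hf, fun i => h (hm i), hx⟩ le_rfl

variable [TopologicalSpace X]

theorem IsOpenCover.exists_mem {α : Set (Set X)} (hα : IsOpenCover α) (x : X) :
    ∃ U : α, x ∈ U.1 :=
  let ⟨U, hU, hx⟩ := mem_sUnion.1 (hα.2.ge (mem_univ x))
  ⟨⟨U, hU⟩, hx⟩

theorem isOpenCover_range {ι : Type*} {U : ι → Set X} (hU : ∀ i, IsOpen (U i))
    (hcov : ∀ x, ∃ i, x ∈ U i) : IsOpenCover (range U) :=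
  ⟨forall_mem_range.2 hU, by rw [sUnion_range]; exact iUnion_eq_univ_iff.2 hcov⟩

theorem exists_refinement_ord_le_of_covD_le {α : Set (Set X)} {n : ℕ} (h : covD α ≤ n) :
    ∃ β, IsOpenCover β ∧ Refines β α ∧ ord β ≤ n := by
  have hlt : covD α < (n + 1 : ℕ) := h.trans_lt (by exact_mod_cast Nat.lt_succ_self n)
  unfold covD at hlt
  simp only [iInf_lt_iff] at hlt
  obtain ⟨β, ⟨hβ, hrefine⟩, hord⟩ := hlt
  exact ⟨β, hβ, hrefine, Order.le_of_lt_add_one (by simpa using hord)⟩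

theorem exists_finite_refinement_ord_le [CompactSpace X] {n : ℕ} (h : topDim X ≤ n)
    {α : Set (Set X)} (hα : IsOpenCover α) :
    ∃ β : Set (Set X), β.Finite ∧ IsOpenCover β ∧ Refines β α ∧ ord β ≤ n ∧
      ∀ U ∈ β, U.Nonempty := by
  have h1 : covD α ≤ n := le_trans (le_iSup₂_of_le (i := α) hα le_rfl) h
  obtain ⟨β, hβ, hr, ho⟩ := exists_refinement_ord_le_of_covD_le h1
  obtain ⟨γ, hγ1, hγ2, hγ3⟩ := isCompact_univ.elim_finite_subcover_image (b := β) (c := id)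
    (fun U hU => hβ.1 U hU) (by rw [← hβ.2, sUnion_eq_biUnion]; rfl)
  refine ⟨{U ∈ γ | U.Nonempty}, hγ2.subset (sep_subset _ _), ⟨?_, ?_⟩, ?_, ?_, fun U hU => hU.2⟩
  · exact fun U hU => hβ.1 U (hγ1 hU.1)
  · rw [eq_univ_iff_forall]
    intro x
    obtain ⟨U, hU, hx⟩ := mem_iUnion₂.1 (hγ3 (mem_univ x))
    exact ⟨U, ⟨hU, ⟨x, hx⟩⟩, hx⟩
  · exact fun U hU => hr U (hγ1 hU.1)
  · exact (ord_mono ((sep_subset _ _).trans hγ1)).trans ho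

theorem topDim_le_of_forall_refinement {n : ℕ∞} (h : ∀ α : Set (Set X), IsOpenCover α →
    ∃ β, IsOpenCover β ∧ Refines β α ∧ ord β ≤ n) : topDim X ≤ n := by
  refine iSup₂_le ?_
  intro α hα
  obtain ⟨β, h1, h2, h3⟩ := h α hα
  exact le_trans (iInf₂_le (i := β) ⟨h1, h2⟩) h3

end Covers

section NerveProjection

variable {R : Type*} [CommRing R] {X : Type*}

/-- A well-ordering of an arbitrary type, used to alternate chains on it. -/
@[reducible] noncomputable def wellOrder (X : Type*) : LinearOrder X :=
  haveI : DecidableRel (WellOrderingRel : X → X → Prop) := Classical.decRel _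
  linearOrderOfSTO WellOrderingRel

/-- The alternated chain map induced by a vertex map `φ`. When `φ` sends each point to a chosen
vertex of a cover, this projects chains to the alternating chains of the nerve of that cover. -/
noncomputable def nerveProjection (R : Type*) [CommRing R] (φ : X → X) :
    OrderedChain R X →ₗ[R] OrderedChain R X :=
  (@signedSort R _ X (wellOrder X)) ∘ₗ vertexMap φ

theorem isChainMap_nerveProjection (φ : X → X) : IsChainMap (nerveProjection R φ) :=
  IsChainMap.comp (@isChainMap_signedSort R _ X (wellOrder X)) (isChainMap_vertexMap φ)

theorem nerveProjection_gen_mem (φ : X → X) (l : List X) :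
    nerveProjection R φ (gen R l) ∈ supportedOn R (fun n =>
      n.Nodup ∧ n.length = l.length ∧ ∀ y, y ∈ n ↔ y ∈ l.map φ) := by
  rw [nerveProjection, LinearMap.comp_apply, vertexMap_gen]
  let := wellOrder X
  refine supportedOn_mono ?_ (signedSort_gen_mem (R := R) (l.map φ))
  rintro n ⟨h1, h2, h3⟩
  exact ⟨h1.imp (fun h => ne_of_lt h), by simpa using h2, h3⟩

theorem nerveProjection_of_not_nodup {φ : X → X} {l : List X} (h : ¬ (l.map φ).Nodup) :
    nerveProjection R φ (gen R l) = 0 := by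
  rw [nerveProjection, LinearMap.comp_apply, vertexMap_gen]
  let := wellOrder X
  exact signedSort_of_not_nodup h

end NerveProjection

section ApproxDim

variable {X : Type*} [MetricSpace X]

theorem IsOpenCover.exists_ball_subset [CompactSpace X] {α : Set (Set X)} (hα : IsOpenCover α) :
    ∃ δ > 0, ∀ x, ∃ U ∈ α, Metric.ball x δ ⊆ U := by
  obtain ⟨δ, hδ, h⟩ := lebesgue_number_lemma_of_metric_sUnion (s := (univ : Set X)) (c := α)
    isCompact_univ hα.1 (by rw [hα.2])
  exact ⟨δ, hδ, fun x => h x (mem_univ x)⟩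

theorem isOpenCover_range_ball {ε : ℝ} (hε : 0 < ε) :
    IsOpenCover (range fun x : X => Metric.ball x ε) :=
  isOpenCover_range (fun _ => Metric.isOpen_ball) fun x => ⟨x, Metric.mem_ball_self hε⟩

theorem exists_finite_cover_dist_lt [CompactSpace X] {n : ℕ} (h : topDim X ≤ n) {ε : ℝ}
    (hε : 0 < ε) :
    ∃ β : Set (Set X), β.Finite ∧ IsOpenCover β ∧ ord β ≤ n ∧ (∀ U ∈ β, U.Nonempty) ∧
      ∀ U ∈ β, ∀ x ∈ U, ∀ y ∈ U, dist x y < ε := by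
  obtain ⟨β, h1, h2, h3, h4, h5⟩ := exists_finite_refinement_ord_le h
    (isOpenCover_range_ball (X := X) (half_pos hε))
  refine ⟨β, h1, h2, h4, h5, ?_⟩
  intro U hU x hx y hy
  obtain ⟨_, ⟨z, rfl⟩, hz⟩ := h3 U hU
  have h6 := Metric.mem_ball.1 (hz hx)
  have h7 := Metric.mem_ball'.1 (hz hy)
  linarith [dist_triangle x z y]

theorem topDim_le_of_forall_dist_lt [CompactSpace X] {n : ℕ∞}
    (h : ∀ ε > 0, ∃ β : Set (Set X), IsOpenCover β ∧ ord β ≤ n ∧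
      ∀ U ∈ β, ∀ x ∈ U, ∀ y ∈ U, dist x y < ε) : topDim X ≤ n := by
  refine topDim_le_of_forall_refinement fun α hα => ?_
  obtain ⟨δ, hδ, hL⟩ := hα.exists_ball_subset
  obtain ⟨β, h1, h2, h3⟩ := h δ hδ
  rcases eq_empty_or_nonempty α with rfl | ⟨V, hV⟩
  · have : IsEmpty X := by
      have := hα.2
      simp only [sUnion_empty] at this
      exact Set.univ_eq_empty_iff.1 this.symm
    exact ⟨∅, hα, by intro U hU; simp at hU, le_trans (ord_mono (empty_subset β)) h2⟩
  refine ⟨β, h1, ?_, h2⟩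
  intro U hU
  rcases eq_empty_or_nonempty U with rfl | ⟨x, hx⟩
  · exact ⟨V, hV, empty_subset _⟩
  · obtain ⟨W, hW, hb⟩ := hL x
    exact ⟨W, hW, fun y hy => hb (by rw [Metric.mem_ball, dist_comm]; exact h3 U hU x hx y hy)⟩

theorem exists_nerve_vertexMap [CompactSpace X] {β : Set (Set X)} (hβ : IsOpenCover β) {n : ℕ}
    (ho : ord β ≤ n) {ε : ℝ} (hm : ∀ U ∈ β, ∀ x ∈ U, ∀ y ∈ U, dist x y < ε) :
    ∃ δ > 0, ∃ φ : X → X, (∀ x, dist (φ x) x < ε) ∧ (β.Finite → (range φ).Finite) ∧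
      ∀ l : List X, IsSmall δ l → (l.map φ).Nodup → l.length ≤ n + 1 := by
  classical
  obtain ⟨δ, hδ, hL⟩ := hβ.exists_ball_subset
  choose w hw hb using hL
  have hxw : ∀ x, x ∈ w x := fun x => hb x (Metric.mem_ball_self hδ)
  rcases isEmpty_or_nonempty X with hX | hX
  · exact ⟨δ, hδ, id, isEmptyElim, fun _ => Set.toFinite _, fun l _ _ => by
      simp [List.eq_nil_iff_forall_not_mem.2 (isEmptyElim (p := (· ∉ l)))]⟩
  let p : Set X → X := fun U => if h : U.Nonempty then h.some else Classical.choice hX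
  have hp : ∀ x, p (w x) ∈ w x := by
    intro x
    have : (w x).Nonempty := ⟨x, hxw x⟩
    simp only [p, dif_pos this]; exact this.some_mem
  refine ⟨δ, hδ, fun x => p (w x), fun x => hm _ (hw x) _ (hp x) _ (hxw x), ?_, ?_⟩
  · intro hf
    refine (hf.image p).subset ?_
    rintro _ ⟨x, rfl⟩; exact ⟨w x, hw x, rfl⟩
  · intro l hl hd
    cases l with
    | nil => simp
    | cons x l =>
      have := ord_le_iff.1 ho x ((x :: l).map w) ?_ ?_
      · simpa using this
      · have h2 : (x :: l).map (fun x => p (w x)) = ((x :: l).map w).map p := by simp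
        rw [h2] at hd
        exact List.Nodup.of_map _ hd
      · intro U hU
        obtain ⟨y, hy, rfl⟩ := List.mem_map.1 hU
        exact ⟨hw y, hb y (Metric.mem_ball.2 (hl x (by simp) y hy))⟩

variable {R : Type*} [CommRing R]

theorem isNear_of_mem_map {ε : ℝ} {φ : X → X} (h : ∀ x, dist (φ x) x < ε) {l m : List X}
    (hm : ∀ y ∈ m, y ∈ l.map φ) : IsNear ε l m := by
  intro y hy
  obtain ⟨x, hx, rfl⟩ := List.mem_map.1 (hm y hy)
  exact ⟨x, hx, h x⟩

theorem isNearId_nerveProjection {ε : ℝ} {φ : X → X} (h : ∀ x, dist (φ x) x < ε) (δ : ℝ) :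
    IsNearId δ ε (nerveProjection R φ) := by
  intro l _
  exact supportedOn_mono (fun n hn => isNear_of_mem_map h fun y hy => (hn.2.2 y).1 hy)
    (nerveProjection_gen_mem (R := R) φ l)

/-- The approximate dimension of `X` with coefficients in `R` is at most `n`: at every scale,
some chain map close to the identity kills all sufficiently small simplices of dimension
greater than `n`. -/
def ApproxDimLE (R : Type*) [CommRing R] (X : Type*) [MetricSpace X] (n : ℕ) : Prop :=
  ∀ ε > 0, ∃ δ > 0, ∃ Q : OrderedChain R X →ₗ[R] OrderedChain R X, IsChainMap Q ∧ IsNearId δ ε Q ∧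
    ∀ l, IsSmall δ l → n + 1 < l.length → Q (gen R l) = 0

theorem ApproxDimLE.mono {n m : ℕ} (h : ApproxDimLE R X n) (hm : n ≤ m) : ApproxDimLE R X m := by
  intro ε hε
  obtain ⟨δ, hδ, Q, h1, h2, h3⟩ := h ε hε
  exact ⟨δ, hδ, Q, h1, h2, fun l hl hlen => h3 l hl (by omega)⟩

theorem ApproxDimLE.of_isometryEquiv {Y : Type*} [MetricSpace Y] (e : X ≃ᵢ Y) {n : ℕ}
    (h : ApproxDimLE R X n) : ApproxDimLE R Y n := by
  intro ε hε
  obtain ⟨δ, hδ, Q, h1, h2, h3⟩ := h ε hε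
  have hs : ∀ l : List Y, IsSmall δ l → IsSmall δ (l.map e.symm) := fun l hl =>
    hl.map e.symm.isometry.lipschitz
  refine ⟨δ, hδ, vertexMap e ∘ₗ Q ∘ₗ vertexMap e.symm, (isChainMap_vertexMap _).comp
    (h1.comp (isChainMap_vertexMap _)), ?_, ?_⟩
  · intro l hl
    simp only [LinearMap.comp_apply, vertexMap_gen]
    refine map_mem_of_gen ?_ (h2 _ (hs l hl))
    intro m hm
    rw [vertexMap_gen]
    refine gen_mem_supportedOn ?_
    intro v hv
    obtain ⟨v, hv', rfl⟩ := List.mem_map.1 hv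
    obtain ⟨u, hu, huv⟩ := hm v hv'
    obtain ⟨u, hu', rfl⟩ := List.mem_map.1 hu
    refine ⟨u, hu', ?_⟩
    have := e.dist_eq v (e.symm u)
    rw [e.apply_symm_apply] at this
    rwa [this]
  · intro l hl hlen
    simp only [LinearMap.comp_apply, vertexMap_gen]
    rw [h3 _ (hs l hl) (by simpa using hlen), map_zero]

end ApproxDim

section Shuffle

variable {R : Type*} [CommRing R] {X Y : Type*}

/-- The free module on pairs of simplices, a model of the tensor product of the ordered chains
of `X` and of `Y`. -/
abbrev PairChain (R : Type*) [CommRing R] (X Y : Type*) := (List X × List Y) →₀ R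

/-- The Eilenberg–Zilber shuffle product of two simplices, as a chain on the product. For the
augmentation convention, the empty simplex times a single vertex is the empty simplex. -/
noncomputable def shuffleList (R : Type*) [CommRing R] : List X → List Y → OrderedChain R (X × Y)
  | [], [] => 0
  | [], [_] => gen R []
  | [], _ :: _ :: _ => 0
  | _ :: _, [] => 0
  | x :: s, y :: t =>
    cone (x, y) (shuffleList R s (y :: t) + (-1 : R) ^ s.length • shuffleList R (x :: s) t)
termination_by s t => s.length + t.length

theorem shuffleList_nil_right (s : List X) : shuffleList R s ([] : List Y) = 0 := by
  cases s <;> simp [shuffleList]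

theorem shuffleList_cons (x : X) (s : List X) (y : Y) (t : List Y) :
    shuffleList R (x :: s) (y :: t) =
      cone (x, y) (shuffleList R s (y :: t) + (-1 : R) ^ s.length • shuffleList R (x :: s) t) := by
  rw [shuffleList]

theorem shuffleList_mem (s : List X) (t : List Y) :
    shuffleList R s t ∈ supportedOn R
      (fun m => m.length + 1 = s.length + t.length ∧ ∀ q ∈ m, q.1 ∈ s ∧ q.2 ∈ t) := by
  induction s, t using shuffleList.induct with
  | case1 => simp [shuffleList]
  | case2 y => rw [shuffleList]; exact gen_mem_supportedOn (by simp)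
  | case3 => simp [shuffleList]
  | case4 => simp [shuffleList]
  | case5 x s y t ih1 ih2 =>
    rw [shuffleList_cons]
    have key : shuffleList R s (y :: t) + (-1 : R) ^ s.length • shuffleList R (x :: s) t ∈
        supportedOn R (fun m => m.length + 2 = (x :: s).length + (y :: t).length ∧
          ∀ q ∈ m, q.1 ∈ x :: s ∧ q.2 ∈ y :: t) := by
      refine Submodule.add_mem _ (supportedOn_mono ?_ ih1)
        (Submodule.smul_mem _ _ (supportedOn_mono ?_ ih2))
      · rintro m ⟨h1, h2⟩
        exact ⟨by simp at h1 ⊢; omega,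
          fun q hq => ⟨List.mem_cons_of_mem _ (h2 q hq).1, (h2 q hq).2⟩⟩
      · rintro m ⟨h1, h2⟩
        exact ⟨by simp at h1 ⊢; omega,
          fun q hq => ⟨(h2 q hq).1, List.mem_cons_of_mem _ (h2 q hq).2⟩⟩
    refine map_mem_of_gen ?_ key
    rintro m ⟨h1, h2⟩
    rw [cone_gen]
    refine gen_mem_supportedOn ⟨by simp at h1 ⊢; omega, ?_⟩
    intro q hq
    rcases List.mem_cons.1 hq with rfl | hq
    · simp
    · exact h2 q hq

theorem shuffleList_cons_mem_head (x : X) (s : List X) (t : List Y) :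
    shuffleList R (x :: s) t ∈ supportedOn R (fun m => ∃ y l, m = (x, y) :: l) := by
  cases t with
  | nil => simp [shuffleList_nil_right]
  | cons y t =>
    rw [shuffleList_cons]
    refine map_mem_of_gen (P := fun _ => True) ?_ (by simp [supportedOn])
    intro m _
    rw [cone_gen]; exact gen_mem_supportedOn ⟨y, m, rfl⟩

/-- The bilinear map with prescribed values on pairs of generators. -/
noncomputable def bilinearExt (R : Type*) [CommRing R] {M : Type*} [AddCommGroup M] [Module R M]
    {α β : Type*} (f : α → β → M) : (α →₀ R) →ₗ[R] (β →₀ R) →ₗ[R] M :=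
  linearCombination R (fun a => linearCombination R (fun b => f a b))

@[simp] theorem bilinearExt_gen {M : Type*} [AddCommGroup M] [Module R M] {α β : Type*}
    (f : α → β → M) (a : α) (b : β) : bilinearExt R f (gen R a) (gen R b) = f a b := by
  rw [bilinearExt, linearCombination_gen, linearCombination_gen]

theorem bilinear_mem_of_gen {M : Type*} [AddCommGroup M] [Module R M] {α β : Type*} {P : α → Prop}
    {P' : β → Prop} {N : Submodule R M} {B : (α →₀ R) →ₗ[R] (β →₀ R) →ₗ[R] M}
    (h : ∀ a b, P a → P' b → B (gen R a) (gen R b) ∈ N) {u v}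
    (hu : u ∈ supportedOn R P) (hv : v ∈ supportedOn R P') : B u v ∈ N := by
  refine map_mem_of_gen (f := B u) ?_ hv
  intro b hb
  refine map_mem_of_gen (f := B.flip (gen R b)) ?_ hu
  intro a ha
  exact h a b ha hb

theorem bilinear_eq_of_gen {M : Type*} [AddCommGroup M] [Module R M] {α β : Type*} {P : α → Prop}
    {P' : β → Prop} {B B' : (α →₀ R) →ₗ[R] (β →₀ R) →ₗ[R] M}
    (h : ∀ a b, P a → P' b → B (gen R a) (gen R b) = B' (gen R a) (gen R b)) {u v}
    (hu : u ∈ supportedOn R P) (hv : v ∈ supportedOn R P') : B u v = B' u v := by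
  refine map_eq_of_gen (f := B u) (g := B' u) ?_ hv
  intro b hb
  exact map_eq_of_gen (f := B.flip (gen R b)) (g := B'.flip (gen R b)) (fun a ha => h a b ha hb) hu

theorem mem_supportedOn_true {α : Type*} (c : α →₀ R) : c ∈ supportedOn R (fun _ : α => True) := by
  simp [supportedOn]

/-- The Eilenberg–Zilber shuffle product of chains. -/
noncomputable def shuffle : OrderedChain R X →ₗ[R] OrderedChain R Y →ₗ[R] OrderedChain R (X × Y) :=
  bilinearExt R (shuffleList R)

theorem shuffle_nil_right (a : OrderedChain R X) : shuffle a (gen R ([] : List Y)) = 0 := by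
  refine map_eq_zero_of_gen (f := shuffle.flip (gen R ([] : List Y))) (P := fun _ => True) ?_
    (mem_supportedOn_true _)
  intro l _
  simp [shuffle, shuffleList_nil_right]

theorem shuffle_cone_cone (x : X) (y : Y) (p : ℕ) (a : OrderedChain R X)
    (ha : a ∈ supportedOn R (fun l => l.length = p)) (b : OrderedChain R Y) :
    shuffle (cone x a) (cone y b) =
      cone (x, y) (shuffle a (cone y b) + (-1 : R) ^ p • shuffle (cone x a) b) := by
  have := bilinear_eq_of_gen (P := fun l : List X => l.length = p) (P' := fun _ : List Y => True)
    (B := (shuffle (R := R)).compl₁₂ (cone x) (cone y))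
    (B' := ((shuffle (R := R)).compl₁₂ LinearMap.id (cone y) +
      (-1 : R) ^ p • (shuffle (R := R)).compl₁₂ (cone x) LinearMap.id).compr₂ (cone (x, y)))
    (fun s t hs _ => by simp [shuffle, shuffleList_cons, hs]) ha (mem_supportedOn_true b)
  simpa using this

theorem shuffle_nil_boundary (t : List Y) :
    shuffle (gen R ([] : List X)) (boundary (gen R t)) = 0 := by
  match t with
  | [] => simp
  | [y] => rw [boundary_cons]; simp [shuffle, shuffleList]
  | [y, y'] => simp [boundary_cons, shuffle, shuffleList]
  | y :: y' :: y'' :: t =>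
    refine map_eq_zero_of_gen (f := shuffle (gen R ([] : List X))) ?_ (boundary_gen_mem (R := R) _)
    rintro m ⟨h1, _⟩
    match m with
    | [] => simp at h1
    | [a] => simp at h1
    | a :: b :: m => simp [shuffle, shuffleList]

theorem shuffle_boundary_cone (x : X) (y : Y) (s : List X) (b : OrderedChain R Y) :
    shuffle (cone x (boundary (gen R s))) (cone y b) =
      cone (x, y) (shuffle (boundary (gen R s)) (cone y b) -
        (-1 : R) ^ s.length • shuffle (cone x (boundary (gen R s))) b) := by
  cases s with
  | nil => simp
  | cons x' s =>
    rw [shuffle_cone_cone x y s.length _ (supportedOn_mono (fun m hm => by simpa using hm.1)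
      (boundary_gen_mem (R := R) (x' :: s)))]
    simp [pow_succ]

theorem boundary_shuffle_cons_cons (x : X) (s : List X) (y : Y) (t : List Y)
    (hs : boundary (shuffle (gen R s) (gen R (y :: t))) =
      shuffle (boundary (gen R s)) (gen R (y :: t)) +
        (-1 : R) ^ (s.length + 1) • shuffle (gen R s) (boundary (gen R (y :: t))))
    (ht : boundary (shuffle (gen R (x :: s)) (gen R t)) =
      shuffle (boundary (gen R (x :: s))) (gen R t) +
        (-1 : R) ^ (s.length + 2) • shuffle (gen R (x :: s)) (boundary (gen R t))) :
    boundary (shuffle (gen R (x :: s)) (gen R (y :: t))) =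
      shuffle (boundary (gen R (x :: s))) (gen R (y :: t)) +
        (-1 : R) ^ (s.length + 2) • shuffle (gen R (x :: s)) (boundary (gen R (y :: t))) := by
  have hshuffle := shuffle_cone_cone x y s.length (gen R s) (gen_mem_supportedOn rfl) (gen R t)
  have hboundary_right := shuffle_cone_cone x y s.length (gen R s) (gen_mem_supportedOn rfl)
    (boundary (gen R t))
  have hboundary_left := shuffle_boundary_cone (R := R) x y s (gen R t)
  have hsign : (-1 : R) ^ s.length * (-1 : R) ^ s.length = 1 := by
    rw [← mul_pow]; simp
  simp only [cone_gen] at hshuffle hboundary_right hboundary_left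
  simp only [boundary_cons y t, map_sub] at hs
  simp only [boundary_cons x s, map_sub, LinearMap.sub_apply] at ht
  rw [hshuffle, boundary_cone, map_add, map_smul, hs, ht]
  simp only [boundary_cons, map_sub, LinearMap.sub_apply, hboundary_right, hboundary_left]
  generalize hq : (-1 : R) ^ s.length = q at hsign ⊢
  simp only [pow_succ, hq, map_neg, map_add, map_smul, map_sub, smul_add, smul_sub, smul_smul,
    mul_neg, mul_one, neg_neg, neg_smul, hsign, one_smul]
  abel

theorem boundary_shuffle_gen (s : List X) (t : List Y) :
    boundary (shuffle (gen R s) (gen R t)) = shuffle (boundary (gen R s)) (gen R t) +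
      (-1 : R) ^ (s.length + 1) • shuffle (gen R s) (boundary (gen R t)) := by
  induction h : s.length + t.length using Nat.strong_induction_on generalizing s t with
  | _ n ih =>
  match s, t with
  | [], [] => simp [shuffle, shuffleList]
  | [], [_] => rw [shuffle_nil_boundary]; simp [shuffle, shuffleList]
  | [], _ :: _ :: _ => rw [shuffle_nil_boundary]; simp [shuffle, shuffleList]
  | x :: s, [] => rw [shuffle_nil_right, shuffle_nil_right]; simp
  | x :: s, y :: t =>
    exact boundary_shuffle_cons_cons x s y t (ih _ (by rw [← h]; simp) s (y :: t) rfl)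
      (ih _ (by rw [← h]; simp) (x :: s) t rfl)

theorem boundary_shuffle (p : ℕ) {a : OrderedChain R X}
    (ha : a ∈ supportedOn R (fun l => l.length = p)) (b : OrderedChain R Y) :
    boundary (shuffle a b) =
      shuffle (boundary a) b + (-1 : R) ^ (p + 1) • shuffle a (boundary b) := by
  have := bilinear_eq_of_gen (P := fun l : List X => l.length = p) (P' := fun _ : List Y => True)
    (B := (shuffle (R := R)).compr₂ boundary)
    (B' := ((shuffle (R := R)).compl₁₂ boundary LinearMap.id +
      (-1 : R) ^ (p + 1) • (shuffle (R := R)).compl₁₂ LinearMap.id boundary))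
    (fun s t hs _ => by simpa [hs] using boundary_shuffle_gen (R := R) s t)
    ha (mem_supportedOn_true b)
  simpa using this

end Shuffle

section AlexanderWhitney

variable {R : Type*} [CommRing R] {X Y : Type*}

/-- Adding a vertex in front of the first factor. -/
noncomputable def coneFst (x : X) : PairChain R X Y →ₗ[R] PairChain R X Y :=
  linearCombination R (fun q => gen R (x :: q.1, q.2))

/-- The Alexander–Whitney image `∑ (front face, back face)` of a simplex of the product, over
the faces sharing one vertex. -/
noncomputable def alexanderWhitneyList (R : Type*) [CommRing R] : List (X × Y) → PairChain R X Y
  | [] => 0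
  | p :: l => gen R ([p.1], (p :: l).map Prod.snd) + coneFst p.1 (alexanderWhitneyList R l)

/-- The Alexander–Whitney map from the chains of the product to pairs of chains. -/
noncomputable def alexanderWhitney : OrderedChain R (X × Y) →ₗ[R] PairChain R X Y :=
  linearCombination R (alexanderWhitneyList R)

@[simp] theorem alexanderWhitney_nil : alexanderWhitney (gen R ([] : List (X × Y))) = 0 := by
  rw [alexanderWhitney, linearCombination_gen]; rfl

theorem alexanderWhitney_cons (p : X × Y) (l : List (X × Y)) :
    alexanderWhitney (gen R (p :: l)) =
      gen R ([p.1], (p :: l).map Prod.snd) + coneFst p.1 (alexanderWhitney (gen R l)) := by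
  rw [alexanderWhitney, linearCombination_gen, linearCombination_gen]; rfl

@[simp] theorem coneFst_gen (x : X) (q : List X × List Y) :
    coneFst x (gen R q) = gen R (x :: q.1, q.2) := linearCombination_gen _ _

/-- The cross product of chains, on generators the pair of the two simplices. -/
noncomputable def tensor : OrderedChain R X →ₗ[R] OrderedChain R Y →ₗ[R] PairChain R X Y :=
  bilinearExt R (fun s t => gen R (s, t))

/-- The boundary of the tensor product complex. -/
noncomputable def pairBoundary : PairChain R X Y →ₗ[R] PairChain R X Y :=
  linearCombination R fun q =>
    tensor (boundary (gen R q.1)) (gen R q.2) +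
      (-1 : R) ^ (q.1.length + 1) • tensor (gen R q.1) (boundary (gen R q.2))

theorem tensor_cone (x : X) (a : OrderedChain R X) (b : OrderedChain R Y) :
    tensor (cone x a) b = coneFst x (tensor a b) := by
  have := bilinear_eq_of_gen (P := fun _ : List X => True) (P' := fun _ : List Y => True)
    (B := (tensor (R := R)).compl₁₂ (cone x) LinearMap.id)
    (B' := (tensor (R := R)).compr₂ (coneFst x))
    (fun s t _ _ => by simp [tensor]) (mem_supportedOn_true a) (mem_supportedOn_true b)
  simpa using this

theorem pairBoundary_coneFst (x : X) (w : PairChain R X Y) :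
    pairBoundary (coneFst x w) = w - coneFst x (pairBoundary w) := by
  have : (pairBoundary ∘ₗ coneFst x : PairChain R X Y →ₗ[R] PairChain R X Y) =
      LinearMap.id - coneFst x ∘ₗ pairBoundary :=
    linearMap_ext_gen fun ⟨s, t⟩ => by
      simp only [LinearMap.comp_apply, coneFst_gen, LinearMap.sub_apply, LinearMap.id_apply]
      rw [pairBoundary, linearCombination_gen, linearCombination_gen]
      simp only [boundary_cons, map_sub, LinearMap.sub_apply, map_add, map_smul, ← tensor_cone,
        cone_gen, List.length_cons, pow_succ]
      simp [tensor]
      abel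
  exact LinearMap.congr_fun this w

theorem alexanderWhitney_cone (p : X × Y) (w : OrderedChain R (X × Y)) :
    alexanderWhitney (cone p w) =
      tensor (gen R [p.1]) (cone p.2 (vertexMap Prod.snd w)) +
        coneFst p.1 (alexanderWhitney w) := by
  have : (alexanderWhitney ∘ₗ cone p : OrderedChain R (X × Y) →ₗ[R] PairChain R X Y) =
      tensor (gen R [p.1]) ∘ₗ cone p.2 ∘ₗ vertexMap Prod.snd + coneFst p.1 ∘ₗ alexanderWhitney :=
    linearMap_ext_gen fun m => by simp [alexanderWhitney_cons, tensor]
  exact LinearMap.congr_fun this w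

/- The two extra terms come from the augmentation: `alexanderWhitney` lacks the summands whose
first or second factor is empty. -/
theorem pairBoundary_alexanderWhitney_gen (l : List (X × Y)) :
    pairBoundary (alexanderWhitney (gen R l)) = alexanderWhitney (boundary (gen R l)) +
      gen R ([], l.map Prod.snd) + (-1 : R) ^ (l.length + 1) • gen R (l.map Prod.fst, []) := by
  induction l with
  | nil => simp
  | cons p l ih =>
    have hsnd := (isChainMap_vertexMap (R := R) (Prod.snd : X × Y → Y)).comm l
    rw [vertexMap_gen] at hsnd
    rw [alexanderWhitney_cons, map_add, pairBoundary_coneFst, ih, boundary_cons, map_sub,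
      alexanderWhitney_cone, ← hsnd, pairBoundary, linearCombination_gen]
    simp only [List.map_cons, boundary_cons, map_sub, map_add, map_smul, coneFst_gen,
      List.length_cons, List.length_nil, pow_succ]
    simp [tensor]
    abel

theorem alexanderWhitney_gen_mem (l : List (X × Y)) :
    alexanderWhitney (gen R l) ∈ supportedOn R (fun q => q.1 ⊆ l.map Prod.fst ∧
      q.2 ⊆ l.map Prod.snd ∧ q.1.length + q.2.length = l.length + 1) := by
  induction l with
  | nil => simp
  | cons p l ih =>
    rw [alexanderWhitney_cons]
    refine Submodule.add_mem _ (gen_mem_supportedOn ⟨by simp, by simp, by simp; omega⟩) ?_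
    refine map_mem_of_gen ?_ ih
    rintro q ⟨h1, h2, h3⟩
    rw [coneFst_gen]
    refine gen_mem_supportedOn ⟨?_, ?_, by simp; omega⟩
    · exact List.cons_subset_cons _ h1
    · exact List.subset_cons_of_subset _ h2

theorem alexanderWhitney_cons_mem_head (p : X × Y) (l : List (X × Y)) :
    alexanderWhitney (gen R (p :: l)) ∈ supportedOn R (fun q => ∃ s, q.1 = p.1 :: s) := by
  rw [alexanderWhitney_cons]
  refine Submodule.add_mem _ (gen_mem_supportedOn ⟨[], rfl⟩) ?_
  refine map_mem_of_gen ?_ (mem_supportedOn_true _)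
  intro q _
  rw [coneFst_gen]
  exact gen_mem_supportedOn ⟨_, rfl⟩

/-- Some vertex of `l` is repeated in two consecutive places: `l` is a degenerate simplex. -/
def HasAdjacentDup (l : List X) : Prop := ∃ a l₁ l₂, l = l₁ ++ a :: a :: l₂

theorem HasAdjacentDup.cons {l : List X} (x : X) : HasAdjacentDup l → HasAdjacentDup (x :: l) :=
  fun ⟨a, l₁, l₂, h⟩ => ⟨a, x :: l₁, l₂, by rw [h, List.cons_append]⟩

theorem hasAdjacentDup_cons_cons (x : X) (l : List X) : HasAdjacentDup (x :: x :: l) :=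
  ⟨x, [], l, rfl⟩

theorem alexanderWhitney_gen_mem_hasAdjacentDup {l : List (X × Y)} (h : HasAdjacentDup l) :
    alexanderWhitney (gen R l) ∈
      supportedOn R (fun q => HasAdjacentDup q.1 ∨ HasAdjacentDup q.2) := by
  obtain ⟨a, l₁, l₂, rfl⟩ := h
  induction l₁ with
  | nil =>
    rw [List.nil_append, alexanderWhitney_cons]
    refine Submodule.add_mem _ (gen_mem_supportedOn (Or.inr ?_)) ?_
    · exact hasAdjacentDup_cons_cons _ _
    · refine map_mem_of_gen ?_ (alexanderWhitney_cons_mem_head (R := R) _ _)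
      rintro q ⟨s, hs⟩
      rw [coneFst_gen]
      refine gen_mem_supportedOn (Or.inl ?_)
      simp only [hs]; exact hasAdjacentDup_cons_cons _ _
  | cons p l₁ ih =>
    rw [List.cons_append, alexanderWhitney_cons]
    refine Submodule.add_mem _ (gen_mem_supportedOn (Or.inr ?_)) ?_
    · exact ⟨a.2, (p :: l₁).map Prod.snd, l₂.map Prod.snd, by simp⟩
    · refine map_mem_of_gen ?_ ih
      rintro q hq
      rw [coneFst_gen]
      refine gen_mem_supportedOn ?_
      rcases hq with hq | hq
      · exact Or.inl (hq.cons _)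
      · exact Or.inr hq

/-- Evaluation of the product cochain `c × c'` on pairs of simplices. -/
noncomputable def evalCross (c : List X → R) (c' : List Y → R) : PairChain R X Y →ₗ[R] R :=
  linearCombination R (fun q => c q.1 * c' q.2)

theorem evalCross_coneFst (c : List X → R) (c' : List Y → R) (x : X) (w : PairChain R X Y) :
    evalCross c c' (coneFst x w) = evalCross (fun l => c (x :: l)) c' w := by
  have : evalCross c c' ∘ₗ coneFst x = evalCross (fun l => c (x :: l)) c' :=
    linearMap_ext_gen fun q => by simp [evalCross]
  exact LinearMap.congr_fun this w

theorem evalCross_alexanderWhitney_cone (c : List X → R) (c' : List Y → R) (p : X × Y)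
    (w : OrderedChain R (X × Y)) :
    evalCross c c' (alexanderWhitney (cone p w)) =
      c [p.1] * linearCombination R (fun l => c' (p.2 :: l.map Prod.snd)) w +
        evalCross (fun l => c (p.1 :: l)) c' (alexanderWhitney w) := by
  have : (evalCross c c' ∘ₗ alexanderWhitney ∘ₗ cone p : OrderedChain R (X × Y) →ₗ[R] R) =
      c [p.1] • linearCombination R (fun l => c' (p.2 :: l.map Prod.snd)) +
        evalCross (fun l => c (p.1 :: l)) c' ∘ₗ alexanderWhitney :=
    linearMap_ext_gen fun l => by
      simp only [LinearMap.comp_apply, cone_gen, alexanderWhitney_cons, map_add, evalCross_coneFst,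
        LinearMap.add_apply, LinearMap.smul_apply, linearCombination_gen, List.map_cons,
        smul_eq_mul]
      rw [evalCross, linearCombination_gen]
  simpa using LinearMap.congr_fun this w

theorem shuffleList_singleton (x : X) (t : List Y) (ht : t ≠ []) :
    shuffleList R [x] t = gen R (t.map (fun y => (x, y))) := by
  induction t with
  | nil => simp at ht
  | cons y t ih =>
    cases t with
    | nil => simp [shuffleList]
    | cons y' t => rw [shuffleList_cons, ih (by simp)]; simp [shuffleList]

theorem evalCross_alexanderWhitney_cons_of_vanish {c : List X → R} (c' : List Y → R) {x : X}
    (hc : ∀ l, c (x :: l) = 0) {w : OrderedChain R (X × Y)}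
    (hw : w ∈ supportedOn R (fun m => ∃ y l, m = (x, y) :: l)) :
    evalCross c c' (alexanderWhitney w) = 0 := by
  refine map_eq_zero_of_gen (f := evalCross c c' ∘ₗ alexanderWhitney) ?_ hw
  rintro _ ⟨y, l, rfl⟩
  rw [LinearMap.comp_apply]
  refine map_eq_zero_of_gen ?_ (alexanderWhitney_cons_mem_head (R := R) _ _)
  rintro q ⟨s, hs⟩
  simp [evalCross, hs, hc]

theorem evalCross_alexanderWhitney_shuffle_singleton (c : List X → R) (c' : List Y → R) (x : X)
    {t : List Y} (ht : t ≠ []) (hc : ∀ l, l.length ≠ 1 → c l = 0) :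
    evalCross c c' (alexanderWhitney (shuffleList R [x] t)) = c [x] * c' t := by
  rw [shuffleList_singleton x t ht]
  cases t with
  | nil => simp at ht
  | cons y t =>
    have hzero : evalCross (fun l => c (x :: l)) c'
        (alexanderWhitney (gen R (t.map (fun y => (x, y))))) = 0 := by
      cases t with
      | nil => simp
      | cons y' t =>
        exact evalCross_alexanderWhitney_cons_of_vanish c' (x := x)
          (fun l => hc (x :: x :: l) (by simp))
          (gen_mem_supportedOn ⟨y', t.map (fun y => (x, y)), rfl⟩)
    rw [List.map_cons, alexanderWhitney_cons, map_add, evalCross_coneFst, hzero, evalCross,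
      linearCombination_gen]
    simp [Function.comp_def]

theorem evalCross_alexanderWhitney_shuffle (c : List X → R) (c' : List Y → R) (s : List X)
    (t : List Y) (hs : s ≠ []) (ht : t ≠ []) (hlen : ∀ l, l.length ≠ s.length → c l = 0)
    (hdup : ∀ l, HasAdjacentDup l → c l = 0) :
    evalCross c c' (alexanderWhitney (shuffleList R s t)) = c s * c' t := by
  induction s generalizing c with
  | nil => simp at hs
  | cons x s ih =>
    rcases s with - | ⟨x', s⟩
    · exact evalCross_alexanderWhitney_shuffle_singleton c c' x ht (by simpa using hlen)
    rcases t with - | ⟨y, t⟩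
    · simp at ht
    have hzero : evalCross (fun l => c (x :: l)) c'
        (alexanderWhitney (shuffleList R (x :: x' :: s) t)) = 0 :=
      evalCross_alexanderWhitney_cons_of_vanish (c := fun l => c (x :: l)) c'
        (fun l => hdup _ (hasAdjacentDup_cons_cons x l))
        (shuffleList_cons_mem_head (R := R) x (x' :: s) t)
    rw [shuffleList_cons, evalCross_alexanderWhitney_cone, hlen [x] (by simp)]
    simp only [map_add, map_smul]
    rw [hzero, ih (fun l => c (x :: l)) (by simp) (fun l hl => hlen _ (by simpa using hl))
      (fun l hl => hdup _ (hl.cons _))]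
    simp

end AlexanderWhitney

section ProductChainMap

variable {R : Type*} [CommRing R] {X Y : Type*}

/-- The composition of `Q ⊗ Q'` with the shuffle product, on pairs of simplices. -/
noncomputable def shuffleMap (Q : OrderedChain R X →ₗ[R] OrderedChain R X)
    (Q' : OrderedChain R Y →ₗ[R] OrderedChain R Y) :
    PairChain R X Y →ₗ[R] OrderedChain R (X × Y) :=
  linearCombination R (fun q => shuffle (Q (gen R q.1)) (Q' (gen R q.2)))

theorem shuffleMap_tensor (Q : OrderedChain R X →ₗ[R] OrderedChain R X)
    (Q' : OrderedChain R Y →ₗ[R] OrderedChain R Y) (a : OrderedChain R X) (b : OrderedChain R Y) :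
    shuffleMap Q Q' (tensor a b) = shuffle (Q a) (Q' b) := by
  have := bilinear_eq_of_gen (P := fun _ : List X => True) (P' := fun _ : List Y => True)
    (B := (tensor (R := R)).compr₂ (shuffleMap Q Q'))
    (B' := (shuffle (R := R)).compl₁₂ Q Q')
    (fun s t _ _ => by simp [tensor, shuffleMap]) (mem_supportedOn_true a) (mem_supportedOn_true b)
  simpa using this

theorem boundary_shuffleMap {Q : OrderedChain R X →ₗ[R] OrderedChain R X}
    {Q' : OrderedChain R Y →ₗ[R] OrderedChain R Y} (hQ : IsChainMap Q) (hQ' : IsChainMap Q')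
    (w : PairChain R X Y) : boundary (shuffleMap Q Q' w) = shuffleMap Q Q' (pairBoundary w) := by
  have : boundary ∘ₗ shuffleMap Q Q' = shuffleMap Q Q' ∘ₗ pairBoundary :=
    linearMap_ext_gen fun ⟨s, t⟩ => by
      simp only [LinearMap.comp_apply]
      rw [shuffleMap, pairBoundary, linearCombination_gen, linearCombination_gen, ← shuffleMap]
      dsimp only
      rw [boundary_shuffle s.length (hQ.len s), map_add, map_smul, shuffleMap_tensor,
        shuffleMap_tensor, hQ.boundary_map, hQ'.boundary_map]
  exact LinearMap.congr_fun this w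

open Classical in
/-- The projection of chains onto the multiples of the empty simplex. -/
noncomputable def emptyProjection (R : Type*) [CommRing R] (X : Type*) :
    OrderedChain R X →ₗ[R] OrderedChain R X :=
  linearCombination R (fun l => if l = [] then gen R [] else 0)

/-- The product of the chain maps `Q` and `Q'`, obtained by conjugating `Q ⊗ Q'` with the
Alexander–Whitney and shuffle maps. The empty simplex, invisible to the former, is added by
hand. -/
noncomputable def prodChainMap (Q : OrderedChain R X →ₗ[R] OrderedChain R X)
    (Q' : OrderedChain R Y →ₗ[R] OrderedChain R Y) :
    OrderedChain R (X × Y) →ₗ[R] OrderedChain R (X × Y) :=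
  shuffleMap Q Q' ∘ₗ alexanderWhitney + emptyProjection R (X × Y)

theorem prodChainMap_nil (Q : OrderedChain R X →ₗ[R] OrderedChain R X)
    (Q' : OrderedChain R Y →ₗ[R] OrderedChain R Y) :
    prodChainMap Q Q' (gen R []) = gen R [] := by
  simp [prodChainMap, emptyProjection]

theorem prodChainMap_of_ne_nil (Q : OrderedChain R X →ₗ[R] OrderedChain R X)
    (Q' : OrderedChain R Y →ₗ[R] OrderedChain R Y) (l : List (X × Y)) (hl : l ≠ []) :
    prodChainMap Q Q' (gen R l) = shuffleMap Q Q' (alexanderWhitney (gen R l)) := by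
  simp [prodChainMap, emptyProjection, hl]

theorem shuffle_nil_of_length_ne_one {p : ℕ} (hp : p ≠ 1) {b : OrderedChain R Y}
    (hb : b ∈ supportedOn R (fun l => l.length = p)) :
    shuffle (gen R ([] : List X)) b = 0 := by
  refine map_eq_zero_of_gen (f := shuffle (gen R ([] : List X))) ?_ hb
  intro l hl
  match l with
  | [] => simp [shuffle, shuffleList]
  | [y] => simp at hl; omega
  | y :: y' :: t => simp [shuffle, shuffleList]

theorem shuffle_nil_of_boundary_eq {b : OrderedChain R Y}
    (hb : b ∈ supportedOn R (fun l => l.length = 1)) (hbd : boundary b = gen R []) :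
    shuffle (gen R ([] : List X)) b = gen R [] := by
  have h1 : shuffle (gen R ([] : List X)) b =
      linearCombination R (fun _ => gen R ([] : List (X × Y))) b := by
    refine map_eq_of_gen (f := shuffle (gen R ([] : List X))) ?_ hb
    intro l hl
    match l with
    | [y] => simp [shuffle, shuffleList]
  have h2 : linearCombination R (fun _ => gen R ([] : List (X × Y))) b =
      linearCombination R (fun _ => gen R ([] : List (X × Y))) (boundary b) := by
    refine map_eq_of_gen (g := linearCombination R (fun _ => gen R ([] : List (X × Y))) ∘ₗ boundary)
      ?_ hb
    intro l hl
    match l with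
    | [y] => simp [boundary_cons]
  rw [h1, h2, hbd, linearCombination_gen]

theorem shuffleMap_nil_map_snd {Q : OrderedChain R X →ₗ[R] OrderedChain R X}
    {Q' : OrderedChain R Y →ₗ[R] OrderedChain R Y} (hQ : IsChainMap Q) (hQ' : IsChainMap Q')
    (l : List (X × Y)) :
    shuffleMap Q Q' (gen R ([], l.map Prod.snd)) =
      emptyProjection R (X × Y) (boundary (gen R l)) := by
  rw [shuffleMap, linearCombination_gen, hQ.nil]
  dsimp only
  by_cases hl : l.length = 1
  · obtain ⟨p, rfl⟩ := List.length_eq_one_iff.1 hl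
    rw [shuffle_nil_of_boundary_eq (by simpa using hQ'.len [p.2])]
    · simp [boundary_cons, emptyProjection]
    · rw [hQ'.boundary_map]
      simp [boundary_cons, hQ'.nil]
  · rw [shuffle_nil_of_length_ne_one hl (by simpa using hQ'.len (l.map Prod.snd))]
    symm
    refine map_eq_zero_of_gen ?_ (boundary_gen_mem (R := R) l)
    rintro m ⟨hlen, _⟩
    have : m ≠ [] := by rintro rfl; simp at hlen; omega
    simp [emptyProjection, this]

theorem isChainMap_prodChainMap {Q : OrderedChain R X →ₗ[R] OrderedChain R X}
    {Q' : OrderedChain R Y →ₗ[R] OrderedChain R Y} (hQ : IsChainMap Q)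
    (hQ' : IsChainMap Q') : IsChainMap (prodChainMap Q Q') where
  nil := prodChainMap_nil Q Q'
  len l := by
    by_cases hl : l = []
    · subst hl; rw [prodChainMap_nil]; exact gen_mem_supportedOn rfl
    rw [prodChainMap_of_ne_nil _ _ _ hl]
    refine map_mem_of_gen ?_ (alexanderWhitney_gen_mem (R := R) l)
    rintro ⟨s, t⟩ ⟨_, _, h3⟩
    rw [shuffleMap, linearCombination_gen]
    refine bilinear_mem_of_gen ?_ (hQ.len s) (hQ'.len t)
    intro a b ha hb
    rw [shuffle, bilinearExt_gen]
    refine supportedOn_mono ?_ (shuffleList_mem (R := R) a b)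
    rintro m ⟨h4, _⟩
    simp only at h3
    omega
  comm l := by
    by_cases hl : l = []
    · subst hl; rw [prodChainMap_nil]; simp
    rw [prodChainMap_of_ne_nil _ _ _ hl, boundary_shuffleMap hQ hQ',
      pairBoundary_alexanderWhitney_gen, map_add, map_add, map_smul]
    have hright : shuffleMap Q Q' (gen R (l.map Prod.fst, [])) = 0 := by
      rw [shuffleMap, linearCombination_gen, hQ'.nil, shuffle_nil_right]
    rw [hright, shuffleMap_nil_map_snd hQ hQ', prodChainMap]
    simp

variable [MetricSpace X] [MetricSpace Y]

theorem isNearId_prodChainMap {δ ε : ℝ} {Q : OrderedChain R X →ₗ[R] OrderedChain R X}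
    {Q' : OrderedChain R Y →ₗ[R] OrderedChain R Y} (hδ : 0 ≤ δ) (hQ : IsNearId δ ε Q)
    (hQ' : IsNearId δ ε Q') : IsNearId δ (δ + ε) (prodChainMap Q Q') := by
  intro l hl
  by_cases hl0 : l = []
  · subst hl0; rw [prodChainMap_nil]; exact gen_mem_supportedOn (by intro v hv; simp at hv)
  rw [prodChainMap_of_ne_nil _ _ _ hl0]
  refine map_mem_of_gen ?_ (alexanderWhitney_gen_mem (R := R) l)
  rintro ⟨s, t⟩ ⟨hs, ht, -⟩
  rw [shuffleMap, linearCombination_gen]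
  refine bilinear_mem_of_gen ?_ (hQ s ((hl.map LipschitzWith.prod_fst).subset hs))
    (hQ' t ((hl.map LipschitzWith.prod_snd).subset ht))
  intro a b ha hb
  rw [shuffle, bilinearExt_gen]
  refine supportedOn_mono ?_ (shuffleList_mem (R := R) a b)
  rintro m ⟨_, hm⟩ v hv
  obtain ⟨_, hu, hvp⟩ := ha v.1 (hm v hv).1
  obtain ⟨_, hu', hvq⟩ := hb v.2 (hm v hv).2
  obtain ⟨p, hp, rfl⟩ := List.mem_map.1 (hs hu)
  obtain ⟨q, hq, rfl⟩ := List.mem_map.1 (ht hu')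
  have hqp : dist q.2 p.2 < δ := (le_max_right _ _).trans_lt (hl q hq p hp)
  refine ⟨p, hp, ?_⟩
  rw [Prod.dist_eq, max_lt_iff]
  exact ⟨by linarith, by linarith [dist_triangle v.2 q.2 p.2]⟩

theorem ApproxDimLE.prod {n m : ℕ} (h : ApproxDimLE R X n) (h' : ApproxDimLE R Y m) :
    ApproxDimLE R (X × Y) (n + m) := by
  intro ε hε
  obtain ⟨δ, hδ, Q, hQ, hnear, hzero⟩ := h (ε / 2) (by positivity)
  obtain ⟨δ', hδ', Q', hQ', hnear', hzero'⟩ := h' (ε / 2) (by positivity)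
  have hη : 0 < min (min δ δ') (ε / 2) := by positivity
  have hηδ : min (min δ δ') (ε / 2) ≤ δ := by simp
  have hηδ' : min (min δ δ') (ε / 2) ≤ δ' := by simp
  have hηε : min (min δ δ') (ε / 2) ≤ ε / 2 := min_le_right _ _
  generalize min (min δ δ') (ε / 2) = η at *
  refine ⟨η, hη, prodChainMap Q Q', isChainMap_prodChainMap hQ hQ', ?_, ?_⟩
  · intro l hl
    exact supportedOn_mono (fun m hm => hm.mono (by linarith)) (isNearId_prodChainMap hη.le
      (fun s hs => hnear s (hs.mono hηδ)) (fun t ht => hnear' t (ht.mono hηδ')) l hl)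
  · intro l hl hlen
    rw [prodChainMap_of_ne_nil _ _ _ (List.ne_nil_of_length_pos (by omega))]
    refine map_eq_zero_of_gen ?_ (alexanderWhitney_gen_mem (R := R) l)
    rintro ⟨s, t⟩ ⟨hs, ht, hst⟩
    dsimp only at hs ht hst
    rw [shuffleMap, linearCombination_gen]
    by_cases hc : n + 1 < s.length
    · simp [hzero s (((hl.map LipschitzWith.prod_fst).subset hs).mono hηδ) hc]
    · simp [hzero' t (((hl.map LipschitzWith.prod_snd).subset ht).mono hηδ') (by omega)]

end ProductChainMap

section EssentialClass

variable {R : Type*} [CommRing R] {X Y : Type*}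

theorem linearCombination_comp_map (c : List X → R) (f : Y → X) (w : OrderedChain R Y) :
    linearCombination R (fun l => c (l.map f)) w = linearCombination R c (vertexMap f w) := by
  have : linearCombination R (fun l => c (l.map f)) = linearCombination R c ∘ₗ vertexMap f :=
    linearMap_ext_gen fun l => by simp
  exact LinearMap.congr_fun this w

/-- The cross product of two cochains. -/
noncomputable def crossCochain (c : List X → R) (c' : List Y → R) (l : List (X × Y)) : R :=
  evalCross c c' (alexanderWhitney (gen R l))

theorem linearCombination_crossCochain (c : List X → R) (c' : List Y → R)
    (w : OrderedChain R (X × Y)) :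
    linearCombination R (crossCochain c c') w = evalCross c c' (alexanderWhitney w) := by
  have : linearCombination R (crossCochain c c') = evalCross c c' ∘ₗ alexanderWhitney :=
    linearMap_ext_gen fun l => by rw [linearCombination_gen]; rfl
  exact LinearMap.congr_fun this w

theorem evalCross_tensor (c : List X → R) (c' : List Y → R) (a : OrderedChain R X)
    (b : OrderedChain R Y) :
    evalCross c c' (tensor a b) = linearCombination R c a * linearCombination R c' b := by
  have := bilinear_eq_of_gen (P := fun _ : List X => True) (P' := fun _ : List Y => True)
    (B := (tensor (R := R)).compr₂ (evalCross c c'))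
    (B' := (LinearMap.mul R R).compl₁₂ (linearCombination R c) (linearCombination R c'))
    (fun s t _ _ => by simp [tensor, evalCross]) (mem_supportedOn_true a) (mem_supportedOn_true b)
  simpa using this

variable [MetricSpace X] [MetricSpace Y]

/-- `c` is a normalized relative cocycle of degree `n` at scale `ε`: its coboundary vanishes on
`ε`-small simplices, and `c` vanishes on the simplices that are `ε`-close to some point of `A`. -/
structure IsRelCocycle (ε : ℝ) (n : ℕ) (c : List X → R) (A : Set X) : Prop where
  cocycle : ∀ l, IsSmall ε l → l.length = n + 2 → linearCombination R c (boundary (gen R l)) = 0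
  vanish_near : ∀ l, (∃ a ∈ A, ∀ v ∈ l, dist a v < ε) → c l = 0
  vanish_degenerate : ∀ l, HasAdjacentDup l → c l = 0
  vanish_degree : ∀ l, l.length ≠ n + 1 → c l = 0

/-- `z` is a cycle of degree `n` relative to `A`, made of `δ`-small simplices. -/
structure IsRelCycle (δ : ℝ) (n : ℕ) (A : Set X) (z : OrderedChain R X) : Prop where
  mem : z ∈ supportedOn R (fun l => IsSmall δ l ∧ l.length = n + 1)
  boundary_mem : boundary z ∈ supportedOn R (fun l => ∀ v ∈ l, v ∈ A)

/-- `X` has an essential class of degree `n` at scale `ε`: some relative cocycle takes the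
value `1` on relative cycles of arbitrarily small mesh. -/
def HasEssentialClass (R : Type*) [CommRing R] (X : Type*) [MetricSpace X] (n : ℕ) (ε : ℝ) : Prop :=
  ∃ (c : List X → R) (A : Set X), IsRelCocycle ε n c A ∧
    ∀ δ > 0, ∃ z, IsRelCycle δ n A z ∧ linearCombination R c z = 1

theorem IsRelCocycle.eval_eq_of_isNearId {Q : OrderedChain R X →ₗ[R] OrderedChain R X} {ε δ : ℝ}
    {n : ℕ} {c : List X → R} {A : Set X} {z : OrderedChain R X} (hc : IsRelCocycle ε (n + 1) c A)
    (hz : IsRelCycle δ (n + 1) A z) (hε : 0 < ε) (hδ : δ ≤ ε / 4) (hQ : IsChainMap Q)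
    (hnear : IsNearId δ (ε / 4) Q) : linearCombination R c z = linearCombination R c (Q z) := by
  have hH := homotopy_isNearId (by positivity) hnear
  have hbdH : linearCombination R c (boundary (homotopy Q z)) = 0 := by
    refine map_eq_zero_of_gen (f := linearCombination R c ∘ₗ boundary ∘ₗ homotopy Q) ?_ hz.mem
    rintro l ⟨hl, hlen⟩
    simp only [LinearMap.comp_apply]
    refine map_eq_zero_of_gen (f := linearCombination R c ∘ₗ boundary) ?_
      (mem_supportedOn_and (hH l hl) (homotopy_gen_mem_length hQ l))
    rintro m ⟨hm, hmlen⟩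
    exact hc.cocycle m ((hm.isSmall hl).mono (by linarith)) (by omega)
  have hbz : boundary z ∈ supportedOn R
      (fun l => (IsSmall δ l ∧ l.length = n + 1) ∧ ∀ v ∈ l, v ∈ A) := by
    refine mem_supportedOn_and (map_mem_of_gen ?_ hz.mem) hz.boundary_mem
    rintro l ⟨hl, hlen⟩
    refine supportedOn_mono ?_ (boundary_gen_mem_isSmall (R := R) hl)
    rintro m ⟨hmlen, -, hm⟩
    exact ⟨hm, by omega⟩
  have hHbd : linearCombination R c (homotopy Q (boundary z)) = 0 := by
    refine map_eq_zero_of_gen (f := linearCombination R c ∘ₗ homotopy Q) ?_ hbz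
    rintro l ⟨⟨hl, hlen⟩, hA⟩
    simp only [LinearMap.comp_apply]
    refine map_eq_zero_of_gen ?_ (hH l hl)
    intro m hm
    rw [linearCombination_gen]
    obtain ⟨a, l, rfl⟩ := List.exists_cons_of_length_eq_add_one hlen
    refine hc.vanish_near m ⟨a, hA a (by simp), fun v hv => ?_⟩
    obtain ⟨u, hu, huv⟩ := hm v hv
    have hau := hl a (by simp) u hu
    rw [dist_comm] at huv
    linarith [dist_triangle a u v]
  conv_lhs => rw [eq_add_boundary_homotopy hQ z, map_add, map_add, hbdH, hHbd, add_zero, add_zero]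

theorem HasEssentialClass.not_ord_le [Nontrivial R] [CompactSpace X] {k : ℕ} {ε : ℝ} (hε : 0 < ε)
    (h : HasEssentialClass R X (k + 1) ε) {β : Set (Set X)} (hβ : IsOpenCover β)
    (hsmall : ∀ U ∈ β, ∀ x ∈ U, ∀ y ∈ U, dist x y < ε / 4) : ¬ ord β ≤ k := by
  intro hord
  obtain ⟨c, A, hc, hcycle⟩ := h
  obtain ⟨δ, hδ, φ, hφ, _, hnodup⟩ := exists_nerve_vertexMap hβ hord hsmall
  obtain ⟨z, hz, hcz⟩ := hcycle (min δ (ε / 4)) (by positivity)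
  have hzero : nerveProjection R φ z = 0 := by
    refine map_eq_zero_of_gen ?_ hz.mem
    rintro l ⟨hl, hlen⟩
    refine nerveProjection_of_not_nodup fun hd => ?_
    have := hnodup l (hl.mono (min_le_left _ _)) hd
    omega
  rw [hc.eval_eq_of_isNearId hz hε (min_le_right _ _) (isChainMap_nerveProjection φ)
    (isNearId_nerveProjection hφ _), hzero] at hcz
  simp at hcz

theorem IsRelCocycle.crossCochain_boundary {n m : ℕ} {ε : ℝ} {c : List X → R} {c' : List Y → R}
    {A : Set X} {A' : Set Y} (hc : IsRelCocycle ε n c A) (hc' : IsRelCocycle ε m c' A')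
    {l : List (X × Y)} (hl : IsSmall ε l) (hlen : l.length = n + m + 2) :
    linearCombination R (crossCochain c c') (boundary (gen R l)) = 0 := by
  have hzero : evalCross c c' (pairBoundary (alexanderWhitney (gen R l))) = 0 := by
    refine map_eq_zero_of_gen (f := evalCross c c' ∘ₗ pairBoundary) ?_
      (alexanderWhitney_gen_mem (R := R) l)
    rintro ⟨s, t⟩ ⟨hs, ht, hst⟩
    dsimp only at hs ht hst
    rw [LinearMap.comp_apply, pairBoundary, linearCombination_gen, map_add, map_smul,
      evalCross_tensor, evalCross_tensor, linearCombination_gen, linearCombination_gen]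
    dsimp only
    have hleft : linearCombination R c (boundary (gen R s)) * c' t = 0 := by
      by_cases hlt : t.length = m + 1
      · rw [hc.cocycle s ((hl.map LipschitzWith.prod_fst).subset hs) (by omega), zero_mul]
      · rw [hc'.vanish_degree t hlt, mul_zero]
    have hright : c s * linearCombination R c' (boundary (gen R t)) = 0 := by
      by_cases hls : s.length = n + 1
      · rw [hc'.cocycle t ((hl.map LipschitzWith.prod_snd).subset ht) (by omega), mul_zero]
      · rw [hc.vanish_degree s hls, zero_mul]
    rw [hleft, hright, smul_zero, add_zero]
  rw [linearCombination_crossCochain]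
  rw [pairBoundary_alexanderWhitney_gen, map_add, map_add, map_smul] at hzero
  simpa [evalCross, linearCombination_gen, hc.vanish_degree [] (by simp),
    hc'.vanish_degree [] (by simp)] using hzero

theorem IsRelCocycle.cross {n m : ℕ} {ε : ℝ} {c : List X → R} {c' : List Y → R} {A : Set X}
    {A' : Set Y} (hc : IsRelCocycle ε n c A) (hc' : IsRelCocycle ε m c' A') :
    IsRelCocycle ε (n + m) (crossCochain c c') {p | p.1 ∈ A ∨ p.2 ∈ A'} where
  cocycle _ hl hlen := hc.crossCochain_boundary hc' hl hlen
  vanish_near := by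
    rintro l ⟨a, ha, hv⟩
    refine map_eq_zero_of_gen ?_ (alexanderWhitney_gen_mem (R := R) l)
    rintro ⟨s, t⟩ ⟨hs, ht, -⟩
    rw [evalCross, linearCombination_gen]
    dsimp only at hs ht ⊢
    rcases ha with ha | ha
    · rw [hc.vanish_near s ⟨a.1, ha, fun v hvs => ?_⟩, zero_mul]
      obtain ⟨p, hp, rfl⟩ := List.mem_map.1 (hs hvs)
      exact (le_max_left _ _).trans_lt (hv p hp)
    · rw [hc'.vanish_near t ⟨a.2, ha, fun v hvt => ?_⟩, mul_zero]
      obtain ⟨p, hp, rfl⟩ := List.mem_map.1 (ht hvt)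
      exact (le_max_right _ _).trans_lt (hv p hp)
  vanish_degenerate l hl := by
    refine map_eq_zero_of_gen ?_ (alexanderWhitney_gen_mem_hasAdjacentDup (R := R) hl)
    rintro ⟨s, t⟩ (hs | ht)
    · rw [evalCross, linearCombination_gen, hc.vanish_degenerate s hs, zero_mul]
    · rw [evalCross, linearCombination_gen, hc'.vanish_degenerate t ht, mul_zero]
  vanish_degree l hl := by
    refine map_eq_zero_of_gen ?_ (alexanderWhitney_gen_mem (R := R) l)
    rintro ⟨s, t⟩ ⟨-, -, hst⟩
    rw [evalCross, linearCombination_gen]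
    dsimp only at hst ⊢
    by_cases ht : t.length = m + 1
    · rw [hc.vanish_degree s (by omega), zero_mul]
    · rw [hc'.vanish_degree t ht, mul_zero]

theorem IsRelCycle.shuffle {n m : ℕ} {δ : ℝ} {A : Set X} {A' : Set Y} {z : OrderedChain R X}
    {z' : OrderedChain R Y} (hz : IsRelCycle δ n A z) (hz' : IsRelCycle δ m A' z') :
    IsRelCycle δ (n + m) {p | p.1 ∈ A ∨ p.2 ∈ A'} (shuffle z z') where
  mem := by
    refine bilinear_mem_of_gen ?_ hz.mem hz'.mem
    rintro s t ⟨hs, hslen⟩ ⟨ht, htlen⟩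
    rw [MeanDimPaper.shuffle, bilinearExt_gen]
    refine supportedOn_mono ?_ (shuffleList_mem (R := R) s t)
    rintro l ⟨hlen, hmem⟩
    refine ⟨fun u hu v hv => ?_, by omega⟩
    rw [Prod.dist_eq, max_lt_iff]
    exact ⟨hs _ (hmem u hu).1 _ (hmem v hv).1, ht _ (hmem u hu).2 _ (hmem v hv).2⟩
  boundary_mem := by
    rw [boundary_shuffle (n + 1) (supportedOn_mono (fun l hl => hl.2) hz.mem)]
    refine Submodule.add_mem _ ?_ (Submodule.smul_mem _ _ ?_)
    · refine bilinear_mem_of_gen ?_ hz.boundary_mem (mem_supportedOn_true z')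
      intro s t hs _
      rw [MeanDimPaper.shuffle, bilinearExt_gen]
      exact supportedOn_mono (fun l hl v hv => Or.inl (hs _ (hl.2 v hv).1))
        (shuffleList_mem (R := R) s t)
    · refine bilinear_mem_of_gen ?_ (mem_supportedOn_true z) hz'.boundary_mem
      intro s t _ ht
      rw [MeanDimPaper.shuffle, bilinearExt_gen]
      exact supportedOn_mono (fun l hl v hv => Or.inr (ht _ (hl.2 v hv).2))
        (shuffleList_mem (R := R) s t)

theorem IsRelCocycle.crossCochain_shuffle {n m : ℕ} {ε : ℝ} {c : List X → R} {A : Set X}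
    (hc : IsRelCocycle ε n c A) {Z : Type*} (c' : List Z → R) {z : OrderedChain R X}
    {z' : OrderedChain R Z} (hz : z ∈ supportedOn R (fun l => l.length = n + 1))
    (hz' : z' ∈ supportedOn R (fun l => l.length = m + 1)) :
    linearCombination R (crossCochain c c') (shuffle z z') =
      linearCombination R c z * linearCombination R c' z' := by
  rw [linearCombination_crossCochain]
  refine bilinear_eq_of_gen (B := (shuffle (R := R)).compr₂ (evalCross c c' ∘ₗ alexanderWhitney))
    (B' := (LinearMap.mul R R).compl₁₂ (linearCombination R c) (linearCombination R c'))
    (fun s t hs ht => ?_) hz hz'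
  simp only [LinearMap.compr₂_apply, LinearMap.comp_apply, LinearMap.compl₁₂_apply,
    LinearMap.mul_apply', shuffle, bilinearExt_gen, linearCombination_gen]
  exact evalCross_alexanderWhitney_shuffle c c' s t (List.ne_nil_of_length_eq_add_one hs)
    (List.ne_nil_of_length_eq_add_one ht) (fun l hl => hc.vanish_degree l (by omega))
    hc.vanish_degenerate

theorem HasEssentialClass.prod {n m : ℕ} {ε : ℝ} (h : HasEssentialClass R X n ε)
    (h' : HasEssentialClass R Y m ε) : HasEssentialClass R (X × Y) (n + m) ε := by
  obtain ⟨c, A, hc, hcycle⟩ := h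
  obtain ⟨c', A', hc', hcycle'⟩ := h'
  refine ⟨crossCochain c c', {p | p.1 ∈ A ∨ p.2 ∈ A'}, hc.cross hc', fun δ hδ => ?_⟩
  obtain ⟨z, hz, hcz⟩ := hcycle δ hδ
  obtain ⟨z', hz', hcz'⟩ := hcycle' δ hδ
  refine ⟨shuffle z z', hz.shuffle hz', ?_⟩
  rw [hc.crossCochain_shuffle c' (supportedOn_mono (fun _ hl => hl.2) hz.mem)
    (supportedOn_mono (fun _ hl => hl.2) hz'.mem), hcz, hcz', one_mul]

theorem IsRelCocycle.of_isometryEquiv (e : X ≃ᵢ Y) {n : ℕ} {ε : ℝ} {c : List X → R} {A : Set X}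
    (hc : IsRelCocycle ε n c A) : IsRelCocycle ε n (fun l => c (l.map e.symm)) (e '' A) where
  cocycle l hl hlen := by
    rw [linearCombination_comp_map, ← (isChainMap_vertexMap (R := R) e.symm).boundary_map,
      vertexMap_gen]
    exact hc.cocycle _ (hl.map e.symm.isometry.lipschitz) (by simpa using hlen)
  vanish_near := by
    rintro l ⟨_, ⟨a, ha, rfl⟩, hnear⟩
    refine hc.vanish_near _ ⟨a, ha, fun v hv => ?_⟩
    obtain ⟨v, hv', rfl⟩ := List.mem_map.1 hv
    simpa [← e.symm.dist_eq] using hnear v hv'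
  vanish_degenerate := by
    rintro l ⟨a, l₁, l₂, rfl⟩
    exact hc.vanish_degenerate _ ⟨e.symm a, l₁.map e.symm, l₂.map e.symm, by simp⟩
  vanish_degree l hl := hc.vanish_degree _ (by simpa using hl)

theorem IsRelCycle.of_isometryEquiv (e : X ≃ᵢ Y) {n : ℕ} {δ : ℝ} {A : Set X}
    {z : OrderedChain R X} (hz : IsRelCycle δ n A z) : IsRelCycle δ n (e '' A) (vertexMap e z) where
  mem := by
    refine map_mem_of_gen ?_ hz.mem
    rintro l ⟨hl, hlen⟩
    rw [vertexMap_gen]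
    exact gen_mem_supportedOn ⟨hl.map e.isometry.lipschitz, by simpa using hlen⟩
  boundary_mem := by
    rw [(isChainMap_vertexMap (R := R) e).boundary_map]
    refine map_mem_of_gen ?_ hz.boundary_mem
    intro l hl
    rw [vertexMap_gen]
    refine gen_mem_supportedOn fun v hv => ?_
    obtain ⟨v, hv', rfl⟩ := List.mem_map.1 hv
    exact ⟨v, hl v hv', rfl⟩

theorem HasEssentialClass.of_isometryEquiv (e : X ≃ᵢ Y) {n : ℕ} {ε : ℝ}
    (h : HasEssentialClass R X n ε) : HasEssentialClass R Y n ε := by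
  obtain ⟨c, A, hc, hcycle⟩ := h
  refine ⟨_, _, hc.of_isometryEquiv e, fun δ hδ => ?_⟩
  obtain ⟨z, hz, hcz⟩ := hcycle δ hδ
  refine ⟨_, hz.of_isometryEquiv e, ?_⟩
  have hid : (vertexMap e.symm ∘ₗ vertexMap e : OrderedChain R X →ₗ[R] OrderedChain R X) =
      LinearMap.id :=
    linearMap_ext_gen fun l => by simp [Function.comp_def]
  rw [linearCombination_comp_map, ← LinearMap.comp_apply (vertexMap e.symm), hid,
    LinearMap.id_apply, hcz]

end EssentialClass

section BasicCases

variable {R : Type*} [CommRing R] {X : Type*} [MetricSpace X]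

theorem ApproxDimLE.of_subsingleton [Subsingleton X] : ApproxDimLE R X 0 := by
  intro ε hε
  refine ⟨1, one_pos, nerveProjection R id, isChainMap_nerveProjection id,
    isNearId_nerveProjection (fun x => by simpa using hε) 1, fun l _ hl => ?_⟩
  refine nerveProjection_of_not_nodup ?_
  match l with
  | [] => simp at hl
  | [a] => simp at hl
  | a :: b :: l => simp [Subsingleton.elim a b]

theorem ApproxDimLE.pow {n : ℕ} (h : ApproxDimLE R X n) (N : ℕ) :
    ApproxDimLE R (Fin N → X) (N * n) := by
  induction N with
  | zero => exact .mono .of_subsingleton (Nat.zero_le _)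
  | succ N ih =>
    rw [Nat.succ_mul]
    exact (ih.prod (h.of_isometryEquiv (.symm (.funUnique (Fin 1) X)))).of_isometryEquiv
      (Fin.appendIsometry N 1)

theorem HasAdjacentDup.two_le_length {α : Type*} {l : List α} (h : HasAdjacentDup l) :
    2 ≤ l.length := by
  obtain ⟨a, l₁, l₂, rfl⟩ := h
  simp only [List.length_append, List.length_cons]
  omega

theorem HasEssentialClass.zero (x : X) (ε : ℝ) : HasEssentialClass R X 0 ε := by
  classical
  refine ⟨fun l => if l.length = 1 then 1 else 0, ∅, ⟨?_, by simp, ?_, fun l hl => if_neg hl⟩,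
    fun δ hδ => ⟨gen R [x], ⟨gen_mem_supportedOn ⟨?_, rfl⟩, ?_⟩, by simp⟩⟩
  · intro l _ hl
    match l with
    | [a, b] => simp [boundary_cons]
  · intro l hl
    have := hl.two_le_length
    exact if_neg (by omega)
  · simpa [IsSmall] using hδ
  · simpa [boundary_cons] using gen_mem_supportedOn (by simp)

theorem HasEssentialClass.pow {n : ℕ} {ε : ℝ} (h : HasEssentialClass R X n ε) (N : ℕ) :
    HasEssentialClass R (Fin N → X) (N * n) ε := by
  induction N with
  | zero =>
    rw [Nat.zero_mul]
    exact .zero (fun i => i.elim0) ε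
  | succ N ih =>
    rw [Nat.succ_mul]
    exact (ih.prod (h.of_isometryEquiv (.symm (.funUnique (Fin 1) X)))).of_isometryEquiv
      (Fin.appendIsometry N 1)

end BasicCases

section EdgeDifference

variable {R : Type*} [CommRing R] {X : Type*}

/-- The coboundary of the `0`-cochain `f`. -/
def edgeDifference (f : X → R) : List X → R
  | [x, y] => f y - f x
  | _ => 0

theorem edgeDifference_of_length_ne (f : X → R) {l : List X} (hl : l.length ≠ 2) :
    edgeDifference f l = 0 := by
  match l with
  | [] => rfl
  | [x] => rfl
  | [x, y] => simp at hl
  | x :: y :: z :: l => rfl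

theorem linearCombination_edgeDifference (f : X → R) {w : OrderedChain R X}
    (hw : w ∈ supportedOn R (fun l => l.length = 2)) :
    linearCombination R (edgeDifference f) w =
      linearCombination R (fun l => l.head?.elim 0 f) (boundary w) := by
  refine map_eq_of_gen (g := linearCombination R (fun l => l.head?.elim 0 f) ∘ₗ boundary) ?_ hw
  intro l hl
  match l with
  | [x, y] => simp [boundary_cons, edgeDifference]

end EdgeDifference

section ChainedPoints

variable {X : Type*} [MetricSpace X]

/-- `x` and `y` are joined by a finite sequence of points with steps of length `< δ`. -/
def IsChained (δ : ℝ) : X → X → Prop := Relation.ReflTransGen (fun x y => dist x y < δ)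

theorem IsChained.symm {δ : ℝ} {x y : X} (h : IsChained δ x y) : IsChained δ y x := by
  induction h with
  | refl => exact .refl
  | tail _ hxy ih => exact ih.head (by rwa [dist_comm])

theorem IsChained.mono {δ δ' : ℝ} {x y : X} (h : IsChained δ x y) (hδ : δ ≤ δ') :
    IsChained δ' x y :=
  Relation.ReflTransGen.mono (fun _ _ hxy => lt_of_lt_of_le hxy hδ) _ _ h

theorem ord_range_isChained_le (δ : ℝ) : ord (range fun x : X => {y | IsChained δ x y}) ≤ 0 := by
  suffices h : ord (range fun x : X => {y | IsChained δ x y}) ≤ (0 : ℕ) by exact_mod_cast h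
  rw [ord_le_iff]
  intro x L hL hx
  match L with
  | [] => simp
  | [U] => simp
  | U :: V :: L =>
    obtain ⟨⟨u, rfl⟩, hxu⟩ := hx U (by simp)
    obtain ⟨⟨v, rfl⟩, hxv⟩ := hx V (by simp)
    have huv : IsChained δ u v := hxu.trans (IsChained.symm hxv)
    refine absurd ?_ (List.ne_of_not_mem_cons (List.nodup_cons.1 hL).1)
    ext y
    exact ⟨huv.symm.trans, huv.trans⟩

theorem topDim_le_zero_of_isChained [CompactSpace X]
    (h : ∀ ε > 0, ∃ δ > 0, ∀ x y : X, IsChained δ x y → dist x y < ε) : topDim X ≤ 0 := by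
  refine topDim_le_of_forall_dist_lt fun ε hε => ?_
  obtain ⟨δ, hδ, hdist⟩ := h ε hε
  refine ⟨range fun x : X => {y | IsChained δ x y}, ⟨?_, ?_⟩, ord_range_isChained_le δ, ?_⟩
  · rintro _ ⟨x, rfl⟩
    refine Metric.isOpen_iff.2 fun y hy => ⟨δ, hδ, fun z hz => ?_⟩
    exact Relation.ReflTransGen.tail hy (by rwa [dist_comm])
  · exact eq_univ_of_forall fun x => ⟨_, ⟨x, rfl⟩, .refl⟩
  · rintro _ ⟨u, rfl⟩ x hx y hy
    exact hdist x y ((IsChained.symm hx).trans hy)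

theorem exists_ne_forall_isChained [CompactSpace X] (h : ¬ topDim X ≤ 0) :
    ∃ a b : X, a ≠ b ∧ ∀ δ > 0, IsChained δ a b := by
  obtain ⟨ε, hε, hfar⟩ : ∃ ε > 0, ∀ δ > 0, ∃ a b : X, IsChained δ a b ∧ ε ≤ dist a b := by
    by_contra! hc
    exact h (topDim_le_zero_of_isChained hc)
  choose a b hch hab using fun n : ℕ => hfar (1 / (n + 1 : ℝ)) (by positivity)
  obtain ⟨⟨p, q⟩, -, φ, hφ, hlim⟩ := isCompact_univ.tendsto_subseq (x := fun n => (a n, b n))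
    (fun n => mem_univ _)
  have ha : Tendsto (fun n => a (φ n)) atTop (nhds p) := (continuous_fst.tendsto _).comp hlim
  have hb : Tendsto (fun n => b (φ n)) atTop (nhds q) := (continuous_snd.tendsto _).comp hlim
  refine ⟨p, q, ?_, fun δ hδ => ?_⟩
  · have hpq : ε ≤ dist p q := ge_of_tendsto' (ha.dist hb) fun n => hab (φ n)
    exact dist_pos.1 (hε.trans_le hpq)
  · have hsmall : ∀ᶠ n in atTop, 1 / ((φ n : ℝ) + 1) < δ :=
      (tendsto_one_div_add_atTop_nhds_zero_nat.comp hφ.tendsto_atTop).eventually (gt_mem_nhds hδ)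
    obtain ⟨n, hap, hbq, hn⟩ := ((Metric.tendsto_nhds.1 ha δ hδ).and
      ((Metric.tendsto_nhds.1 hb δ hδ).and hsmall)).exists
    exact .head (by rwa [dist_comm]) (.tail ((hch (φ n)).mono hn.le) hbq)

variable {R : Type*} [CommRing R]

theorem exists_boundary_eq_of_isChained {δ : ℝ} (hδ : 0 < δ) {a b : X} (h : IsChained δ a b) :
    ∃ z ∈ supportedOn R (fun l : List X => IsSmall δ l ∧ l.length = 2),
      boundary z = gen R [b] - gen R [a] := by
  induction h with
  | refl => exact ⟨0, Submodule.zero_mem _, by simp⟩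
  | @tail x y _ hxy ih =>
    obtain ⟨z, hz, hb⟩ := ih
    have hsmall : IsSmall δ [x, y] := by simp [IsSmall, hδ, hxy, dist_comm y x]
    refine ⟨z + gen R [x, y], Submodule.add_mem _ hz (gen_mem_supportedOn ⟨hsmall, rfl⟩), ?_⟩
    simp [map_add, hb, boundary_cons]

theorem isRelCocycle_edgeDifference {ε : ℝ} {A : Set X} {f : X → R}
    (hf : ∀ a ∈ A, ∀ x y, dist a x < ε → dist a y < ε → f x = f y) :
    IsRelCocycle ε 1 (edgeDifference f) A where
  cocycle l _ hl := by
    rw [linearCombination_edgeDifference, boundary_boundary, map_zero]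
    exact supportedOn_mono (fun m hm => by omega) (boundary_gen_mem (R := R) l)
  vanish_near := by
    rintro l ⟨a, ha, hnear⟩
    by_cases hl : l.length = 2
    · obtain ⟨x, y, rfl⟩ := List.length_eq_two.1 hl
      exact sub_eq_zero.2 (hf a ha y x (hnear y (by simp)) (hnear x (by simp)))
    · exact edgeDifference_of_length_ne f hl
  vanish_degenerate l hdup := by
    by_cases hl : l.length = 2
    · obtain ⟨x, y, rfl⟩ := List.length_eq_two.1 hl
      obtain ⟨a, l₁, l₂, h⟩ := hdup
      obtain rfl : l₁ = [] := List.eq_nil_of_length_eq_zero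
        (by have := congrArg List.length h; simp at this; omega)
      simp_all [edgeDifference]
    · exact edgeDifference_of_length_ne f hl
  vanish_degree _ := edgeDifference_of_length_ne f

theorem HasEssentialClass.one [CompactSpace X] (h : ¬ topDim X ≤ 0) :
    ∃ ε > 0, HasEssentialClass R X 1 ε := by
  classical
  obtain ⟨a, b, hab, hch⟩ := exists_ne_forall_isChained h
  have hD : 0 < dist a b := dist_pos.2 hab
  let f : X → R := fun x => if dist a b / 2 < dist a x then 1 else 0
  have hfa (x) (hx : dist a x < dist a b / 4) : f x = 0 := if_neg (by linarith)
  have hfb (x) (hx : dist b x < dist a b / 4) : f x = 1 :=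
    if_pos (by linarith [dist_triangle a x b, dist_comm x b])
  refine ⟨dist a b / 4, by positivity, edgeDifference f, {a, b},
    isRelCocycle_edgeDifference ?_, fun δ hδ => ?_⟩
  · rintro p (rfl | rfl) x y hx hy
    · rw [hfa x hx, hfa y hy]
    · rw [hfb x hx, hfb y hy]
  · obtain ⟨z, hz, hbz⟩ := exists_boundary_eq_of_isChained (R := R) hδ (hch δ hδ)
    refine ⟨z, ⟨hz, ?_⟩, ?_⟩
    · rw [hbz]
      exact Submodule.sub_mem _ (gen_mem_supportedOn (by simp)) (gen_mem_supportedOn (by simp))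
    · rw [linearCombination_edgeDifference f (supportedOn_mono (fun l hl => hl.2) hz), hbz, map_sub,
        linearCombination_gen, linearCombination_gen]
      simp [hfa a (by simpa using hD), hfb b (by simpa using hD)]

end ChainedPoints

section Primitives

/-- The coboundary of the cochain `b` agrees with `c` on the `ε`-small simplices with `k`
vertices. In particular `CoboundaryEq ε k b 0` says that `b` is a cocycle there. -/
def CoboundaryEq {R : Type*} [CommRing R] {X : Type*} [MetricSpace X] (ε : ℝ) (k : ℕ)
    (b c : List X → R) : Prop :=
  ∀ l, IsSmall ε l → l.length = k → linearCombination R b (boundary (gen R l)) = c l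

theorem exists_functional_map_eq {F V : Type*} [Field F] [AddCommGroup V] [Module F V]
    {Z N : Submodule F V} {f : V →ₗ[F] V} {c : V →ₗ[F] F} (h : ∀ z ∈ Z, f z ∈ N → c z = 0) :
    ∃ g : V →ₗ[F] F, (∀ v ∈ N, g v = 0) ∧ ∀ z ∈ Z, g (f z) = c z := by
  have hker : c ∘ₗ Z.subtype ∈ (LinearMap.ker (N.mkQ ∘ₗ f ∘ₗ Z.subtype)).dualAnnihilator := by
    rw [Submodule.mem_dualAnnihilator]
    rintro ⟨z, hz⟩ hfz
    exact h z hz (by simpa using hfz)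
  rw [← LinearMap.range_dualMap_eq_dualAnnihilator_ker] at hker
  obtain ⟨g, hg⟩ := hker
  refine ⟨g ∘ₗ N.mkQ, fun v hv => ?_, fun z hz => LinearMap.congr_fun hg ⟨z, hz⟩⟩
  rw [LinearMap.comp_apply, Submodule.mkQ_apply, (Submodule.Quotient.mk_eq_zero N).2 hv, map_zero]

theorem IsRelCocycle.exists_coboundaryEq {F : Type*} [Field F] {X : Type*} [MetricSpace X] {n : ℕ}
    {ε : ℝ} {c : List X → F} {A : Set X} (hc : IsRelCocycle ε n c A)
    (hn : ¬ HasEssentialClass F X n ε) :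
    ∃ δ > 0, ∃ b : List X → F, (∀ m, (∀ v ∈ m, v ∈ A) → b m = 0) ∧ CoboundaryEq δ (n + 1) b c := by
  obtain ⟨δ, hδ, hδc⟩ : ∃ δ > 0, ∀ z, IsRelCycle δ n A z → linearCombination F c z = 0 := by
    by_contra! hcon
    refine hn ⟨c, A, hc, fun δ hδ => ?_⟩
    obtain ⟨z, hz, hcz⟩ := hcon δ hδ
    refine ⟨(linearCombination F c z)⁻¹ • z, ⟨Submodule.smul_mem _ _ hz.mem, ?_⟩, ?_⟩
    · rw [map_smul]
      exact Submodule.smul_mem _ _ hz.boundary_mem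
    · rw [map_smul, smul_eq_mul, inv_mul_cancel₀ hcz]
  obtain ⟨g, hgA, hg⟩ := exists_functional_map_eq (c := linearCombination F c)
    fun z hz hbz => hδc z ⟨hz, hbz⟩
  refine ⟨δ, hδ, fun m => g (gen F m), fun m hm => hgA _ (gen_mem_supportedOn hm), ?_⟩
  intro l hl hlen
  have hlin : linearCombination F (fun m => g (gen F m)) = g :=
    linearMap_ext_gen fun m => linearCombination_gen _ m
  rw [hlin, hg _ (gen_mem_supportedOn ⟨hl, hlen⟩), linearCombination_gen]

end Primitives

section ChainHomotopicMap

variable {R : Type*} [CommRing R] {X : Type*} {Q t : OrderedChain R X →ₗ[R] OrderedChain R X}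

theorem IsChainMap.sub_homotopy (hQ : IsChainMap Q) (ht : t (gen R []) = 0)
    (hlen : ∀ l, t (gen R l) ∈ supportedOn R (fun m => m.length = l.length + 1)) :
    IsChainMap (Q - boundary ∘ₗ t - t ∘ₗ boundary) where
  comm l := by simp [hQ.boundary_map, boundary_boundary]
  nil := by simp [hQ.nil, boundary_nil, ht]
  len l := by
    refine Submodule.sub_mem _ (Submodule.sub_mem _ (hQ.len l) ?_) ?_
    · refine map_mem_of_gen (f := boundary) (fun m hm => ?_) (hlen l)
      exact supportedOn_mono (fun _ h => by omega) (boundary_gen_mem (R := R) m)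
    · refine map_mem_of_gen (f := t) (fun m hm => ?_) (boundary_gen_mem (R := R) l)
      exact supportedOn_mono (fun _ h => by omega) (hlen m)

theorem IsNearId.sub_homotopy [MetricSpace X] {δ ε : ℝ} (hQ : IsNearId δ ε Q)
    (ht : IsNearId δ ε t) : IsNearId δ ε (Q - boundary ∘ₗ t - t ∘ₗ boundary) := by
  intro l hl
  refine Submodule.sub_mem _ (Submodule.sub_mem _ (hQ l hl) ?_) ?_
  · refine map_mem_of_gen (f := boundary) (fun m hm => ?_) (ht l hl)
    exact supportedOn_mono (fun _ h v hv => hm v (h.2.subset hv)) (boundary_gen_mem (R := R) m)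
  · refine map_mem_of_gen (f := t) (fun m hm => ?_) (boundary_gen_mem_isSmall (R := R) hl)
    exact supportedOn_mono (fun _ h => h.of_subset hm.2.1) (ht m hm.2.2)

/-- The linear map sending a simplex `m` with `k` vertices to `∑ ν ∈ S, b ν m • ν`, and the other
simplices to `0`. -/
noncomputable def cochainSum (k : ℕ) (S : Finset (List X)) (b : List X → List X → R) :
    OrderedChain R X →ₗ[R] OrderedChain R X :=
  linearCombination R (fun m => if m.length = k then ∑ ν ∈ S, b ν m • gen R ν else 0)

variable {k : ℕ} {S : Finset (List X)} {b : List X → List X → R}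

theorem cochainSum_of_length_eq {m : List X} (hm : m.length = k) :
    cochainSum k S b (gen R m) = ∑ ν ∈ S, b ν m • gen R ν := by
  rw [cochainSum, linearCombination_gen, if_pos hm]

theorem cochainSum_of_length_ne {m : List X} (hm : m.length ≠ k) :
    cochainSum k S b (gen R m) = 0 := by
  rw [cochainSum, linearCombination_gen, if_neg hm]

theorem cochainSum_mem {P : List X → Prop} {m : List X}
    (h : m.length = k → ∀ ν ∈ S, b ν m ≠ 0 → P ν) :
    cochainSum k S b (gen R m) ∈ supportedOn R P := by
  by_cases hm : m.length = k
  · rw [cochainSum_of_length_eq hm]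
    refine Submodule.sum_mem _ fun ν hν => ?_
    by_cases hb : b ν m = 0
    · rw [hb, zero_smul]
      exact Submodule.zero_mem _
    · exact Submodule.smul_mem _ _ (gen_mem_supportedOn (h hm ν hν hb))
  · rw [cochainSum_of_length_ne hm]
    exact Submodule.zero_mem _

theorem sum_smul_gen_of_mem_supportedOn {w : OrderedChain R X} (hw : w ∈ supportedOn R (· ∈ S)) :
    ∑ ν ∈ S, w ν • gen R ν = w := by
  conv_rhs => rw [← Finsupp.sum_single w, Finsupp.sum_of_support_subset _ (fun ν hν => hw hν) _
    (by simp)]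
  exact Finset.sum_congr rfl fun ν _ => Finsupp.smul_single_one ν (w ν)

theorem cochainSum_boundary {l : List X} (hl : l.length = k + 1) :
    cochainSum k S b (boundary (gen R l)) =
      ∑ ν ∈ S, linearCombination R (b ν) (boundary (gen R l)) • gen R ν := by
  have hface := boundary_gen_mem (R := R) l
  rw [map_eq_of_gen (f := cochainSum k S b)
    (g := ∑ ν ∈ S, (linearCombination R (b ν)).smulRight (gen R ν)) (fun m hm => ?_) hface]
  · simp
  · rw [cochainSum_of_length_eq (by omega)]
    simp

theorem cochainSum_boundary_of_length_ne {l : List X} (hl : l.length ≠ k + 1) :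
    cochainSum k S b (boundary (gen R l)) = 0 :=
  map_eq_zero_of_gen (fun _ hm => cochainSum_of_length_ne (by omega)) (boundary_gen_mem (R := R) l)

end ChainHomotopicMap

section NerveCoefficients

theorem finite_setOf_length_eq_forall_mem {α : Type*} {s : Set α} (hs : s.Finite) (n : ℕ) :
    {l : List α | l.length = n ∧ ∀ v ∈ l, v ∈ s}.Finite := by
  have := hs.to_subtype
  refine ((List.finite_length_eq s n).image (List.map Subtype.val)).subset ?_
  rintro l ⟨hlen, hmem⟩
  lift l to List s using hmem
  exact ⟨l, by simpa using hlen, rfl⟩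

variable {R : Type*} [CommRing R] {X : Type*} [MetricSpace X] {φ : X → X} {ε : ℝ}

theorem exists_finset_nerveProjection_mem (hfin : (range φ).Finite) (hφ : ∀ x, dist (φ x) x < ε)
    (k : ℕ) : ∃ S : Finset (List X), (∀ ν ∈ S, ν.length = k ∧ IsSmall (3 * ε) ν) ∧
      ∀ l, IsSmall ε l → l.length = k → nerveProjection R φ (gen R l) ∈ supportedOn R (· ∈ S) := by
  refine ⟨((finite_setOf_length_eq_forall_mem hfin k).subset
    (sep_subset _ (IsSmall (3 * ε)))).toFinset, fun ν hν => ?_, fun l hl hlen => ?_⟩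
  · obtain ⟨⟨hlen, -⟩, hsmall⟩ := (Finite.mem_toFinset _).1 hν
    exact ⟨hlen, hsmall⟩
  · refine supportedOn_mono ?_ (nerveProjection_gen_mem (R := R) φ l)
    rintro ν ⟨-, hν, hmem⟩
    refine (Finite.mem_toFinset _).2 ⟨⟨hν.trans hlen, fun v hv => ?_⟩, ?_⟩
    · obtain ⟨u, -, rfl⟩ := List.mem_map.1 ((hmem v).1 hv)
      exact mem_range_self u
    · exact ((isNear_of_mem_map hφ fun y hy => (hmem y).1 hy).isSmall hl).mono (by linarith)

theorem isRelCocycle_nerveProjection_apply (hφ : ∀ x, dist (φ x) x < ε) {d : ℝ} {n : ℕ}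
    (hdim : ∀ l, IsSmall d l → n + 1 < l.length → nerveProjection R φ (gen R l) = 0) {ν : List X}
    (hν : ν.length = n + 1) :
    IsRelCocycle (min d ε) n (fun l => nerveProjection R φ (gen R l) ν)
      {x | ∀ w ∈ ν, 2 * ε ≤ dist x w} where
  cocycle l hl hlen := by
    have hlin : linearCombination R (fun l => nerveProjection R φ (gen R l) ν) =
        Finsupp.lapply ν ∘ₗ nerveProjection R φ :=
      linearMap_ext_gen fun l => linearCombination_gen _ l
    rw [hlin, LinearMap.comp_apply, ← (isChainMap_nerveProjection φ).boundary_map,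
      hdim l (hl.mono (min_le_left _ _)) (by omega), map_zero, map_zero]
  vanish_near := by
    rintro l ⟨a, ha, hnear⟩
    refine (Finsupp.mem_supported' R _).1 (nerveProjection_gen_mem (R := R) φ l) ν ?_
    rintro ⟨-, -, hmem⟩
    obtain ⟨w, hw⟩ := List.exists_mem_of_length_pos (l := ν) (by omega)
    obtain ⟨u, hu, rfl⟩ := List.mem_map.1 ((hmem w).1 hw)
    have hau := (hnear u hu).trans_le (min_le_right _ _)
    linarith [ha (φ u) hw, hφ u, dist_triangle a u (φ u), dist_comm u (φ u)]
  vanish_degenerate := by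
    rintro l ⟨a, l₁, l₂, rfl⟩
    rw [nerveProjection_of_not_nodup (by simp [List.nodup_append]), Finsupp.zero_apply]
  vanish_degree l hl := by
    refine (Finsupp.mem_supported' R _).1 (nerveProjection_gen_mem (R := R) φ l) ν ?_
    rintro ⟨-, hlen, -⟩
    omega

end NerveCoefficients

theorem exists_pos_le_of_finset {α : Type*} (S : Finset α) {f : α → ℝ} (hf : ∀ a ∈ S, 0 < f a) :
    ∃ δ > 0, ∀ a ∈ S, δ ≤ f a := by
  rcases S.eq_empty_or_nonempty with hS | hS
  · exact ⟨1, one_pos, by simp [hS]⟩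
  · exact ⟨S.inf' hS f, (Finset.lt_inf'_iff _).2 hf, fun a ha => Finset.inf'_le _ ha⟩

theorem ApproxDimLE.of_not_hasEssentialClass {F : Type*} [Field F] {X : Type*} [MetricSpace X]
    [CompactSpace X] {k : ℕ} (hX : topDim X ≤ (k + 1 : ℕ))
    (hess : ∀ ε > 0, ¬ HasEssentialClass F X (k + 1) ε) : ApproxDimLE F X k := by
  intro ε hε
  have he : 0 < ε / 8 := by positivity
  obtain ⟨β, hβfin, hβ, hord, _, hβsmall⟩ := exists_finite_cover_dist_lt hX he
  obtain ⟨d, hd, φ, hφ, hfin, hnodup⟩ := exists_nerve_vertexMap hβ hord hβsmall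
  have hQdim (l) (hl : IsSmall d l) (hlen : k + 1 + 1 < l.length) :
      nerveProjection F φ (gen F l) = 0 :=
    nerveProjection_of_not_nodup fun h => (hnodup l hl h).not_gt hlen
  obtain ⟨S, hS, hQS⟩ := exists_finset_nerveProjection_mem (R := F) (hfin hβfin) hφ (k + 2)
  have hprim := fun ν hν => (isRelCocycle_nerveProjection_apply hφ hQdim
    (hS ν hν).1).exists_coboundaryEq (hess (min d (ε / 8)) (by positivity))
  choose! δ hδ b hb₀ hb using hprim
  obtain ⟨d', hd', hd'δ⟩ := exists_pos_le_of_finset S hδ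
  refine ⟨min (min d d') (ε / 8), by positivity, nerveProjection F φ - boundary ∘ₗ
    cochainSum (k + 1) S b - cochainSum (k + 1) S b ∘ₗ boundary, ?_, ?_, ?_⟩
  · refine (isChainMap_nerveProjection φ).sub_homotopy (cochainSum_of_length_ne (by simp)) ?_
    exact fun l => cochainSum_mem fun hl ν hν _ => by rw [(hS ν hν).1, hl]
  · refine IsNearId.sub_homotopy (fun l hl => ?_) (fun m _ => cochainSum_mem fun _ ν hν hbν => ?_)
    · exact supportedOn_mono (fun m hm => hm.mono (by linarith))
        (isNearId_nerveProjection hφ _ l hl)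
    · obtain ⟨v, hv, w, hw, hvw⟩ : ∃ v ∈ m, ∃ w ∈ ν, dist v w < 2 * (ε / 8) := by
        by_contra! hcon
        exact hbν (hb₀ ν hν m hcon)
      intro u hu
      have huw := (hS ν hν).2 u hu w hw
      exact ⟨v, hv, by linarith [dist_triangle u w v, dist_comm v w]⟩
  · intro l hl hlen
    rw [LinearMap.sub_apply, LinearMap.sub_apply, LinearMap.comp_apply, LinearMap.comp_apply,
      cochainSum_of_length_ne (by omega), map_zero, sub_zero, sub_eq_zero]
    by_cases hk : l.length = k + 1 + 1
    · have hQl := hQS l (hl.mono (min_le_right _ _)) hk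
      rw [cochainSum_boundary hk, ← sum_smul_gen_of_mem_supportedOn hQl]
      refine Finset.sum_congr rfl fun ν hν => ?_
      have hl' : IsSmall (δ ν) l :=
        hl.mono ((min_le_left _ _).trans ((min_le_right _ _).trans (hd'δ ν hν)))
      rw [hb ν hν l hl' hk]
    · rw [cochainSum_boundary_of_length_ne hk]
      exact hQdim l (hl.mono ((min_le_left _ _).trans (min_le_left _ _))) (by omega)

section CoboundaryEquation

variable {R R' : Type*} [CommRing R] [CommRing R'] {X : Type*}

theorem linearCombination_boundary_cons (c : List X → R) (x : X) (l : List X) :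
    linearCombination R c (boundary (gen R (x :: l))) =
      c l - linearCombination R (fun m => c (x :: m)) (boundary (gen R l)) := by
  have hcone : linearCombination R c ∘ₗ cone x = linearCombination R fun m => c (x :: m) :=
    linearMap_ext_gen fun m => by
      rw [LinearMap.comp_apply, cone_gen, linearCombination_gen, linearCombination_gen]
  rw [boundary_cons, map_sub, linearCombination_gen, ← hcone, LinearMap.comp_apply]

theorem linearCombination_boundary_ringHom (f : R →+* R') (c : List X → R) (l : List X) :
    linearCombination R' (fun m => f (c m)) (boundary (gen R' l)) =
      f (linearCombination R c (boundary (gen R l))) := by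
  induction l generalizing c with
  | nil => simp [boundary_nil]
  | cons x l ih =>
    rw [linearCombination_boundary_cons, linearCombination_boundary_cons, map_sub,
      ih fun m => c (x :: m)]

theorem linearCombination_boundary_congr {c c' : List X → R} {l : List X}
    (h : ∀ m, m.length + 1 = l.length → m.Sublist l → c m = c' m) :
    linearCombination R c (boundary (gen R l)) = linearCombination R c' (boundary (gen R l)) := by
  refine map_eq_of_gen (fun m hm => ?_) (boundary_gen_mem (R := R) l)
  rw [linearCombination_gen, linearCombination_gen, h m hm.1 hm.2]

theorem linearCombination_mul (r : R) (c : List X → R) (w : OrderedChain R X) :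
    linearCombination R (fun m => r * c m) w = r * linearCombination R c w :=
  LinearMap.congr_fun (f := linearCombination R fun m => r * c m)
    (g := r • linearCombination R c) (linearMap_ext_gen fun m => by
      rw [LinearMap.smul_apply, linearCombination_gen, linearCombination_gen, smul_eq_mul]) w

variable [MetricSpace X] {ε δ ρ : ℝ} {k n : ℕ} {S : Set X}

theorem CoboundaryEq.mono {b c : List X → R} (h : CoboundaryEq ε k b c) (hδ : δ ≤ ε) :
    CoboundaryEq δ k b c :=
  fun l hl => h l (hl.mono hδ)

theorem CoboundaryEq.map {b c : List X → R} (h : CoboundaryEq ε k b c) (f : R →+* R') :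
    CoboundaryEq ε k (fun m => f (b m)) (fun m => f (c m)) := fun l hl hlen => by
  rw [linearCombination_boundary_ringHom, h l hl hlen]

/-- The cochain `b` vanishes on every simplex with a vertex outside of `S`. -/
def IsSupportedIn (b : List X → R) (S : Set X) : Prop :=
  ∀ m, b m ≠ 0 → ∀ v ∈ m, v ∈ S

open Classical in
/-- The pullback of the cochain `c` along the chain homotopy from `Q` to the identity, restricted to
`δ`-small simplices with `k` vertices. -/
noncomputable def homotopyCochain (δ : ℝ) (k : ℕ) (Q : OrderedChain R X →ₗ[R] OrderedChain R X)
    (c : List X → R) (m : List X) : R :=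
  if IsSmall δ m ∧ m.length = k then linearCombination R c (homotopy Q (gen R m)) else 0

variable {Q : OrderedChain R X →ₗ[R] OrderedChain R X} {c : List X → R} {e : ℝ}

theorem CoboundaryEq.apply_add_homotopyCochain (hc : CoboundaryEq ε (k + 2) c 0)
    (hQ : IsChainMap Q) (hQe : IsNearId δ e Q) (he : 0 < e) (hδe : δ + 2 * e ≤ ε) {l : List X}
    (hl : IsSmall δ l) (hlen : l.length = k + 1) :
    linearCombination R c (Q (gen R l)) +
      linearCombination R (homotopyCochain δ k Q c) (boundary (gen R l)) = c l := by
  have hfaces : linearCombination R (homotopyCochain δ k Q c) (boundary (gen R l)) =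
      linearCombination R c (homotopy Q (boundary (gen R l))) := by
    refine map_eq_of_gen (g := linearCombination R c ∘ₗ homotopy Q) (fun m hm => ?_)
      (boundary_gen_mem (R := R) l)
    rw [linearCombination_gen, homotopyCochain, if_pos ⟨hl.subset hm.2.subset, by omega⟩,
      LinearMap.comp_apply]
  have hcocycle : linearCombination R c (boundary (homotopy Q (gen R l))) = 0 := by
    refine map_eq_zero_of_gen (f := linearCombination R c ∘ₗ boundary) (fun m hm => ?_)
      (mem_supportedOn_and (homotopy_isNearId he hQe l hl) (homotopy_gen_mem_length hQ l))
    exact hc m ((hm.1.isSmall hl).mono hδe) (by omega)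
  have h := congrArg (linearCombination R c) (eq_add_boundary_homotopy hQ (gen R l))
  rw [map_add, map_add, hcocycle, add_zero, linearCombination_gen] at h
  rw [hfaces, h]

theorem isSupportedIn_homotopyCochain (hQ : IsChainMap Q) (hQe : IsNearId δ e Q) (he : 0 < e)
    (hδe : δ + 2 * e ≤ ε) (hδρ : δ + e ≤ ρ)
    (hS : ∀ m, IsSmall ε m → m.length = k + 1 → c m ≠ 0 → ∀ v ∈ m, v ∈ S) :
    IsSupportedIn (homotopyCochain δ k Q c) (Metric.thickening ρ S) := by
  intro m hm v hv
  have hsmall : IsSmall δ m ∧ m.length = k := by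
    by_contra hcon
    exact hm (if_neg hcon)
  rw [homotopyCochain, if_pos hsmall] at hm
  obtain ⟨m', hcm', hnear, hlen⟩ : ∃ m', c m' ≠ 0 ∧ IsNear e m m' ∧ m'.length = k + 1 := by
    by_contra! hcon
    refine hm (map_eq_zero_of_gen (fun m' hm' => ?_) (mem_supportedOn_and
      (homotopy_isNearId he hQe m hsmall.1) (homotopy_gen_mem_length hQ m)))
    rw [linearCombination_gen]
    by_contra hne
    exact hcon m' hne hm'.1 (by omega)
  obtain ⟨w, hw⟩ := List.exists_mem_of_length_pos (l := m') (by omega)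
  have hwS := hS m' ((hnear.isSmall hsmall.1).mono hδe) hlen hcm' w hw
  obtain ⟨u, hu, hwu⟩ := hnear w hw
  refine Metric.mem_thickening_iff.2 ⟨w, hwS, ?_⟩
  linarith [hsmall.1 v hv u hu, dist_triangle v u w, dist_comm u w]

theorem ApproxDimLE.exists_coboundaryEq (hX : ApproxDimLE R X n) (hε : 0 < ε)
    (hc : CoboundaryEq ε (n + 3) c 0)
    (hS : ∀ m, IsSmall ε m → m.length = n + 2 → c m ≠ 0 → ∀ v ∈ m, v ∈ S) (hρ : 0 < ρ) :
    ∃ δ > 0, δ ≤ ρ ∧ δ ≤ ε ∧ ∃ b : List X → R, CoboundaryEq δ (n + 2) b c ∧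
      IsSupportedIn b (Metric.thickening ρ S) := by
  have he : 0 < min (ε / 4) (ρ / 2) := by positivity
  have heε := min_le_left (ε / 4) (ρ / 2)
  have heρ := min_le_right (ε / 4) (ρ / 2)
  obtain ⟨d, hd, Q, hQ, hQe, hQ₀⟩ := hX _ he
  set e := min (ε / 4) (ρ / 2)
  have hde := min_le_right d e
  have hQe' : IsNearId (min d e) e Q := fun l hl => hQe l (hl.mono (min_le_left _ _))
  refine ⟨min d e, by positivity, by linarith, by linarith, homotopyCochain (min d e) (n + 1) Q c,
    fun l hl hlen => ?_, isSupportedIn_homotopyCochain hQ hQe' he (by linarith) (by linarith) hS⟩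
  rw [← hc.apply_add_homotopyCochain hQ hQe' he (by linarith) hl hlen,
    hQ₀ l (hl.mono (min_le_left _ _)) (by omega), map_zero, zero_add]

end CoboundaryEquation

section IntegralCochains

variable {X : Type*} [MetricSpace X] {n : ℕ} {S : Set X} {ε δ ρ : ℝ} {c : List X → ℤ}

theorem exists_finite_range_dist_lt [CompactSpace X] (hρ : 0 < ρ) :
    ∃ φ : X → X, (range φ).Finite ∧ ∀ x, dist (φ x) x < ρ := by
  obtain ⟨t, -, ht, hcover⟩ := (isCompact_univ (X := X)).finite_cover_balls hρ
  have hnet (x : X) : ∃ y ∈ t, dist y x < ρ := by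
    obtain ⟨y, hy, hx⟩ := mem_iUnion₂.1 (hcover (mem_univ x))
    exact ⟨y, hy, Metric.mem_ball'.1 hx⟩
  choose φ hφt hφ using hnet
  exact ⟨φ, ht.subset (range_subset_iff.2 hφt), hφ⟩

theorem exists_intCast_eq_natCast_mul {α : Type*} (T : Finset α) (q : α → ℚ) :
    ∃ M : ℕ, 0 < M ∧ ∃ z : α → ℤ, (∀ a ∈ T, (z a : ℚ) = M * q a) ∧ ∀ a ∉ T, z a = 0 := by
  classical
  refine ⟨∏ a ∈ T, (q a).den, Finset.prod_pos fun a _ => (q a).den_pos,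
    fun a => if a ∈ T then (∏ a ∈ T.erase a, (q a).den : ℕ) * (q a).num else 0,
    fun a ha => ?_, fun a ha => if_neg ha⟩
  simp only [if_pos ha]
  rw [← Finset.mul_prod_erase T _ ha]
  push_cast
  rw [mul_comm, mul_right_comm, mul_comm _ (q a), Rat.mul_den_eq_num]

theorem CoboundaryEq.exists_int_natCast_mul {q : List X → ℚ} {k : ℕ}
    (hq : CoboundaryEq δ (k + 1) q (fun m => c m)) {φ : X → X} (hfin : (range φ).Finite) :
    ∃ M : ℕ, 0 < M ∧ ∃ z : List X → ℤ, (∀ m, z m ≠ 0 → q m ≠ 0) ∧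
      ∀ l : List X, IsSmall δ (l.map φ) → l.length = k + 1 →
        linearCombination ℤ z (boundary (gen ℤ (l.map φ))) = M * c (l.map φ) := by
  have hT := finite_setOf_length_eq_forall_mem hfin k
  obtain ⟨M, hM, z, hz, hz₀⟩ := exists_intCast_eq_natCast_mul hT.toFinset q
  simp only [Finite.mem_toFinset] at hz hz₀
  refine ⟨M, hM, z, fun m hm hqm => hm ?_, fun l hl hlen => ?_⟩
  · have h := hz m (not_imp_comm.1 (hz₀ m) hm)
    rw [hqm, mul_zero] at h
    exact_mod_cast h
  · have h := linearCombination_boundary_ringHom (Int.castRingHom ℚ) z (l.map φ)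
    rw [linearCombination_boundary_congr (c' := fun m => M * q m), linearCombination_mul,
      hq _ hl (by simpa using hlen), eq_intCast] at h
    · exact Int.cast_injective (α := ℚ) (h.symm.trans (by push_cast; rfl))
    · refine fun m hm hml => hz m ⟨by simp_all, fun v hv => ?_⟩
      exact (List.mem_map.1 (hml.subset hv)).imp fun _ h => h.2

theorem ApproxDimLE.exists_coboundaryEq_natCast_mul [CompactSpace X] (hX : ApproxDimLE ℚ X n)
    (hε : 0 < ε) (hc : CoboundaryEq ε (n + 3) c 0)
    (hS : ∀ m, IsSmall ε m → m.length = n + 2 → c m ≠ 0 → ∀ v ∈ m, v ∈ S) (hρ : 0 < ρ) :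
    ∃ δ > 0, ∃ M : ℕ, 0 < M ∧ ∃ b : List X → ℤ, CoboundaryEq δ (n + 2) b (fun l => M * c l) ∧
      IsSupportedIn b (Metric.thickening ρ S) := by
  obtain ⟨d, hd, hdρ, hdε, q, hq, hqS⟩ := hX.exists_coboundaryEq hε
    (c := fun m => (c m : ℚ)) (fun l hl hlen => by simpa using hc.map (Int.castRingHom ℚ) l hl hlen)
    (fun m hm hlen hcm => hS m hm hlen (by exact_mod_cast hcm)) (half_pos hρ)
  obtain ⟨φ, hfin, hφ⟩ := exists_finite_range_dist_lt (X := X) (ρ := d / 8) (by positivity)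
  have hnear (l : List X) : IsNear (d / 8) l (l.map φ) := isNear_of_mem_map hφ fun y hy => hy
  have hφnear : IsNearId (d / 8) (d / 8) (vertexMap (R := ℤ) φ) := fun l _ => by
    rw [vertexMap_gen]
    exact gen_mem_supportedOn (hnear l)
  obtain ⟨M, hM, z, hzq, hz⟩ := hq.exists_int_natCast_mul hfin
  set h := homotopyCochain (d / 8) (n + 1) (vertexMap φ) c with hh
  refine ⟨d / 8, by positivity, M, hM, fun m => z (m.map φ) + M * h m, fun l hl hlen => ?_,
    fun m hm v hv => ?_⟩
  · have hsum : linearCombination ℤ (fun m => z (m.map φ) + M * h m) =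
        linearCombination ℤ z ∘ₗ vertexMap φ + (M : ℤ) • linearCombination ℤ h :=
      linearMap_ext_gen fun m => by simp [vertexMap_gen]
    have hprim := hc.apply_add_homotopyCochain (isChainMap_vertexMap φ) hφnear (by positivity)
      (by linarith) hl hlen
    rw [vertexMap_gen, linearCombination_gen] at hprim
    rw [hsum, LinearMap.add_apply, LinearMap.comp_apply, LinearMap.smul_apply,
      ← (isChainMap_vertexMap φ).boundary_map, vertexMap_gen,
      hz l (((hnear l).isSmall hl).mono (by linarith)) hlen, smul_eq_mul, ← mul_add, hprim]
  · by_cases hzm : z (m.map φ) = 0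
    · exact isSupportedIn_homotopyCochain (isChainMap_vertexMap φ) hφnear (by positivity)
        (by linarith) (by linarith) hS m (fun h₀ => hm (by simp [hzm, hh, h₀])) v hv
    · obtain ⟨s, hs, hvs⟩ := Metric.mem_thickening_iff.1
        (hqS _ (hzq _ hzm) (φ v) (List.mem_map_of_mem hv))
      refine Metric.mem_thickening_iff.2 ⟨s, hs, ?_⟩
      linarith [dist_triangle v (φ v) s, hφ v, dist_comm v (φ v)]

open Classical in
/-- The cochain `(b - ∂e) / p`, restricted to `δ`-small simplices with `k` vertices. It is used when
`p` divides `b - ∂e` there, so that the integer division is exact. -/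
noncomputable def divCochain (δ : ℝ) (k : ℕ) (p : ℤ) (b e : List X → ℤ) (m : List X) : ℤ :=
  if IsSmall δ m ∧ m.length = k then (b m - linearCombination ℤ e (boundary (gen ℤ m))) / p else 0

variable {b e : List X → ℤ} {k : ℕ}

theorem CoboundaryEq.divCochain {p : ℤ} (hp : p ≠ 0)
    (hb : CoboundaryEq δ (k + 1) b (fun l => p * c l))
    (hdvd : ∀ m, IsSmall δ m → m.length = k →
      p ∣ b m - linearCombination ℤ e (boundary (gen ℤ m))) :
    CoboundaryEq δ (k + 1) (divCochain δ k p b e) c := by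
  intro l hl hlen
  refine mul_left_cancel₀ hp ?_
  refine Eq.trans ?_ (hb l hl hlen)
  rw [← sub_zero (linearCombination ℤ b _), ← map_zero (linearCombination ℤ e),
    ← boundary_boundary (gen ℤ l)]
  refine map_eq_of_gen (f := p • linearCombination ℤ _)
    (g := linearCombination ℤ b - linearCombination ℤ e ∘ₗ boundary) (fun m hm => ?_)
    (boundary_gen_mem (R := ℤ) l)
  have hsmall : IsSmall δ m ∧ m.length = k := ⟨hl.subset hm.2.subset, by omega⟩
  rw [LinearMap.smul_apply, LinearMap.sub_apply, LinearMap.comp_apply, linearCombination_gen,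
    linearCombination_gen, MeanDimPaper.divCochain, if_pos hsmall, smul_eq_mul,
    Int.mul_ediv_cancel' (hdvd m hsmall.1 hsmall.2)]

theorem isSupportedIn_divCochain {p : ℤ} (hk : 2 ≤ k) (hρ : 0 < ρ) (hδ : δ ≤ ρ / 2)
    (hb : IsSupportedIn b S) (he : IsSupportedIn e (Metric.thickening (ρ / 2) S)) :
    IsSupportedIn (divCochain δ k p b e) (Metric.thickening ρ S) := by
  intro m hm v hv
  have hsmall : IsSmall δ m ∧ m.length = k := by
    by_contra hcon
    exact hm (if_neg hcon)
  rw [divCochain, if_pos hsmall] at hm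
  by_cases hbm : b m = 0
  · obtain ⟨m', hem', hlen, hsub⟩ : ∃ m', e m' ≠ 0 ∧ m'.length + 1 = m.length ∧ m'.Sublist m := by
      by_contra! hcon
      refine hm ?_
      rw [hbm, map_eq_zero_of_gen (f := linearCombination ℤ e) (fun m' hm' => ?_)
        (boundary_gen_mem (R := ℤ) m), sub_zero, Int.zero_ediv]
      rw [linearCombination_gen]
      by_contra hne
      exact hcon m' hne hm'.1 hm'.2
    obtain ⟨w, hw⟩ := List.exists_mem_of_length_pos (l := m') (by omega)
    obtain ⟨s, hs, hws⟩ := Metric.mem_thickening_iff.1 (he m' hem' w hw)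
    refine Metric.mem_thickening_iff.2 ⟨s, hs, ?_⟩
    linarith [hsmall.1 v hv w (hsub.subset hw), dist_triangle v w s]
  · exact Metric.self_subset_thickening hρ S (hb m hbm v hv)

theorem ApproxDimLE.exists_coboundaryEq_of_prime_mul {p : ℕ} [Fact p.Prime]
    (hX : ApproxDimLE (ZMod p) X n) {M : ℕ} (hδ : 0 < δ)
    (hb : CoboundaryEq δ (n + 3) b (fun l => (p * M : ℕ) * c l)) (hS : IsSupportedIn b S)
    (hρ : 0 < ρ) :
    ∃ δ > 0, ∃ b : List X → ℤ, CoboundaryEq δ (n + 3) b (fun l => M * c l) ∧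
      IsSupportedIn b (Metric.thickening ρ S) := by
  obtain ⟨d, hd, hdρ, hdδ, e, he, heS⟩ := hX.exists_coboundaryEq
    (c := fun m => (b m : ZMod p)) hδ
    (fun l hl hlen => by simpa using hb.map (Int.castRingHom (ZMod p)) l hl hlen)
    (fun m _ _ hbm => hS m fun h => hbm (by simp [h])) (half_pos hρ)
  have hdvd (m) (hm : IsSmall d m) (hlen : m.length = n + 2) :
      (p : ℤ) ∣ b m - linearCombination ℤ (fun m => ((e m).val : ℤ)) (boundary (gen ℤ m)) := by
    have h := linearCombination_boundary_ringHom (Int.castRingHom (ZMod p))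
      (fun m => ((e m).val : ℤ)) m
    have hlift : (fun m => Int.castRingHom (ZMod p) (e m).val) = e := by
      funext m
      simp
    rw [hlift, he m hm hlen, eq_intCast] at h
    rw [← ZMod.intCast_zmod_eq_zero_iff_dvd, Int.cast_sub, ← h, sub_self]
  refine ⟨d, hd, divCochain d (n + 2) p b fun m => (e m).val, ?_, ?_⟩
  · refine CoboundaryEq.divCochain (by exact_mod_cast (Fact.out : p.Prime).ne_zero) ?_ hdvd
    simpa only [Nat.cast_mul, mul_assoc] using hb.mono hdδ
  · exact isSupportedIn_divCochain (by omega) hρ hdρ hS fun m hm => heS m fun h => hm (by simp [h])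

theorem exists_coboundaryEq_of_natCast_mul
    (hX : ∀ p : ℕ, [Fact p.Prime] → ApproxDimLE (ZMod p) X n) {M : ℕ} (hM : 0 < M) (hδ : 0 < δ)
    (hb : CoboundaryEq δ (n + 3) b (fun l => M * c l)) (hS : IsSupportedIn b S) (hρ : 0 < ρ) :
    ∃ δ > 0, ∃ b : List X → ℤ, CoboundaryEq δ (n + 3) b c ∧
      IsSupportedIn b (Metric.thickening ρ S) := by
  induction M using induction_on_primes generalizing b δ S ρ with
  | zero => omega
  | one =>
    exact ⟨δ, hδ, b, by simpa using hb,
      fun m hm v hv => Metric.self_subset_thickening hρ S (hS m hm v hv)⟩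
  | prime_mul p M hp ih =>
    have := Fact.mk hp
    obtain ⟨δ₁, hδ₁, b₁, hb₁, hS₁⟩ := (hX p).exists_coboundaryEq_of_prime_mul hδ hb hS (half_pos hρ)
    obtain ⟨δ₂, hδ₂, b₂, hb₂, hS₂⟩ := ih (Nat.pos_of_mul_pos_left hM) hδ₁ hb₁ hS₁ (half_pos hρ)
    refine ⟨δ₂, hδ₂, b₂, hb₂, fun m hm v hv => ?_⟩
    simpa only [add_halves] using Metric.thickening_thickening_subset _ _ _ (hS₂ m hm v hv)

-- By the universal coefficient theorem, passing from all prime fields to `ℤ` costs one degree.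
theorem exists_int_coboundaryEq [CompactSpace X] (hℚ : ApproxDimLE ℚ X n)
    (hX : ∀ p : ℕ, [Fact p.Prime] → ApproxDimLE (ZMod p) X n) (hε : 0 < ε)
    (hc : CoboundaryEq ε (n + 4) c 0)
    (hS : ∀ m, IsSmall ε m → m.length = n + 3 → c m ≠ 0 → ∀ v ∈ m, v ∈ S) (hρ : 0 < ρ) :
    ∃ δ > 0, ∃ b : List X → ℤ, CoboundaryEq δ (n + 3) b c ∧
      IsSupportedIn b (Metric.thickening ρ S) := by
  obtain ⟨δ₁, hδ₁, M, hM, b₁, hb₁, hS₁⟩ :=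
    (hℚ.mono n.le_succ).exists_coboundaryEq_natCast_mul hε hc hS (half_pos hρ)
  obtain ⟨δ₂, hδ₂, b₂, hb₂, hS₂⟩ :=
    exists_coboundaryEq_of_natCast_mul hX hM hδ₁ hb₁ hS₁ (half_pos hρ)
  refine ⟨δ₂, hδ₂, b₂, hb₂, fun m hm v hv => ?_⟩
  simpa only [add_halves] using Metric.thickening_thickening_subset _ _ _ (hS₂ m hm v hv)

end IntegralCochains

section HornFilling

variable {E : Type*} [TopologicalSpace E]

/-- The standard simplex with `m` vertices. -/
abbrev simplex (m : ℕ) : Set (Fin m → ℝ) := stdSimplex ℝ (Fin m)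

-- Subtract the smallest coordinate other than `t i` from these coordinates and give it to `t i`.
theorem exists_horn_retraction {m : ℕ} (hm : 1 ≤ m) (i : Fin (m + 1)) :
    ∃ r : (Fin (m + 1) → ℝ) → (Fin (m + 1) → ℝ), Continuous r ∧
      (∀ t ∈ simplex (m + 1), r t ∈ simplex (m + 1)) ∧
      (∀ t ∈ simplex (m + 1), ∃ j ≠ i, r t j = 0) ∧
      ∀ t ∈ simplex (m + 1), ∀ j ≠ i, t j = 0 → r t = t := by
  have hne : (Finset.univ.erase i).Nonempty := by
    rw [← Finset.card_pos, Finset.card_erase_of_mem (Finset.mem_univ i), Finset.card_fin]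
    omega
  set μ : (Fin (m + 1) → ℝ) → ℝ := fun t => (Finset.univ.erase i).inf' hne t
  have hμ_cont : Continuous μ :=
    Continuous.finset_inf'_apply hne fun j _ => continuous_apply j
  have hμ_le (t) (j) (hj : j ≠ i) : μ t ≤ t j :=
    Finset.inf'_le _ (Finset.mem_erase.2 ⟨hj, Finset.mem_univ j⟩)
  have hμ_nonneg (t) (ht : t ∈ simplex (m + 1)) : 0 ≤ μ t := Finset.le_inf' _ _ fun j _ => ht.1 j
  refine ⟨fun t j => if j = i then t i + m * μ t else t j - μ t, ?_, fun t ht => ⟨fun j => ?_, ?_⟩,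
    fun t _ => ?_, fun t ht j hj htj => ?_⟩
  · refine continuous_pi fun j => ?_
    by_cases h : j = i
    · simp only [h, if_true]
      fun_prop
    · simp only [h, if_false]
      fun_prop
  · by_cases h : j = i
    · simp only [h, if_true]
      have := ht.1 i
      have := hμ_nonneg t ht
      positivity
    · simp only [h, if_false]
      linarith [hμ_le t j h]
  · dsimp only
    rw [← Finset.add_sum_erase _ _ (Finset.mem_univ i), if_pos rfl,
      Finset.sum_congr rfl fun j hj => if_neg (Finset.ne_of_mem_erase hj),
      Finset.sum_sub_distrib, Finset.sum_const, Finset.card_erase_of_mem (Finset.mem_univ i),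
      Finset.card_fin, Nat.add_sub_cancel, nsmul_eq_mul, add_add_sub_cancel,
      Finset.add_sum_erase _ _ (Finset.mem_univ i), ht.2]
  · obtain ⟨j, hj, hμj⟩ := Finset.exists_mem_eq_inf' hne t
    refine ⟨j, Finset.ne_of_mem_erase hj, ?_⟩
    dsimp only
    rw [if_neg (Finset.ne_of_mem_erase hj), show μ t = t j from hμj, sub_self]
  · have hμt : μ t = 0 := le_antisymm (htj ▸ hμ_le t j hj) (hμ_nonneg t ht)
    funext l
    by_cases h : l = i <;> simp [h, hμt]

theorem exists_horn_filling {m : ℕ} (hm : 1 ≤ m) (i : Fin (m + 1)) {S : Set E}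
    (f : Fin (m + 1) → (Fin (m + 1) → ℝ) → E)
    (hf : ∀ j ≠ i, ContinuousOn (f j) (simplex (m + 1) ∩ {t | t j = 0}))
    (hS : ∀ j ≠ i, ∀ t ∈ simplex (m + 1), t j = 0 → f j t ∈ S)
    (hagree : ∀ j ≠ i, ∀ l ≠ i, ∀ t ∈ simplex (m + 1), t j = 0 → t l = 0 → f j t = f l t) :
    ∃ F : (Fin (m + 1) → ℝ) → E, ContinuousOn F (simplex (m + 1)) ∧
      (∀ t ∈ simplex (m + 1), F t ∈ S) ∧
      ∀ j ≠ i, ∀ t ∈ simplex (m + 1), t j = 0 → F t = f j t := by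
  classical
  obtain ⟨r, hr, hr_mem, hr_zero, hr_id⟩ := exists_horn_retraction hm i
  let h : (Fin (m + 1) → ℝ) → E := fun t =>
    if H : ∃ j, j ≠ i ∧ t j = 0 then f H.choose t else f i t
  have h_eq (j) (hj : j ≠ i) (t) (ht : t ∈ simplex (m + 1)) (htj : t j = 0) : h t = f j t := by
    have H : ∃ j, j ≠ i ∧ t j = 0 := ⟨j, hj, htj⟩
    simp only [h, dif_pos H]
    exact hagree _ H.choose_spec.1 _ hj t ht H.choose_spec.2 htj
  have h_cont : ContinuousOn h (⋃ j : {j // j ≠ i}, simplex (m + 1) ∩ {t | t j = 0}) := by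
    refine LocallyFinite.continuousOn_iUnion (locallyFinite_of_finite _) (fun j => ?_) ?_
    · exact (isClosed_stdSimplex ℝ _).inter (isClosed_eq (continuous_apply _) continuous_const)
    · rintro ⟨j, hj⟩
      exact (hf j hj).congr fun t ht => h_eq j hj t ht.1 ht.2
  refine ⟨h ∘ r, h_cont.comp hr.continuousOn fun t ht => ?_, fun t ht => ?_,
    fun j hj t ht htj => ?_⟩
  · obtain ⟨j, hj, hrj⟩ := hr_zero t ht
    exact mem_iUnion.2 ⟨⟨j, hj⟩, hr_mem t ht, hrj⟩
  · obtain ⟨j, hj, hrj⟩ := hr_zero t ht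
    rw [Function.comp_apply, h_eq j hj _ (hr_mem t ht) hrj]
    exact hS j hj _ (hr_mem t ht) hrj
  · rw [Function.comp_apply, hr_id t ht j hj htj, h_eq j hj t ht htj]

/-- A singular simplex in `S` with `n` vertices that sends its whole boundary to `y₀`; these
represent the elements of `π_(n-1)(S, y₀)`. -/
structure IsSpheroid (S : Set E) (y₀ : E) (n : ℕ) (x : (Fin n → ℝ) → E) : Prop where
  continuousOn : ContinuousOn x (simplex n)
  mem : ∀ t ∈ simplex n, x t ∈ S
  eq_of_apply_eq_zero : ∀ t ∈ simplex n, ∀ i, t i = 0 → x t = y₀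

/-- `F` is a singular simplex in `S` whose faces are the singular simplices `R i`. -/
structure IsFilling (S : Set E) (n : ℕ) (R : Fin (n + 1) → (Fin n → ℝ) → E)
    (F : (Fin (n + 1) → ℝ) → E) : Prop where
  continuousOn : ContinuousOn F (simplex (n + 1))
  mem : ∀ t ∈ simplex (n + 1), F t ∈ S
  eq_of_apply_eq_zero : ∀ i, ∀ t ∈ simplex (n + 1), t i = 0 → F t = R i (t ∘ i.succAbove)

/-- The singular simplices `R i` are the faces of a singular simplex in `S`. -/
def IsFillable (S : Set E) (n : ℕ) (R : Fin (n + 1) → (Fin n → ℝ) → E) : Prop :=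
  ∃ F, IsFilling S n R F

theorem comp_succAbove_mem_simplex {m : ℕ} {t : Fin (m + 1) → ℝ} (ht : t ∈ simplex (m + 1))
    {i : Fin (m + 1)} (h : t i = 0) : t ∘ i.succAbove ∈ simplex m := by
  have hsum := ht.2
  rw [Fin.sum_univ_succAbove _ i, h, zero_add] at hsum
  exact ⟨fun j => ht.1 _, hsum⟩

theorem insertNth_zero_mem_simplex {m : ℕ} {t : Fin m → ℝ} (ht : t ∈ simplex m)
    (i : Fin (m + 1)) : (i.insertNth 0 t : Fin (m + 1) → ℝ) ∈ simplex (m + 1) := by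
  refine ⟨fun j => ?_, ?_⟩
  · rcases Fin.eq_self_or_eq_succAbove i j with rfl | ⟨j, rfl⟩
    · rw [Fin.insertNth_apply_same]
    · simpa only [Fin.insertNth_apply_succAbove] using ht.1 j
  · simpa [Fin.sum_univ_succAbove _ i] using ht.2

theorem continuous_insertNth_zero {m : ℕ} (i : Fin (m + 1)) :
    Continuous fun t : Fin m → ℝ => (i.insertNth 0 t : Fin (m + 1) → ℝ) :=
  Continuous.finInsertNth i continuous_const continuous_id

theorem insertNth_zero_comp_succAbove {m : ℕ} {t : Fin (m + 1) → ℝ} {i : Fin (m + 1)}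
    (h : t i = 0) : (i.insertNth 0 (t ∘ i.succAbove) : Fin (m + 1) → ℝ) = t := by
  rw [← h]
  exact Fin.insertNth_self_removeNth i t

variable {S : Set E} {y₀ : E} {n : ℕ}

theorem IsSpheroid.comp_succAbove_eq {x : (Fin n → ℝ) → E} (hx : IsSpheroid S y₀ n x)
    {t : Fin (n + 1) → ℝ} (ht : t ∈ simplex (n + 1)) {j l : Fin (n + 1)} (hlj : l ≠ j)
    (hj : t j = 0) (hl : t l = 0) : x (t ∘ j.succAbove) = y₀ := by
  obtain ⟨p, rfl⟩ := Fin.exists_succAbove_eq hlj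
  exact hx.eq_of_apply_eq_zero _ (comp_succAbove_mem_simplex ht hj) p hl

theorem exists_isSpheroid_isFillable_update (hn : 1 ≤ n) (R : Fin (n + 1) → (Fin n → ℝ) → E)
    (i : Fin (n + 1)) (hR : ∀ j ≠ i, IsSpheroid S y₀ n (R j)) :
    ∃ x, IsSpheroid S y₀ n x ∧ IsFillable S n (Function.update R i x) := by
  obtain ⟨F, hF, hFS, hFR⟩ := exists_horn_filling hn i (S := S) (fun j t => R j (t ∘ j.succAbove))
    (fun j hj => (hR j hj).continuousOn.comp (Pi.continuous_precomp j.succAbove).continuousOn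
      fun t ht => comp_succAbove_mem_simplex ht.1 ht.2)
    (fun j hj t ht htj => (hR j hj).mem _ (comp_succAbove_mem_simplex ht htj))
    (fun j hj l hl t ht htj htl => by
      obtain rfl | hjl := eq_or_ne j l
      · rfl
      · rw [(hR j hj).comp_succAbove_eq ht hjl.symm htj htl,
          (hR l hl).comp_succAbove_eq ht hjl htl htj])
  refine ⟨fun s => F (i.insertNth 0 s), ⟨?_, ?_, ?_⟩, F, hF, hFS, fun j t ht htj => ?_⟩
  · exact hF.comp (continuous_insertNth_zero i).continuousOn
      fun t ht => insertNth_zero_mem_simplex ht i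
  · exact fun t ht => hFS _ (insertNth_zero_mem_simplex ht i)
  · intro t ht p hp
    have hne : i.succAbove p ≠ i := Fin.succAbove_ne i p
    rw [hFR _ hne _ (insertNth_zero_mem_simplex ht i) (by simpa using hp)]
    exact (hR _ hne).comp_succAbove_eq (insertNth_zero_mem_simplex ht i) hne.symm
      (by simpa using hp) (by simp)
  · obtain rfl | hji := eq_or_ne j i
    · rw [Function.update_self, insertNth_zero_comp_succAbove htj]
    · rw [Function.update_of_ne hji]
      exact hFR j hji t ht htj

theorem range_succAbove_comp_succAbove (j : Fin (n + 2)) (p : Fin (n + 1)) :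
    range (j.succAbove ∘ p.succAbove) = {j, j.succAbove p}ᶜ := by
  rw [range_comp, Fin.range_succAbove]
  ext x
  simp only [mem_image, mem_compl_iff, mem_singleton_iff, mem_insert_iff, not_or]
  constructor
  · rintro ⟨y, hy, rfl⟩
    exact ⟨Fin.succAbove_ne _ _, fun h => hy (Fin.succAbove_right_injective h)⟩
  · rintro ⟨hxj, hxp⟩
    obtain ⟨y, rfl⟩ := Fin.exists_succAbove_eq hxj
    exact ⟨y, fun h => hxp (h ▸ rfl), rfl⟩

theorem succAbove_comp_succAbove_eq {j l : Fin (n + 2)} {p q : Fin (n + 1)}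
    (hp : j.succAbove p = l) (hq : l.succAbove q = j) :
    j.succAbove ∘ p.succAbove = l.succAbove ∘ q.succAbove := by
  refine (StrictMono.range_inj ?_ ?_).1 ?_
  · exact (Fin.strictMono_succAbove j).comp (Fin.strictMono_succAbove p)
  · exact (Fin.strictMono_succAbove l).comp (Fin.strictMono_succAbove q)
  · rw [range_succAbove_comp_succAbove, range_succAbove_comp_succAbove, hp, hq, pair_comm]

theorem isFillable_of_forall_ne (a : Fin (n + 2) → Fin (n + 2) → (Fin n → ℝ) → E)
    (hsymm : ∀ j l, a j l = a l j) (i : Fin (n + 2))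
    (h : ∀ j ≠ i, IsFillable S n fun p => a j (j.succAbove p)) :
    IsFillable S n fun p => a i (i.succAbove p) := by
  have : Nonempty E := ⟨a i i 0⟩
  choose! F hF using h
  have hagree (j l : Fin (n + 2)) (p q : Fin (n + 1)) (hp : j.succAbove p = l)
      (hq : l.succAbove q = j) (t : Fin (n + 2) → ℝ) :
      a j (j.succAbove p) ((t ∘ j.succAbove) ∘ p.succAbove) =
        a l (l.succAbove q) ((t ∘ l.succAbove) ∘ q.succAbove) := by
    rw [Function.comp_assoc, Function.comp_assoc, succAbove_comp_succAbove_eq hp hq, hp, hq, hsymm]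
  obtain ⟨H, hH, hHS, hHF⟩ := exists_horn_filling (by omega : 1 ≤ n + 1) i (S := S)
    (fun j t => F j (t ∘ j.succAbove))
    (fun j hj => (hF j hj).continuousOn.comp (Pi.continuous_precomp j.succAbove).continuousOn
      fun t ht => comp_succAbove_mem_simplex ht.1 ht.2)
    (fun j hj t ht htj => (hF j hj).mem _ (comp_succAbove_mem_simplex ht htj))
    (fun j hj l hl t ht htj htl => by
      obtain rfl | hjl := eq_or_ne j l
      · rfl
      · obtain ⟨p, hp⟩ := Fin.exists_succAbove_eq hjl.symm
        obtain ⟨q, hq⟩ := Fin.exists_succAbove_eq hjl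
        rw [(hF j hj).eq_of_apply_eq_zero p _ (comp_succAbove_mem_simplex ht htj)
            (by simpa [hp] using htl),
          (hF l hl).eq_of_apply_eq_zero q _ (comp_succAbove_mem_simplex ht htl)
            (by simpa [hq] using htj),
          hagree j l p q hp hq])
  refine ⟨fun s => H (i.insertNth 0 s), hH.comp (continuous_insertNth_zero i).continuousOn
    fun t ht => insertNth_zero_mem_simplex ht i,
    fun t ht => hHS _ (insertNth_zero_mem_simplex ht i), fun p t ht htp => ?_⟩
  have hne : i.succAbove p ≠ i := Fin.succAbove_ne i p
  have hmem := insertNth_zero_mem_simplex ht i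
  obtain ⟨q, hq⟩ := Fin.exists_succAbove_eq hne.symm
  rw [hHF _ hne _ hmem (by simpa using htp),
    (hF _ hne).eq_of_apply_eq_zero q _ (comp_succAbove_mem_simplex hmem (by simpa using htp))
      (by simp [hq]),
    hagree _ i q p hq rfl]
  congr 2
  funext x
  simp

end HornFilling

section SymmetricMatrices

/-- The `j`-th row, without its diagonal entry, of the symmetric matrix with upper triangle `A`. -/
def symmRow (A : ℕ → ℕ → ℤ) (j q : ℕ) : ℤ := if q < j then A q j else A j (q + 1)

/-- The row with entries `w`, `x`, `y`, `z` from position `p` on and zeros elsewhere. -/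
def quadRow (p : ℕ) (w x y z : ℤ) (q : ℕ) : ℤ :=
  if q = p then w else if q = p + 1 then x else if q = p + 2 then y else if q = p + 3 then z else 0

theorem quadRow_zero_cons (p : ℕ) (x y z : ℤ) : quadRow p 0 x y z = quadRow (p + 1) x y z 0 := by
  funext q
  simp only [quadRow]
  split_ifs <;> omega

/-- The upper triangle of a matrix of size five, numbered from `0`. -/
def upperTriangle (a₀₁ a₀₂ a₀₃ a₀₄ a₁₂ a₁₃ a₁₄ a₂₃ a₂₄ a₃₄ : ℤ) : ℕ → ℕ → ℤ
  | 0, 1 => a₀₁ | 0, 2 => a₀₂ | 0, 3 => a₀₃ | 0, 4 => a₀₄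
  | 1, 2 => a₁₂ | 1, 3 => a₁₃ | 1, 4 => a₁₄
  | 2, 3 => a₂₃ | 2, 4 => a₂₄
  | 3, 4 => a₃₄
  | _, _ => 0

/-- The upper triangle of the matrix in which the block of size five with upper triangle `a` starts
at position `p` of the diagonal, all other entries being zero. -/
def blockMatrix (p : ℕ) (a : ℕ → ℕ → ℤ) (i j : ℕ) : ℤ :=
  if p ≤ i ∧ j ≤ p + 4 then a (i - p) (j - p) else 0

theorem symmRow_blockMatrix_add (p : ℕ) (a : ℕ → ℕ → ℤ) {k : ℕ} (hk : k ≤ 4) :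
    symmRow (blockMatrix p a) (p + k) =
      quadRow p (symmRow a k 0) (symmRow a k 1) (symmRow a k 2) (symmRow a k 3) := by
  funext q
  simp only [symmRow, blockMatrix, quadRow]
  obtain hq | ⟨l, rfl⟩ := q.lt_or_ge p |>.imp_right Nat.exists_eq_add_of_le
  · split_ifs <;> omega
  · simp only [add_lt_add_iff_left, add_tsub_cancel_left, add_assoc]
    by_cases hl : 3 < l
    · split_ifs <;> omega
    · interval_cases l <;> split_ifs <;> omega

theorem symmRow_blockMatrix_of_notMem (p : ℕ) (a : ℕ → ℕ → ℤ) {j : ℕ} (h : j < p ∨ p + 4 < j) :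
    symmRow (blockMatrix p a) j = 0 := by
  funext q
  simp only [symmRow, blockMatrix, Pi.zero_apply]
  split_ifs <;> omega

/-- The five nonzero rows of the symmetric matrix with upper triangle
`blockMatrix p (upperTriangle a₀₁ ⋯ a₃₄)`. -/
def blockRows (p : ℕ) (a₀₁ a₀₂ a₀₃ a₀₄ a₁₂ a₁₃ a₁₄ a₂₃ a₂₄ a₃₄ : ℤ) : Fin 5 → ℕ → ℤ :=
  ![quadRow p a₀₁ a₀₂ a₀₃ a₀₄, quadRow p a₀₁ a₁₂ a₁₃ a₁₄, quadRow p a₀₂ a₁₂ a₂₃ a₂₄,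
    quadRow p a₀₃ a₁₃ a₂₃ a₃₄, quadRow p a₀₄ a₁₄ a₂₄ a₃₄]

theorem symmRow_blockMatrix_upperTriangle (p : ℕ)
    (a₀₁ a₀₂ a₀₃ a₀₄ a₁₂ a₁₃ a₁₄ a₂₃ a₂₄ a₃₄ : ℤ) (i : Fin 5) :
    symmRow (blockMatrix p (upperTriangle a₀₁ a₀₂ a₀₃ a₀₄ a₁₂ a₁₃ a₁₄ a₂₃ a₂₄ a₃₄)) (p + i) =
      blockRows p a₀₁ a₀₂ a₀₃ a₀₄ a₁₂ a₁₃ a₁₄ a₂₃ a₂₄ a₃₄ i := by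
  rw [symmRow_blockMatrix_add p _ (by omega)]
  fin_cases i <;> rfl

/-- A property `P` of integer vectors `r 0, …, r n` that holds for the vectors with two equal
adjacent entries and zeros elsewhere and that passes to any row of a symmetric matrix of size
`n + 2` from all the other ones.  In the application `P r` says that a sphere whose faces are the
multiples `r i • α` of an element `α` of a homotopy group can be filled. -/
structure IsKanClosed (n : ℕ) (P : (ℕ → ℤ) → Prop) : Prop where
  of_eq : ∀ {r r' : ℕ → ℤ}, P r → (∀ p ≤ n, r p = r' p) → P r'
  kan : ∀ (A : ℕ → ℕ → ℤ) (i : ℕ), i ≤ n + 1 →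
    (∀ j ≤ n + 1, j ≠ i → P (symmRow A j)) → P (symmRow A i)
  pair : ∀ (i : ℕ) (m : ℤ), i + 1 ≤ n → P (quadRow i m m 0 0)

variable {n : ℕ} {P : (ℕ → ℤ) → Prop}

theorem IsKanClosed.zero (hP : IsKanClosed n P) (hn : 1 ≤ n) : P 0 :=
  hP.of_eq (hP.pair 0 0 hn) fun p _ => by simp [quadRow]

theorem IsKanClosed.of_blockRows (hP : IsKanClosed n P) {p : ℕ} (hp : p + 3 ≤ n)
    (a₀₁ a₀₂ a₀₃ a₀₄ a₁₂ a₁₃ a₁₄ a₂₃ a₂₄ a₃₄ : ℤ) (i : Fin 5)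
    (h : ∀ j ≠ i, P (blockRows p a₀₁ a₀₂ a₀₃ a₀₄ a₁₂ a₁₃ a₁₄ a₂₃ a₂₄ a₃₄ j)) :
    P (blockRows p a₀₁ a₀₂ a₀₃ a₀₄ a₁₂ a₁₃ a₁₄ a₂₃ a₂₄ a₃₄ i) := by
  rw [← symmRow_blockMatrix_upperTriangle]
  refine hP.kan _ _ (by omega) fun j _ hji => ?_
  by_cases hj : j < p ∨ p + 4 < j
  · rw [symmRow_blockMatrix_of_notMem _ _ hj]
    exact hP.zero (by omega)
  · obtain ⟨j, rfl⟩ : ∃ k : Fin 5, j = p + k := ⟨⟨j - p, by omega⟩, by simp; omega⟩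
    rw [symmRow_blockMatrix_upperTriangle]
    exact h j (by rintro rfl; exact hji rfl)

theorem IsKanClosed.pair_mid (hP : IsKanClosed n P) {p : ℕ} (hp : p + 2 ≤ n) (m : ℤ) :
    P (quadRow p 0 m m 0) :=
  quadRow_zero_cons p m m 0 ▸ hP.pair _ _ hp

theorem IsKanClosed.pair_end (hP : IsKanClosed n P) {p : ℕ} (hp : p + 3 ≤ n) (m : ℤ) :
    P (quadRow p 0 0 m m) :=
  quadRow_zero_cons p 0 m m ▸ hP.pair_mid hp m

theorem IsKanClosed.triple_zero (hP : IsKanClosed n P) (hn : 3 ≤ n)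
    (hone : ∀ m, P (quadRow 0 1 (m + 1) m 0)) (x z : ℤ) : P (quadRow 0 x (x + z) z 0) := by
  induction x using Int.induction_on with
  | zero =>
    rw [zero_add, quadRow_zero_cons]
    exact hP.pair _ _ (by omega)
  | succ x ih =>
    rw [add_right_comm]
    refine hP.of_blockRows hn 1 (x + 1) x 0 (x + z + 1) (x + z) 0 z 0 0 2 fun j hj => ?_
    fin_cases j
    · exact hone _
    · exact hone _
    · exact absurd rfl hj
    · exact ih
    · exact hP.pair _ _ (by omega)
  | pred x ih =>
    refine hP.of_blockRows hn 1 (-x) (-x - 1) 0 (-x + z) (-x - 1 + z) 0 z 0 0 3 fun j hj => ?_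
    fin_cases j
    · have h := hone (-x - 1)
      rwa [sub_add_cancel] at h
    · have h := hone (-x - 1 + z)
      rwa [show -(x : ℤ) - 1 + z + 1 = -x + z by ring] at h
    · exact ih
    · exact absurd rfl hj
    · exact hP.pair _ _ (by omega)

theorem IsKanClosed.triple (hP : IsKanClosed n P) (hn : 3 ≤ n)
    (hone : ∀ m, P (quadRow 0 1 (m + 1) m 0)) {p : ℕ} (hp : p + 2 ≤ n) {x y z : ℤ}
    (hy : y = x + z) : P (quadRow p x y z 0) := by
  induction p generalizing x y z with
  | zero => exact hy ▸ hP.triple_zero hn hone x z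
  | succ p ih =>
    have outer (m : ℤ) : P (quadRow p m 0 0 m) := by
      refine hP.of_blockRows hp m 0 0 m 0 (-m) 0 (-m) (-m) 0 0 fun j hj => ?_
      fin_cases j
      · exact absurd rfl hj
      · exact ih (by omega) (by ring)
      · exact hP.pair_end hp _
      · exact hP.pair_mid (by omega) _
      · exact ih (by omega) (by ring)
    rw [← quadRow_zero_cons]
    refine hP.of_blockRows hp 0 x y z 0 y y 0 x 0 0 fun j hj => ?_
    fin_cases j
    · exact absurd rfl hj
    · exact hP.pair_end hp _
    · exact outer x
    · exact hP.pair _ _ (by omega)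
    · exact ih (by omega) (by rw [hy]; ring)

theorem IsKanClosed.of_add_single (hP : IsKanClosed n P) (hn : 3 ≤ n)
    (hone : ∀ m, P (quadRow 0 1 (m + 1) m 0)) {p : ℕ} (hp : p + 2 ≤ n) {r : ℕ → ℤ}
    (hr : ∀ q < p, r q = 0) (h : P (r - Pi.single p (r p) + Pi.single (p + 2) (r p))) : P r := by
  let A : ℕ → ℕ → ℤ := fun i j =>
    if i = p then (if j = p + 1 then r p else if j = p + 3 then -r p else 0)
    else if i = p + 1 then r (j - 1)
    else if i = p + 2 then (if j = p + 3 then r p + r (p + 2) else r (j - 1))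
    else 0
  have hrow : P (symmRow A (p + 1)) := by
    refine hP.kan _ _ (by omega) fun j _ hj => ?_
    obtain hjp | rfl | rfl | rfl | hjp : j < p ∨ j = p ∨ j = p + 2 ∨ j = p + 3 ∨ p + 3 < j := by
      omega
    · refine hP.of_eq (hP.zero (by omega)) fun q _ => ?_
      simp only [symmRow, A, Pi.zero_apply]
      split_ifs <;> omega
    · refine hP.of_eq (hP.triple hn hone hp (x := r j) (y := 0) (z := -r j) (by ring))
        fun q _ => ?_
      simp only [symmRow, A, quadRow]
      split_ifs <;> omega
    · refine hP.of_eq h fun q _ => ?_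
      have hq_zero := hr q
      simp only [symmRow, A, Pi.add_apply, Pi.sub_apply, Pi.single_apply, Nat.add_sub_cancel]
      obtain rfl | hq : q = p + 1 ∨ q ≠ p + 1 := eq_or_ne _ _
      · simp
      obtain hq | rfl | rfl | hq : q < p ∨ q = p ∨ q = p + 2 ∨ p + 2 < q := by omega
      all_goals split_ifs <;> omega
    · refine hP.of_eq (hP.triple hn hone hp (x := -r p) (y := r (p + 2)) (z := r p + r (p + 2))
        (by ring)) fun q _ => ?_
      simp only [symmRow, A, quadRow]
      split_ifs <;> first | omega | rfl
    · refine hP.of_eq (hP.pair (p + 1) (r (j - 1)) (by omega)) fun q _ => ?_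
      simp only [symmRow, A, quadRow]
      split_ifs <;> omega
  refine hP.of_eq hrow fun q _ => ?_
  simp only [symmRow, A]
  split_ifs <;> first | omega | exact (hr q (by omega)).symm | exact congrArg r (by omega)

theorem IsKanClosed.of_alternating_sum_eq_zero (hP : IsKanClosed n P) (hn : 3 ≤ n)
    (hone : ∀ m, P (quadRow 0 1 (m + 1) m 0)) (r : ℕ → ℤ)
    (hsum : ∑ p ∈ Finset.range (n + 1), (-1) ^ p * r p = 0) : P r := by
  suffices h : ∀ d p, p + d + 1 = n → ∀ r : ℕ → ℤ, (∀ q < p, r q = 0) →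
      ∑ q ∈ Finset.range (n + 1), (-1) ^ q * r q = 0 → P r from
    h (n - 1) 0 (by omega) r (fun q hq => absurd hq q.not_lt_zero) hsum
  intro d
  induction d with
  | zero =>
    rintro p rfl r hr hsum
    have heq : r p = r (p + 1) := by
      rw [Finset.sum_range_succ, Finset.sum_range_succ, Finset.sum_eq_zero fun q hq => by
        rw [hr q (Finset.mem_range.1 hq), mul_zero]] at hsum
      refine mul_left_cancel₀ (pow_ne_zero p (by decide : (-1 : ℤ) ≠ 0)) ?_
      linear_combination hsum
    refine hP.of_eq (hP.pair p (r p) le_rfl) fun q hq => ?_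
    obtain hq | rfl | rfl : q < p ∨ q = p ∨ q = p + 1 := by omega
    · rw [hr q hq]
      simp only [quadRow]
      split_ifs <;> omega
    · simp [quadRow]
    · simpa [quadRow] using heq
  | succ d ih =>
    intro p hp r hr hsum
    refine hP.of_add_single hn hone (p := p) (by omega) hr (ih (p + 1) (by omega) _ ?_ ?_)
    · intro q hq
      obtain hq | rfl : q < p ∨ q = p := by omega
      · simp [hr q hq, hq.ne, (show q ≠ p + 2 by omega)]
      · simp
    · have h₁ : p < n + 1 := by omega
      have h₂ : p + 2 < n + 1 := by omega
      simp [mul_add, mul_sub, Finset.sum_add_distrib, Finset.sum_sub_distrib, Pi.single_apply,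
        hsum, h₁, h₂, pow_add]

end SymmetricMatrices

section HomotopyAddition

variable {E : Type*} [TopologicalSpace E] {S : Set E} {y₀ : E} {n : ℕ}

theorem isSpheroid_const (hy : y₀ ∈ S) (n : ℕ) : IsSpheroid S y₀ n fun _ => y₀ :=
  ⟨continuousOn_const, fun _ _ => hy, fun _ _ _ _ => rfl⟩

/-- The degeneracy map of simplices that adds up the coordinates `i` and `i + 1`. -/
def degeneracy (i : Fin (n + 1)) (t : Fin (n + 2) → ℝ) (q : Fin (n + 1)) : ℝ :=
  ∑ j, if i.predAbove j = q then t j else 0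

theorem continuous_degeneracy (i : Fin (n + 1)) : Continuous (degeneracy i) := by
  refine continuous_pi fun q => continuous_finsetSum _ fun j _ => ?_
  split_ifs
  · exact continuous_apply j
  · exact continuous_const

theorem degeneracy_mem_simplex (i : Fin (n + 1)) {t : Fin (n + 2) → ℝ} (ht : t ∈ simplex (n + 2)) :
    degeneracy i t ∈ simplex (n + 1) := by
  refine ⟨fun q => Finset.sum_nonneg fun j _ => ?_, ?_⟩
  · split_ifs
    · exact ht.1 j
    · exact le_rfl
  · simp only [degeneracy]
    rw [Finset.sum_comm]
    simpa using ht.2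

theorem degeneracy_eq_comp_succAbove {i : Fin (n + 1)} {t : Fin (n + 2) → ℝ} {p : Fin (n + 2)}
    (ht : t p = 0) (hp : p = i.castSucc ∨ p = i.succ) : degeneracy i t = t ∘ p.succAbove := by
  have hcancel (j : Fin (n + 1)) : i.predAbove (p.succAbove j) = j := by
    obtain rfl | rfl := hp
    · exact Fin.predAbove_succAbove i j
    · simp only [Fin.ext_iff, Fin.predAbove, Fin.succAbove, Fin.lt_def, apply_ite Fin.val,
        apply_dite Fin.val, Fin.val_castSucc, Fin.val_succ, Fin.val_pred, Fin.coe_castPred]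
      split_ifs <;> omega
  funext q
  simp [degeneracy, Fin.sum_univ_succAbove _ p, ht, hcancel]

theorem degeneracy_predAbove_eq_zero {i : Fin (n + 1)} {t : Fin (n + 2) → ℝ} {p : Fin (n + 2)}
    (ht : t p = 0) (hp : ¬ (p = i.castSucc ∨ p = i.succ)) : degeneracy i t (i.predAbove p) = 0 := by
  refine Finset.sum_eq_zero fun j _ => ?_
  split_ifs with hj
  · suffices j = p by rw [this, ht]
    simp only [Fin.ext_iff, Fin.predAbove, Fin.lt_def, Fin.val_castSucc, Fin.val_succ] at hj hp ⊢
    split_ifs at hj <;> simp at hj <;> omega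
  · rfl

theorem IsSpheroid.isFillable_pair {x : (Fin n → ℝ) → E} (hx : IsSpheroid S y₀ n x) (i : ℕ)
    (hi : i + 1 ≤ n) :
    IsFillable S n fun p : Fin (n + 1) => if p.val = i ∨ p.val = i + 1 then x else fun _ => y₀ := by
  obtain ⟨n, rfl⟩ : ∃ k, n = k + 1 := ⟨n - 1, by omega⟩
  lift i to Fin (n + 1) using by omega
  refine ⟨fun t => x (degeneracy i t),
    hx.continuousOn.comp (continuous_degeneracy i).continuousOn fun t => degeneracy_mem_simplex i,
    fun t ht => hx.mem _ (degeneracy_mem_simplex i ht), fun p t ht htp => ?_⟩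
  split_ifs with h
  · rw [degeneracy_eq_comp_succAbove htp (by simpa [Fin.ext_iff] using h)]
  · exact hx.eq_of_apply_eq_zero _ (degeneracy_mem_simplex i ht) (i.predAbove p)
      (degeneracy_predAbove_eq_zero htp (by simpa [Fin.ext_iff] using h))

/-- There is a filling with faces `ι`, `x'` and `x`, followed by constant ones: in the homotopy
group, `x'` is the sum of `ι` and `x`. -/
def IsFillableTriple (S : Set E) (y₀ : E) (n : ℕ) (ι x' x : (Fin n → ℝ) → E) : Prop :=
  IsFillable S n fun p : Fin (n + 1) =>
    if p.val = 0 then ι else if p.val = 1 then x' else if p.val = 2 then x else fun _ => y₀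

variable {ι x : (Fin n → ℝ) → E}

theorem IsSpheroid.exists_isFillableTriple_left (hι : IsSpheroid S y₀ n ι)
    (hx : IsSpheroid S y₀ n x) (hn : 2 ≤ n) (hy : y₀ ∈ S) :
    ∃ x', IsSpheroid S y₀ n x' ∧ IsFillableTriple S y₀ n ι x' x := by
  obtain ⟨x', hx', hfill⟩ := exists_isSpheroid_isFillable_update (S := S) (by omega : 1 ≤ n)
    (fun p : Fin (n + 1) => if p.val = 0 then ι else if p.val = 2 then x else fun _ => y₀)
    ⟨1, by omega⟩ fun j _ => by
      split_ifs
      exacts [hι, hx, isSpheroid_const hy n]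
  refine ⟨x', hx', ?_⟩
  unfold IsFillableTriple
  convert hfill using 2 with p
  simp only [Function.update_apply, Fin.ext_iff]
  split_ifs <;> first | omega | rfl

theorem IsSpheroid.exists_isFillableTriple_right (hι : IsSpheroid S y₀ n ι)
    (hx : IsSpheroid S y₀ n x) (hn : 2 ≤ n) (hy : y₀ ∈ S) :
    ∃ x', IsSpheroid S y₀ n x' ∧ IsFillableTriple S y₀ n ι x x' := by
  obtain ⟨x', hx', hfill⟩ := exists_isSpheroid_isFillable_update (S := S) (by omega : 1 ≤ n)
    (fun p : Fin (n + 1) => if p.val = 0 then ι else if p.val = 1 then x else fun _ => y₀)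
    ⟨2, by omega⟩ fun j _ => by
      split_ifs
      exacts [hι, hx, isSpheroid_const hy n]
  refine ⟨x', hx', ?_⟩
  unfold IsFillableTriple
  convert hfill using 2 with p
  simp only [Function.update_apply, Fin.ext_iff]
  split_ifs <;> first | omega | rfl

/-- A choice of representatives `c m` of the multiples `m • [ι]` in the homotopy group. -/
structure IsMultiples (S : Set E) (y₀ : E) (n : ℕ) (ι : (Fin n → ℝ) → E)
    (c : ℤ → (Fin n → ℝ) → E) : Prop where
  zero : c 0 = fun _ => y₀
  one : c 1 = ι
  isSpheroid : ∀ m, IsSpheroid S y₀ n (c m)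
  isFillableTriple : ∀ m, IsFillableTriple S y₀ n ι (c (m + 1)) (c m)

theorem IsSpheroid.exists_isMultiples (hι : IsSpheroid S y₀ n ι) (hn : 2 ≤ n) (hy : y₀ ∈ S) :
    ∃ c, IsMultiples S y₀ n ι c := by
  have hup (x : {x // IsSpheroid S y₀ n x}) :
      ∃ x' : {x // IsSpheroid S y₀ n x}, IsFillableTriple S y₀ n ι x' x := by
    obtain ⟨x', hx', h⟩ := hι.exists_isFillableTriple_left x.2 hn hy
    exact ⟨⟨x', hx'⟩, h⟩
  have hdown (x : {x // IsSpheroid S y₀ n x}) :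
      ∃ x' : {x // IsSpheroid S y₀ n x}, IsFillableTriple S y₀ n ι x x' := by
    obtain ⟨x', hx', h⟩ := hι.exists_isFillableTriple_right x.2 hn hy
    exact ⟨⟨x', hx'⟩, h⟩
  choose u hu using hup
  choose v hv using hdown
  let c : ℤ → {x // IsSpheroid S y₀ n x}
    | .ofNat 0 => ⟨fun _ => y₀, isSpheroid_const hy n⟩
    | .ofNat (k + 1) => u^[k] ⟨ι, hι⟩
    | .negSucc k => v^[k + 1] ⟨fun _ => y₀, isSpheroid_const hy n⟩
  refine ⟨fun m => c m, rfl, rfl, fun m => (c m).2, ?_⟩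
  rintro ((_ | k) | k)
  · unfold IsFillableTriple
    convert hι.isFillable_pair 0 (by omega) using 2 with p
    dsimp only [c]
    split_ifs <;> first | omega | rfl
  · have h := hu (c (.ofNat (k + 1)))
    rwa [show u (c (.ofNat (k + 1))) = c (.ofNat (k + 1) + 1) from
      (Function.iterate_succ_apply' u k _).symm] at h
  · have h := hv (v^[k] ⟨fun _ => y₀, isSpheroid_const hy n⟩)
    rw [← Function.iterate_succ_apply' v k] at h
    cases k with
    | zero => exact h
    | succ k => exact h

theorem isFillable_symmRow {c : ℤ → (Fin n → ℝ) → E} (A : ℕ → ℕ → ℤ) {i : ℕ} (hi : i ≤ n + 1)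
    (h : ∀ j ≤ n + 1, j ≠ i → IsFillable S n fun p : Fin (n + 1) => c (symmRow A j p)) :
    IsFillable S n fun p : Fin (n + 1) => c (symmRow A i p) := by
  let a : Fin (n + 2) → Fin (n + 2) → ℤ := fun j l => if j < l then A j l else A l j
  have hrow (j : Fin (n + 2)) (p : Fin (n + 1)) : a j (j.succAbove p) = symmRow A j p := by
    simp only [a, symmRow, Fin.succAbove, Fin.lt_def, Fin.val_castSucc]
    split_ifs <;> simp_all; omega
  have h' := isFillable_of_forall_ne (S := S) (n := n) (fun j l => c (a j l)) ?_ ⟨i, by omega⟩ ?_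
  · simpa only [hrow] using h'
  · intro j l
    congr 1
    obtain hjl | rfl | hjl := lt_trichotomy j l
    · simp [a, hjl, hjl.asymm]
    · rfl
    · simp [a, hjl, hjl.asymm]
  · intro j hj
    simpa only [hrow] using h j (by omega) fun hji => hj (Fin.ext hji)

theorem IsMultiples.isKanClosed {c : ℤ → (Fin n → ℝ) → E} (hc : IsMultiples S y₀ n ι c) :
    IsKanClosed n fun r => IsFillable S n fun p : Fin (n + 1) => c (r p) where
  of_eq {r r'} h hr := by
    convert h using 3 with p
    exact (hr p (by omega)).symm
  kan A i hi h := isFillable_symmRow A hi h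
  pair i m hi := by
    convert (hc.isSpheroid m).isFillable_pair i hi using 2 with p
    rw [← hc.zero]
    simp only [quadRow]
    split_ifs <;> first | rfl | omega

-- The homotopy addition theorem: such a sphere represents `(∑ p, (-1) ^ p * R p) • [ι] = 0`.
theorem IsMultiples.isFillable {c : ℤ → (Fin n → ℝ) → E} (hc : IsMultiples S y₀ n ι c) (hn : 3 ≤ n)
    (R : Fin (n + 1) → ℤ) (hR : ∑ p, (-1) ^ p.val * R p = 0) :
    IsFillable S n fun p => c (R p) := by
  have h := hc.isKanClosed.of_alternating_sum_eq_zero hn (fun m => ?_)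
    (fun p => if h : p < n + 1 then R ⟨p, h⟩ else 0) ?_
  · simpa only [Fin.is_lt, dite_true, Fin.eta] using h
  · have h := hc.isFillableTriple m
    unfold IsFillableTriple at h
    convert h using 2 with p
    rw [← hc.zero, ← hc.one]
    simp only [quadRow]
    split_ifs <;> rfl
  · rw [Finset.sum_range]
    simpa only [Fin.is_lt, dite_true, Fin.eta] using hR

end HomotopyAddition

section LabelCochains

theorem linearCombination_boundary_ofFn {R X : Type*} [CommRing R] {n : ℕ} (c : List X → R)
    (e : Fin (n + 1) → X) : linearCombination R c (boundary (gen R (List.ofFn e))) =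
      ∑ p : Fin (n + 1), (-1) ^ p.val * c (List.ofFn (e ∘ p.succAbove)) := by
  induction n generalizing c with
  | zero =>
    rw [List.ofFn_succ, linearCombination_boundary_cons]
    simp
  | succ n ih =>
    have ofFn_succAbove (p : Fin (n + 1)) : List.ofFn (e ∘ p.succ.succAbove) =
        e 0 :: List.ofFn ((fun i => e i.succ) ∘ p.succAbove) := by
      rw [List.ofFn_succ]
      simp [Function.comp_def]
    rw [Fin.sum_univ_succ (n := n + 1), List.ofFn_succ, linearCombination_boundary_cons, ih]
    simp only [ofFn_succAbove]
    simp only [Fin.val_zero, pow_zero, one_mul, Fin.val_succ, pow_succ,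
      mul_neg_one, neg_mul, Finset.sum_neg_distrib, sub_eq_add_neg, Fin.succAbove_zero,
      Function.comp_def]

theorem eq_ofFn_id_of_pairwise_lt {n : ℕ} {l : List (Fin n)} (h : l.Pairwise (· < ·))
    (hl : l.length = n) : l = List.ofFn id := by
  have ofFn_lt : (List.ofFn (id : Fin n → Fin n)).Pairwise (· < ·) :=
    List.pairwise_ofFn.2 fun _ _ h => h
  have mem_l (a : Fin n) : a ∈ l := by
    have : l.toFinset = Finset.univ := by
      rw [← Finset.card_eq_iff_eq_univ, List.toFinset_card_of_nodup (h.imp (·.ne)), hl,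
        Fintype.card_fin]
    simpa using this.ge (Finset.mem_univ a)
  refine List.Perm.eq_of_pairwise (fun a b _ _ h₁ h₂ => absurd h₁ h₂.asymm) h ofFn_lt
    ((List.perm_ext_iff_of_nodup (h.imp (·.ne)) (ofFn_lt.imp (·.ne))).2 fun a => ?_)
  simp [mem_l a, List.mem_ofFn]

variable {X ι : Type*} [LinearOrder ι] (lam : X → ι)

/-- The integral cochain on `X` pulled back, along a labelling `lam` of the points, from the
alternating cochain that is `1` on the ordered simplex `L` of labels and `0` on the simplices with
other vertices. -/
noncomputable def labelCochain (L : List ι) (l : List X) : ℤ :=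
  signedSort (vertexMap lam (gen ℤ l)) L

theorem labelCochain_eq (L : List ι) (l : List X) :
    labelCochain lam L l = signedSort (gen ℤ (l.map lam)) L := by
  rw [labelCochain, vertexMap_gen]

theorem linearCombination_labelCochain_boundary (L : List ι) (l : List X) :
    linearCombination ℤ (labelCochain lam L) (boundary (gen ℤ l)) =
      boundary (signedSort (gen ℤ (l.map lam))) L := by
  have : linearCombination ℤ (labelCochain lam L) =
      Finsupp.lapply L ∘ₗ signedSort ∘ₗ vertexMap lam :=
    linearMap_ext_gen fun l => linearCombination_gen _ l
  rw [this, LinearMap.comp_apply, LinearMap.comp_apply, ← (isChainMap_vertexMap lam).boundary_map,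
    ← isChainMap_signedSort.boundary_map, vertexMap_gen, Finsupp.lapply_apply]

theorem exists_mem_of_labelCochain_ne_zero {L : List ι} {l : List X}
    (h : labelCochain lam L l ≠ 0) {i : ι} (hi : i ∈ L) : ∃ v ∈ l, lam v = i := by
  rw [labelCochain_eq] at h
  by_contra! hne
  refine h ((Finsupp.mem_supported' ℤ _).1 (signedSort_gen_mem (l.map lam)) L fun hL => ?_)
  obtain ⟨v, hv, hvi⟩ := List.mem_map.1 ((hL.2.2 i).1 hi)
  exact hne v hv hvi

theorem labelCochain_eq_zero_of_not_nodup {L : List ι} {l : List X} (h : ¬ (l.map lam).Nodup) :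
    labelCochain lam L l = 0 := by
  rw [labelCochain_eq, signedSort_of_not_nodup h, Finsupp.zero_apply]

theorem labelCochain_of_pairwise_lt (L : List ι) {l : List X}
    (h : (l.map lam).Pairwise (· < ·)) : labelCochain lam L l = gen ℤ (l.map lam) L := by
  rw [labelCochain_eq, signedSort_of_pairwise_lt h]

variable {k : ℕ} (lam : X → Fin (k + 1))

theorem linearCombination_labelCochain_id_boundary {l : List X} (hl : l.length = k + 2) :
    linearCombination ℤ (labelCochain lam (List.ofFn id)) (boundary (gen ℤ l)) = 0 := by
  rw [linearCombination_labelCochain_boundary, signedSort_of_not_nodup, map_zero,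
    Finsupp.zero_apply]
  intro h
  simpa [hl] using h.length_le_card

theorem boundary_ofFn_id_apply_ofFn_succ :
    boundary (gen ℤ (List.ofFn (id : Fin (k + 1) → _))) (List.ofFn Fin.succ) = 1 := by
  have cone_apply : cone (0 : Fin (k + 1)) (boundary (gen ℤ (List.ofFn Fin.succ)))
      (List.ofFn Fin.succ) = 0 := by
    refine (Finsupp.mem_supported' ℤ _).1 (map_mem_of_gen (P := fun _ => True)
      (N := supportedOn ℤ fun l => (0 : Fin (k + 1)) ∈ l) (fun l _ => ?_)
      (mem_supportedOn_true _)) _ ?_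
    · rw [cone_gen]
      exact gen_mem_supportedOn List.mem_cons_self
    · simp [List.mem_ofFn]
  rw [List.ofFn_succ, boundary_cons, Finsupp.sub_apply]
  exact (congrArg₂ (· - ·) Finsupp.single_eq_same cone_apply).trans (sub_zero 1)

theorem linearCombination_labelCochain_succ_boundary {l : List X} (hl : l.length = k + 1) :
    linearCombination ℤ (labelCochain lam (List.ofFn Fin.succ)) (boundary (gen ℤ l)) =
      labelCochain lam (List.ofFn id) l := by
  rw [linearCombination_labelCochain_boundary, labelCochain_eq]
  refine map_eq_of_gen (f := Finsupp.lapply _ ∘ₗ boundary) (g := Finsupp.lapply _) ?_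
    (signedSort_gen_mem (R := ℤ) (l.map lam))
  rintro m ⟨hm, hlen, -⟩
  obtain rfl := eq_ofFn_id_of_pairwise_lt hm (by simpa [hl] using hlen)
  rw [LinearMap.comp_apply, Finsupp.lapply_apply, Finsupp.lapply_apply,
    boundary_ofFn_id_apply_ofFn_succ, Finsupp.single_eq_same]

theorem labelCochain_succ_of_comp_eq {e : Fin k → X} (h : lam ∘ e = Fin.succ) :
    labelCochain lam (List.ofFn Fin.succ) (List.ofFn e) = 1 := by
  rw [labelCochain_of_pairwise_lt, List.map_ofFn, h, Finsupp.single_eq_same]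
  rw [List.map_ofFn, h, List.pairwise_ofFn]
  exact fun _ _ => Fin.succ_lt_succ_iff.2

theorem labelCochain_succ_of_comp_ne {e : Fin k → X} (hmono : Monotone (lam ∘ e))
    (h : lam ∘ e ≠ Fin.succ) : labelCochain lam (List.ofFn Fin.succ) (List.ofFn e) = 0 := by
  by_cases hinj : Function.Injective (lam ∘ e)
  · rw [labelCochain_of_pairwise_lt, List.map_ofFn,
      Finsupp.single_eq_of_ne' fun h' => h (List.ofFn_injective h')]
    rw [List.map_ofFn, List.pairwise_ofFn]
    exact fun _ _ hij => hmono.strictMono_of_injective hinj hij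
  · refine labelCochain_eq_zero_of_not_nodup lam ?_
    rwa [List.map_ofFn, List.nodup_ofFn]

theorem eq_succ_of_monotone {e : Fin k → Fin (k + 1)} (hmono : Monotone e)
    (h : ∀ j : Fin k, ∃ i, e i = j.succ) : e = Fin.succ := by
  choose f hf using h
  have he : e ∘ f = Fin.succ := funext hf
  have hsurj : Function.Surjective f :=
    Finite.surjective_of_injective (.of_comp (he ▸ Fin.succ_injective k))
  have hinj : Function.Injective e := by
    intro a b hab
    obtain ⟨a, rfl⟩ := hsurj a
    obtain ⟨b, rfl⟩ := hsurj b
    rw [hf, hf] at hab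
    rw [Fin.succ_injective _ hab]
  refine ((hmono.strictMono_of_injective hinj).range_inj Fin.strictMono_succ).1 ?_
  rw [← he, hsurj.range_comp]

end LabelCochains

section PushToVertex

variable {k : ℕ}

/-- The set of nonconstant vectors of `ℝᵏ⁺¹`. It retracts onto the boundary of the standard simplex
and is the space in which obstruction theory is done. -/
def nonconstant (k : ℕ) : Set (Fin (k + 1) → ℝ) := {v | ∃ i j, v i ≠ v j}

variable [NeZero k]

/-- The smallest of the coordinates of `v` other than the zeroth one. -/
noncomputable def tailMin (v : Fin (k + 1) → ℝ) : ℝ :=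
  Finset.univ.inf' Finset.univ_nonempty fun j : Fin k => v j.succ

/-- A homotopy, in the time `t`, from the identity to a map that sends every face of the standard
simplex through the zeroth vertex to that vertex. -/
noncomputable def pushToVertex (t : ℝ) (v : Fin (k + 1) → ℝ) : Fin (k + 1) → ℝ :=
  (1 - t) • v + t • (Pi.single 0 (1 - (k + 1) * tailMin v) + tailMin v • v)

theorem continuous_tailMin : Continuous (tailMin (k := k)) :=
  Continuous.finset_inf'_apply _ fun j _ => continuous_apply j.succ

theorem tailMin_le (v : Fin (k + 1) → ℝ) (j : Fin k) : tailMin v ≤ v j.succ :=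
  Finset.inf'_le _ (Finset.mem_univ j)

theorem tailMin_nonneg {v : Fin (k + 1) → ℝ} (hv : ∀ i, 0 ≤ v i) : 0 ≤ tailMin v :=
  Finset.le_inf' _ _ fun j _ => hv j.succ

theorem tailMin_eq_zero {v : Fin (k + 1) → ℝ} (hv : ∀ i, 0 ≤ v i) {j : Fin k}
    (h : v j.succ = 0) : tailMin v = 0 :=
  le_antisymm (h ▸ tailMin_le v j) (tailMin_nonneg hv)

theorem exists_tailMin_eq (v : Fin (k + 1) → ℝ) : ∃ j : Fin k, tailMin v = v j.succ :=
  let ⟨j, _, hj⟩ := Finset.exists_mem_eq_inf' Finset.univ_nonempty fun j : Fin k => v j.succ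
  ⟨j, hj⟩

theorem continuous_pushToVertex :
    Continuous fun p : ℝ × (Fin (k + 1) → ℝ) => pushToVertex p.1 p.2 := by
  have := continuous_tailMin (k := k)
  refine continuous_pi fun i => ?_
  by_cases h : i = 0
  · subst h
    simp only [pushToVertex, Pi.add_apply, Pi.smul_apply, Pi.single_eq_same, smul_eq_mul]
    fun_prop
  · simp only [pushToVertex, Pi.add_apply, Pi.smul_apply, Pi.single_eq_of_ne h, smul_eq_mul]
    fun_prop

theorem pushToVertex_apply_zero (t : ℝ) (v : Fin (k + 1) → ℝ) :
    pushToVertex t v 0 = (1 - t) * v 0 + t * (1 - (k + 1) * tailMin v + tailMin v * v 0) := by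
  simp [pushToVertex, mul_add]

theorem pushToVertex_apply_succ (t : ℝ) (v : Fin (k + 1) → ℝ) (j : Fin k) :
    pushToVertex t v j.succ = (1 - t + t * tailMin v) * v j.succ := by
  simp only [pushToVertex, Pi.add_apply, Pi.smul_apply, smul_eq_mul,
    Pi.single_eq_of_ne (Fin.succ_ne_zero j)]
  ring

theorem pushToVertex_zero (v : Fin (k + 1) → ℝ) : pushToVertex 0 v = v := by
  simp [pushToVertex]

theorem pushToVertex_one {v : Fin (k + 1) → ℝ} (hv : ∀ i, 0 ≤ v i) {j : Fin k}
    (h : v j.succ = 0) : pushToVertex 1 v = Pi.single 0 1 := by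
  simp [pushToVertex, tailMin_eq_zero hv h]

theorem single_zero_mem_nonconstant : Pi.single 0 1 ∈ nonconstant k :=
  ⟨0, (0 : Fin k).succ, by simp⟩

theorem pushToVertex_mem_nonconstant_of_tailMin_eq_zero {v : Fin (k + 1) → ℝ}
    (hv : v ∈ simplex (k + 1)) (hmin : tailMin v = 0) (t : ℝ) :
    pushToVertex t v ∈ nonconstant k := by
  obtain ⟨j₀, hj₀⟩ := exists_tailMin_eq v
  by_contra! hconst
  simp only [nonconstant, mem_ofPred_eq, not_exists, not_not] at hconst
  have tail_eq (j : Fin k) : (1 - t) * v j.succ = 0 := by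
    have := hconst j.succ j₀.succ
    rwa [pushToVertex_apply_succ, pushToVertex_apply_succ, ← hj₀, hmin, mul_zero, mul_zero,
      add_zero] at this
  have head_eq : (1 - t) * v 0 + t = 0 := by
    have := hconst 0 j₀.succ
    rw [pushToVertex_apply_zero, pushToVertex_apply_succ, ← hj₀, hmin] at this
    linarith
  have sum_eq : (1 - t) * (v 0 + ∑ j : Fin k, v j.succ) + t = 0 := by
    rw [mul_add, Finset.mul_sum, Finset.sum_eq_zero fun j _ => tail_eq j, add_zero, head_eq]
  rw [← Fin.sum_univ_succ, hv.2] at sum_eq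
  linarith

theorem pushToVertex_mem_nonconstant_of_tailMin_pos {v : Fin (k + 1) → ℝ}
    (hv : v ∈ simplex (k + 1)) (hv₀ : v 0 = 0) (hmin : 0 < tailMin v) {t : ℝ}
    (ht : t ∈ Icc (0 : ℝ) 1) : pushToVertex t v ∈ nonconstant k := by
  obtain ⟨j₀, hj₀⟩ := exists_tailMin_eq v
  by_contra! hconst
  simp only [nonconstant, mem_ofPred_eq, not_exists, not_not] at hconst
  have factor_pos : 0 < 1 - t + t * tailMin v := by
    rcases ht.2.eq_or_lt with rfl | h
    · linarith
    · nlinarith [mul_nonneg ht.1 hmin.le]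
  have tail_eq (j : Fin k) : v j.succ = tailMin v := by
    have := hconst j.succ j₀.succ
    rw [pushToVertex_apply_succ, pushToVertex_apply_succ, ← hj₀] at this
    exact mul_left_cancel₀ factor_pos.ne' this
  have sum_eq : (k : ℝ) * tailMin v = 1 := by
    have := hv.2
    rw [Fin.sum_univ_succ, hv₀, zero_add, Finset.sum_congr rfl fun j _ => tail_eq j] at this
    simpa using this
  have : tailMin v * (1 + t * tailMin v) = 0 := by
    have := hconst 0 j₀.succ
    rw [pushToVertex_apply_zero, pushToVertex_apply_succ, ← hj₀, hv₀, add_one_mul, sum_eq] at this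
    linarith
  exact (mul_pos hmin (by nlinarith [mul_nonneg ht.1 hmin.le])).ne' this

theorem pushToVertex_mem_nonconstant {v : Fin (k + 1) → ℝ} (hv : v ∈ simplex (k + 1))
    {i : Fin (k + 1)} (hi : v i = 0) {t : ℝ} (ht : t ∈ Icc (0 : ℝ) 1) :
    pushToVertex t v ∈ nonconstant k := by
  rcases (tailMin_nonneg hv.1).eq_or_lt with hmin | hmin
  · exact pushToVertex_mem_nonconstant_of_tailMin_eq_zero hv hmin.symm t
  · refine pushToVertex_mem_nonconstant_of_tailMin_pos hv ?_ hmin ht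
    cases i using Fin.cases with
    | zero => exact hi
    | succ j => exact absurd (hi ▸ tailMin_le v j) hmin.not_ge

end PushToVertex

section Gluing

variable {X E : Type*} {M k : ℕ}

theorem exists_strictMono_eq_range {m : ℕ} {T : Set (Fin M)} (hT : T.ncard = m) :
    ∃ e : Fin m → Fin M, StrictMono e ∧ T = range e := by
  classical
  rw [ncard_eq_toFinset_card'] at hT
  refine ⟨T.toFinset.orderEmbOfFin hT, OrderEmbedding.strictMono _, ?_⟩
  rw [Finset.range_orderEmbOfFin, coe_toFinset]

theorem not_exists_strictMono_eq_range {m : ℕ} {T : Set (Fin M)} (hT : T.ncard < m) :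
    ¬ ∃ e : Fin m → Fin M, StrictMono e ∧ T = range e := by
  rintro ⟨e, he, rfl⟩
  rw [ncard_range_of_injective he.injective, Nat.card_fin] at hT
  exact hT.false

theorem comp_mem_simplex {m : ℕ} {t : Fin M → ℝ} (ht : t ∈ simplex M) {e : Fin m → Fin M}
    (he : Function.Injective e) (hs : support t ⊆ range e) : t ∘ e ∈ simplex m :=
  ⟨fun i => ht.1 (e i), (Fintype.sum_of_injective e he (t ∘ e) t
    (fun _ hw => Function.notMem_support.1 fun h => hw (hs h)) fun _ => rfl).trans ht.2⟩

/-- `e` lists in increasing order the vertices of a face of the standard simplex whose open star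
meets the image of `h`. -/
def IsCell {m : ℕ} (h : X → Fin M → ℝ) (e : Fin m → Fin M) : Prop :=
  StrictMono e ∧ ∃ x, range e ⊆ support (h x)

open Classical in
/-- The map obtained by gluing the maps `g e` on the `(k - 1)`-cells and `F e` on the
`k`-cells, composed with `h`; it is constantly `y₀` on the cells of lower dimension. -/
noncomputable def cellularMap (y₀ : E) (h : X → Fin M → ℝ)
    (g : (Fin k → Fin M) → (Fin k → ℝ) → E)
    (F : (Fin (k + 1) → Fin M) → (Fin (k + 1) → ℝ) → E) (x : X) : E :=
  if H : ∃ e : Fin (k + 1) → Fin M, StrictMono e ∧ support (h x) = range e then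
    F H.choose (h x ∘ H.choose)
  else if H : ∃ e : Fin k → Fin M, StrictMono e ∧ support (h x) = range e then
    g H.choose (h x ∘ H.choose)
  else y₀

variable {y₀ : E} {h : X → Fin M → ℝ} {g : (Fin k → Fin M) → (Fin k → ℝ) → E}
  {F : (Fin (k + 1) → Fin M) → (Fin (k + 1) → ℝ) → E} {x : X}

theorem exists_isCell_of_ncard_eq {m : ℕ} (hx : (support (h x)).ncard = m) :
    ∃ e : Fin m → Fin M, IsCell h e ∧ support (h x) = range e := by
  obtain ⟨e, he, heq⟩ := exists_strictMono_eq_range hx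
  exact ⟨e, ⟨he, x, heq.ge⟩, heq⟩

theorem cellularMap_of_ncard_lt (hx : (support (h x)).ncard < k) :
    cellularMap y₀ h g F x = y₀ := by
  rw [cellularMap, dif_neg (not_exists_strictMono_eq_range (by omega)),
    dif_neg (not_exists_strictMono_eq_range hx)]

theorem cellularMap_of_support_eq_range {e : Fin k → Fin M} (he : StrictMono e)
    (hx : support (h x) = range e) : cellularMap y₀ h g F x = g e (h x ∘ e) := by
  have H : ∃ e : Fin k → Fin M, StrictMono e ∧ support (h x) = range e := ⟨e, he, hx⟩
  have hcard : (support (h x)).ncard = k := by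
    rw [hx, ncard_range_of_injective he.injective, Nat.card_fin]
  rw [cellularMap, dif_neg (not_exists_strictMono_eq_range (by omega)), dif_pos H,
    (StrictMono.range_inj H.choose_spec.1 he).1 (H.choose_spec.2.symm.trans hx)]

theorem cellularMap_of_support_eq_range_top {e : Fin (k + 1) → Fin M} (he : StrictMono e)
    (hx : support (h x) = range e) : cellularMap y₀ h g F x = F e (h x ∘ e) := by
  have H : ∃ e : Fin (k + 1) → Fin M, StrictMono e ∧ support (h x) = range e := ⟨e, he, hx⟩
  rw [cellularMap, dif_pos H,
    (StrictMono.range_inj H.choose_spec.1 he).1 (H.choose_spec.2.symm.trans hx)]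

variable [TopologicalSpace X] [TopologicalSpace E] {S : Set E}

theorem continuous_of_continuousOn_support_subset {h : X → Fin M → ℝ} (hh : Continuous h)
    {G : X → E} (hG : ∀ x₀, ContinuousOn G {x | support (h x) ⊆ support (h x₀)}) :
    Continuous G := by
  refine LocallyFinite.continuous (f := fun T : {T // ∃ x, support (h x) = T} =>
    {x | support (h x) ⊆ T.1}) (locallyFinite_of_finite _) ?_ ?_ ?_
  · exact eq_univ_of_forall fun x => mem_iUnion.2 ⟨⟨_, x, rfl⟩, Subset.rfl⟩
  · intro T
    have : {x | support (h x) ⊆ T.1} = ⋂ w ∈ T.1ᶜ, {x | h x w = 0} := by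
      ext x
      simp only [mem_ofPred_eq, mem_iInter, mem_compl_iff, Function.support_subset_iff']
    rw [this]
    exact isClosed_biInter fun w _ =>
      isClosed_eq ((continuous_apply w).comp hh) continuous_const
  · rintro ⟨_, x₀, rfl⟩
    exact hG x₀

/-- A continuous map `h` into the `k`-skeleton of the standard simplex with `M` vertices, such as
the map to the nerve given by a partition of unity. -/
structure IsSkeletal (k : ℕ) (h : X → Fin M → ℝ) : Prop where
  continuous : Continuous h
  mem : ∀ x, h x ∈ simplex M
  ncard_support_le : ∀ x, (support (h x)).ncard ≤ k + 1

/-- Data for building a map on the `k`-skeleton of the simplex with `M` vertices which is constantly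
`y₀` on the `(k - 2)`-skeleton: spheroids `g e` on the `(k - 1)`-cells and fillings `F e` of their
faces on the `k`-cells. -/
structure IsCellular (S : Set E) (y₀ : E) (h : X → Fin M → ℝ)
    (g : (Fin k → Fin M) → (Fin k → ℝ) → E)
    (F : (Fin (k + 1) → Fin M) → (Fin (k + 1) → ℝ) → E) : Prop where
  isSkeletal : IsSkeletal k h
  isSpheroid : ∀ e, IsSpheroid S y₀ k (g e)
  isFilling : ∀ e, IsCell h e → IsFilling S k (fun p => g (e ∘ p.succAbove)) (F e)

theorem IsCellular.cellularMap_eq_of_support_subset_range (hF : IsCellular S y₀ h g F)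
    {e : Fin k → Fin M} (he : StrictMono e) (hx : support (h x) ⊆ range e) :
    cellularMap y₀ h g F x = g e (h x ∘ e) := by
  rcases hx.eq_or_ssubset with heq | hlt
  · exact cellularMap_of_support_eq_range he heq
  · have hcard := ncard_lt_ncard hlt
    rw [ncard_range_of_injective he.injective, Nat.card_fin] at hcard
    obtain ⟨_, ⟨i, rfl⟩, hi⟩ := exists_of_ssubset hlt
    rw [cellularMap_of_ncard_lt hcard, (hF.isSpheroid e).eq_of_apply_eq_zero _
      (comp_mem_simplex (hF.isSkeletal.mem x) he.injective hx) i (Function.notMem_support.1 hi)]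

theorem IsCellular.cellularMap_eq_of_support_subset_range_top (hF : IsCellular S y₀ h g F)
    {e : Fin (k + 1) → Fin M} (he : IsCell h e) (hx : support (h x) ⊆ range e) :
    cellularMap y₀ h g F x = F e (h x ∘ e) := by
  rcases hx.eq_or_ssubset with heq | hlt
  · exact cellularMap_of_support_eq_range_top he.1 heq
  · obtain ⟨_, ⟨i, rfl⟩, hi⟩ := exists_of_ssubset hlt
    rw [(hF.isFilling e he).eq_of_apply_eq_zero i _
      (comp_mem_simplex (hF.isSkeletal.mem x) he.1.injective hx) (Function.notMem_support.1 hi)]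
    refine hF.cellularMap_eq_of_support_subset_range
      (he.1.comp (Fin.strictMono_succAbove i)) fun w hw => ?_
    obtain ⟨j, rfl⟩ := hx hw
    obtain ⟨p, rfl⟩ := Fin.exists_succAbove_eq (show j ≠ i by rintro rfl; exact hi hw)
    exact ⟨p, rfl⟩

theorem IsCellular.continuous (hF : IsCellular S y₀ h g F) :
    Continuous (cellularMap y₀ h g F) := by
  have hh := hF.isSkeletal
  refine continuous_of_continuousOn_support_subset hh.continuous fun x₀ => ?_
  have continuousOn_comp {m : ℕ} {e : Fin m → Fin M} (he : StrictMono e) {f : (Fin m → ℝ) → E}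
      (hf : ContinuousOn f (simplex m)) :
      ContinuousOn (fun x => f (h x ∘ e)) {x | support (h x) ⊆ range e} :=
    hf.comp ((Pi.continuous_precomp e).comp hh.continuous).continuousOn
      fun x hx => comp_mem_simplex (hh.mem x) he.injective hx
  rcases lt_trichotomy (support (h x₀)).ncard k with hk | hk | hk
  · exact (continuousOn_const (c := y₀)).congr fun x hx =>
      cellularMap_of_ncard_lt ((ncard_le_ncard hx).trans_lt hk)
  · obtain ⟨e, he, hr⟩ := exists_isCell_of_ncard_eq hk
    rw [hr]
    exact (continuousOn_comp he.1 (hF.isSpheroid e).continuousOn).congr fun x hx =>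
      hF.cellularMap_eq_of_support_subset_range he.1 hx
  · obtain ⟨e, he, hr⟩ := exists_isCell_of_ncard_eq (le_antisymm (hh.ncard_support_le x₀) hk)
    rw [hr]
    exact (continuousOn_comp he.1 (hF.isFilling e he).continuousOn).congr fun x hx =>
      hF.cellularMap_eq_of_support_subset_range_top he hx

theorem IsCellular.cellularMap_mem (hF : IsCellular S y₀ h g F) (hy : y₀ ∈ S) (x : X) :
    cellularMap y₀ h g F x ∈ S := by
  have hh := hF.isSkeletal
  rcases lt_trichotomy (support (h x)).ncard k with hk | hk | hk
  · rwa [cellularMap_of_ncard_lt hk]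
  · obtain ⟨e, he, hr⟩ := exists_isCell_of_ncard_eq hk
    rw [cellularMap_of_support_eq_range he.1 hr]
    exact (hF.isSpheroid e).mem _ (comp_mem_simplex (hh.mem x) he.1.injective hr.subset)
  · obtain ⟨e, he, hr⟩ := exists_isCell_of_ncard_eq (le_antisymm (hh.ncard_support_le x) hk)
    rw [cellularMap_of_support_eq_range_top he.1 hr]
    exact (hF.isFilling e he).mem _ (comp_mem_simplex (hh.mem x) he.1.injective hr.subset)

end Gluing

section LabelledMaps

variable {M k : ℕ}

/-- The map of standard simplices that is affine and equal to `L` on the vertices. -/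
noncomputable abbrev simplicialMap (L : Fin M → Fin k) : (Fin M → ℝ) →ₗ[ℝ] Fin k → ℝ :=
  FunOnFinite.linearMap ℝ ℝ L

theorem simplicialMap_mem_simplex (L : Fin M → Fin k) {t : Fin M → ℝ} (ht : t ∈ simplex M) :
    simplicialMap L t ∈ simplex k :=
  stdSimplex.image_linearMap L (mem_image_of_mem _ ht)

theorem simplicialMap_apply_eq_zero {L : Fin M → Fin k} {t : Fin M → ℝ} {i : Fin k}
    (h : ∀ w ∈ support t, L w ≠ i) : simplicialMap L t i = 0 := by
  rw [FunOnFinite.linearMap_apply_apply]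
  refine Finset.sum_eq_zero fun w hw => ?_
  by_contra hne
  exact h w hne (by simpa using hw)

theorem simplicialMap_comp (L : Fin M → Fin k) {m : ℕ} {t : Fin M → ℝ} {e : Fin m → Fin M}
    (he : Function.Injective e) (hs : support t ⊆ range e) :
    simplicialMap (L ∘ e) (t ∘ e) = simplicialMap L t := by
  funext i
  rw [FunOnFinite.linearMap_apply_apply, FunOnFinite.linearMap_apply_apply, Finset.sum_filter,
    Finset.sum_filter]
  refine Fintype.sum_of_injective e he _ _ (fun w hw => ?_) fun _ => rfl
  rw [Function.notMem_support.1 fun h => hw (hs h), ite_self]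

theorem exists_forall_ne_succ_of_ncard_lt {T : Set (Fin M)} (hT : T.ncard < k)
    (L : Fin M → Fin (k + 1)) : ∃ j : Fin k, ∀ w ∈ T, L w ≠ j.succ := by
  by_contra! hne
  have hsub : range (Fin.succ : Fin k → _) ⊆ L '' T :=
    range_subset_iff.2 fun j => let ⟨w, hw, hwj⟩ := hne j; ⟨w, hw, hwj⟩
  have hle := (ncard_le_ncard hsub).trans (ncard_image_le T.toFinite)
  rw [ncard_range_of_injective (Fin.succ_injective k), Nat.card_fin] at hle
  omega

variable [NeZero k]

/-- The simplicial map given by a labelling `L` of the vertices, followed by the end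
`pushToVertex 1` of the homotopy. -/
noncomputable def pushedMap (L : Fin M → Fin (k + 1)) (t : Fin M → ℝ) : Fin (k + 1) → ℝ :=
  pushToVertex 1 (simplicialMap L t)

theorem continuous_pushedMap (L : Fin M → Fin (k + 1)) : Continuous (pushedMap L) :=
  continuous_pushToVertex.comp
    (continuous_const.prodMk (FunOnFinite.continuous_linearMap ℝ ℝ L))

theorem pushedMap_mem_nonconstant {L : Fin M → Fin (k + 1)} {t : Fin M → ℝ} (ht : t ∈ simplex M)
    {i : Fin (k + 1)} (h : ∀ w ∈ support t, L w ≠ i) : pushedMap L t ∈ nonconstant k :=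
  pushToVertex_mem_nonconstant (simplicialMap_mem_simplex L ht) (simplicialMap_apply_eq_zero h)
    ⟨zero_le_one, le_rfl⟩

theorem pushedMap_eq_single {L : Fin M → Fin (k + 1)} {t : Fin M → ℝ} (ht : t ∈ simplex M)
    {j : Fin k} (h : ∀ w ∈ support t, L w ≠ j.succ) : pushedMap L t = Pi.single 0 1 :=
  pushToVertex_one (simplicialMap_mem_simplex L ht).1 (simplicialMap_apply_eq_zero h)

theorem pushedMap_comp (L : Fin M → Fin (k + 1)) {m : ℕ} {t : Fin M → ℝ} {e : Fin m → Fin M}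
    (he : Function.Injective e) (hs : support t ⊆ range e) :
    pushedMap (L ∘ e) (t ∘ e) = pushedMap L t := by
  rw [pushedMap, pushedMap, simplicialMap_comp L he hs]

theorem isSpheroid_pushedMap_succ :
    IsSpheroid (nonconstant k) (Pi.single 0 1) k (pushedMap (Fin.succ : Fin k → Fin (k + 1))) where
  continuousOn := (continuous_pushedMap _).continuousOn
  mem _ ht := pushedMap_mem_nonconstant ht fun _ _ => Fin.succ_ne_zero _
  eq_of_apply_eq_zero _ ht i hi := pushedMap_eq_single (j := i) ht fun _ hw hwi =>
    hw (Fin.succ_injective _ hwi ▸ hi)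

theorem IsMultiples.apply_labelCochain_succ {P : Type*} {c : ℤ → (Fin k → ℝ) → Fin (k + 1) → ℝ}
    (hc : IsMultiples (nonconstant k) (Pi.single 0 1) k (pushedMap Fin.succ) c)
    {lam : P → Fin (k + 1)} {e : Fin k → P} (hmono : Monotone (lam ∘ e)) {t : Fin k → ℝ}
    (ht : t ∈ simplex k) :
    c (labelCochain lam (List.ofFn Fin.succ) (List.ofFn e)) t = pushedMap (lam ∘ e) t := by
  by_cases hsucc : lam ∘ e = Fin.succ
  · rw [labelCochain_succ_of_comp_eq lam hsucc, hc.one, hsucc]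
  · obtain ⟨j, hj⟩ : ∃ j : Fin k, ∀ i, lam (e i) ≠ j.succ := by
      contrapose! hsucc
      exact eq_succ_of_monotone hmono hsucc
    rw [labelCochain_succ_of_comp_ne lam hmono hsucc, hc.zero,
      pushedMap_eq_single (L := lam ∘ e) ht fun w _ => hj w]

theorem IsMultiples.isFilling_pushedMap {P : Type*} {c : ℤ → (Fin k → ℝ) → Fin (k + 1) → ℝ}
    (hc : IsMultiples (nonconstant k) (Pi.single 0 1) k (pushedMap Fin.succ) c)
    {lam : P → Fin (k + 1)} {e : Fin (k + 1) → P} (hmono : Monotone (lam ∘ e)) {i : Fin (k + 1)}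
    (hi : ∀ w, lam (e w) ≠ i) :
    IsFilling (nonconstant k) k
      (fun p => c (labelCochain lam (List.ofFn Fin.succ) (List.ofFn (e ∘ p.succAbove))))
      (pushedMap (lam ∘ e)) where
  continuousOn := (continuous_pushedMap _).continuousOn
  mem _ ht := pushedMap_mem_nonconstant ht fun w _ => hi w
  eq_of_apply_eq_zero p t ht htp := by
    rw [hc.apply_labelCochain_succ (e := e ∘ p.succAbove)
        (hmono.comp (Fin.strictMono_succAbove p).monotone) (comp_succAbove_mem_simplex ht htp),
      ← Function.comp_assoc, pushedMap_comp _ Fin.succAbove_right_injective]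
    rw [Fin.range_succAbove]
    exact fun w hw => by rintro rfl; exact hw htp

/-- On the cells where the cochain `b` vanishes and a label is missing, the labelling itself extends
the map; on the others, obstruction theory does. -/
theorem IsMultiples.exists_isFilling_obstruction {P : Type*}
    {c : ℤ → (Fin k → ℝ) → Fin (k + 1) → ℝ}
    (hc : IsMultiples (nonconstant k) (Pi.single 0 1) k (pushedMap Fin.succ) c) (hk : 3 ≤ k)
    {lam : P → Fin (k + 1)} {b : List P → ℤ} {e : Fin (k + 1) → P} (hmono : Monotone (lam ∘ e))
    (hb : linearCombination ℤ b (boundary (gen ℤ (List.ofFn e))) =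
      labelCochain lam (List.ofFn id) (List.ofFn e)) :
    ∃ F, IsFilling (nonconstant k) k
        (fun p => c (labelCochain lam (List.ofFn Fin.succ) (List.ofFn (e ∘ p.succAbove)) -
          b (List.ofFn (e ∘ p.succAbove)))) F ∧
      ((∃ i, ∀ w, lam (e w) ≠ i) → (∀ p : Fin (k + 1), b (List.ofFn (e ∘ p.succAbove)) = 0) →
        F = pushedMap (lam ∘ e)) := by
  by_cases h : (∃ i, ∀ w, lam (e w) ≠ i) ∧ ∀ p : Fin (k + 1), b (List.ofFn (e ∘ p.succAbove)) = 0
  · obtain ⟨⟨i, hi⟩, hb₀⟩ := h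
    refine ⟨pushedMap (lam ∘ e), ?_, fun _ _ => rfl⟩
    simpa only [hb₀, sub_zero] using hc.isFilling_pushedMap hmono hi
  · obtain ⟨F, hF⟩ := hc.isFillable hk
      (fun p => labelCochain lam (List.ofFn Fin.succ) (List.ofFn (e ∘ p.succAbove)) -
        b (List.ofFn (e ∘ p.succAbove))) <| by
      have hsucc := linearCombination_labelCochain_succ_boundary lam
        (l := List.ofFn e) List.length_ofFn
      rw [linearCombination_boundary_ofFn] at hb hsucc
      simp only [mul_sub, Finset.sum_sub_distrib]
      rw [hsucc, hb, sub_self]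
    exact ⟨F, hF, fun h₁ h₂ => absurd ⟨h₁, h₂⟩ h⟩

/-- The map given by the labelling is modified only near the simplices where `b` does not vanish. -/
theorem IsSkeletal.exists_continuous_nonconstant {X P : Type*} [TopologicalSpace X] (hk : 3 ≤ k)
    {h : X → Fin M → ℝ} (hh : IsSkeletal k h) {xw : Fin M → P} {lam : P → Fin (k + 1)}
    (hmono : Monotone (lam ∘ xw)) {b : List P → ℤ}
    (hb : ∀ e : Fin (k + 1) → Fin M, IsCell h e →
      linearCombination ℤ b (boundary (gen ℤ (List.ofFn (xw ∘ e)))) =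
        labelCochain lam (List.ofFn id) (List.ofFn (xw ∘ e))) :
    ∃ G : X → Fin (k + 1) → ℝ, Continuous G ∧ (∀ x, G x ∈ nonconstant k) ∧
      ∀ x, (∃ i, ∀ w ∈ support (h x), lam (xw w) ≠ i) →
        (∀ e : Fin k → Fin M, range e ⊆ support (h x) → b (List.ofFn (xw ∘ e)) = 0) →
        G x = pushedMap (lam ∘ xw) (h x) := by
  obtain ⟨c, hc⟩ := isSpheroid_pushedMap_succ.exists_isMultiples (by omega)
    (single_zero_mem_nonconstant (k := k))
  choose! F hF hF_eq using fun e (he : IsCell h e) =>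
    hc.exists_isFilling_obstruction (e := xw ∘ e) hk (hmono.comp he.1.monotone) (hb e he)
  have hcell : IsCellular (nonconstant k) (Pi.single 0 1) h (fun e => c (labelCochain lam
      (List.ofFn Fin.succ) (List.ofFn (xw ∘ e)) - b (List.ofFn (xw ∘ e)))) F :=
    ⟨hh, fun e => hc.isSpheroid _, hF⟩
  refine ⟨_, hcell.continuous, hcell.cellularMap_mem single_zero_mem_nonconstant,
    fun x ⟨i, hi⟩ hbx => ?_⟩
  rcases lt_trichotomy (support (h x)).ncard k with hlt | heq | hgt
  · obtain ⟨j, hj⟩ := exists_forall_ne_succ_of_ncard_lt hlt (lam ∘ xw)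
    rw [cellularMap_of_ncard_lt hlt, pushedMap_eq_single (hh.mem x) hj]
  · obtain ⟨e, he, hr⟩ := exists_isCell_of_ncard_eq heq
    rw [cellularMap_of_support_eq_range he.1 hr, hbx e hr.ge, sub_zero,
      hc.apply_labelCochain_succ (lam := lam) (e := xw ∘ e) (hmono.comp he.1.monotone)
        (comp_mem_simplex (hh.mem x) he.1.injective hr.subset)]
    exact pushedMap_comp (lam ∘ xw) he.1.injective hr.subset
  · obtain ⟨e, he, hr⟩ := exists_isCell_of_ncard_eq (le_antisymm (hh.ncard_support_le x) hgt)
    rw [cellularMap_of_support_eq_range_top he.1 hr,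
      hF_eq e he ⟨i, fun w => hi (e w) (hr.ge ⟨w, rfl⟩)⟩
        fun p => hbx _ (hr.ge.trans' (range_comp_subset_range _ _))]
    exact pushedMap_comp (lam ∘ xw) he.1.injective hr.subset

end LabelledMaps

section Descent

variable {X ι : Type*}

/-- The open cover `V` is obtained by shrinking the members of the family `U`. -/
structure IsOpenShrinking [TopologicalSpace X] (V U : ι → Set X) : Prop where
  isOpen : ∀ i, IsOpen (V i)
  subset : ∀ i, V i ⊆ U i
  exists_mem : ∀ x, ∃ i, x ∈ V i

theorem ncard_le_of_ord_le [TopologicalSpace X] {β s : Set (Set X)} {k : ℕ} (hβ : ord β ≤ k) {x : X}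
    (hs : ∀ U ∈ s, U ∈ β ∧ x ∈ U) : s.ncard ≤ k + 1 := by
  rcases s.finite_or_infinite with hfin | hinf
  · rw [ncard_eq_toFinset_card s hfin, ← Finset.length_toList]
    exact ord_le_iff.1 hβ x _ (Finset.nodup_toList _) fun U hU => hs U (by simpa using hU)
  · simp [hinf.ncard]

theorem IsOpenCover.exists_isSkeletal [TopologicalSpace X] [NormalSpace X] {β : Set (Set X)}
    (hβ : IsOpenCover β) {k : ℕ} (hord : ord β ≤ k) {M : ℕ} (e : Fin M ≃ β) :
    ∃ h : X → Fin M → ℝ, IsSkeletal k h ∧ ∀ x, ∀ w ∈ support (h x), x ∈ (e w).1 := by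
  obtain ⟨f, hf⟩ := PartitionOfUnity.exists_isSubordinate_of_locallyFinite isClosed_univ
    (fun w => (e w).1) (fun w => hβ.1 _ (e w).2) (locallyFinite_of_finite _) fun x _ =>
      let ⟨U, hx⟩ := hβ.exists_mem x
      mem_iUnion.2 ⟨e.symm U, by rwa [e.apply_symm_apply]⟩
  have hmem : ∀ x, ∀ w ∈ support fun w => f w x, x ∈ (e w).1 := fun x w hw =>
    hf w (subset_tsupport _ hw)
  refine ⟨fun x w => f w x, ⟨continuous_pi fun w => (f w).continuous, fun x => ?_, fun x => ?_⟩,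
    hmem⟩
  · exact ⟨fun w => f.nonneg w x,
      (finsum_eq_sum_of_fintype _).symm.trans (f.sum_eq_one (mem_univ x))⟩
  · rw [← ncard_image_of_injective _ (Subtype.val_injective.comp e.injective)]
    refine ncard_le_of_ord_le hord (x := x) ?_
    rintro _ ⟨w, hw, rfl⟩
    exact ⟨(e w).2, hmem x w hw⟩

theorem exists_isSkeletal_dist_lt [MetricSpace X] [CompactSpace X] {k : ℕ} (hX : topDim X ≤ k)
    {δ : ℝ} (hδ : 0 < δ) {m : ℕ} (lam : X → Fin m) :
    ∃ (M : ℕ) (h : X → Fin M → ℝ) (xw : Fin M → X), IsSkeletal k h ∧ Monotone (lam ∘ xw) ∧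
      ∀ x, ∀ w ∈ support (h x), dist x (xw w) < δ := by
  obtain ⟨β, hfin, hcov, hord, hne, hdist⟩ := exists_finite_cover_dist_lt hX hδ
  have : Fintype β := hfin.fintype
  choose x₀ hx₀ using fun U : β => hne U.1 U.2
  let e₀ : Fin (Fintype.card β) ≃ β := (Fintype.equivFin β).symm
  let e : Fin (Fintype.card β) ≃ β := (Tuple.sort fun i => lam (x₀ (e₀ i))).trans e₀
  obtain ⟨h, hh, hmem⟩ := hcov.exists_isSkeletal hord e
  exact ⟨_, h, x₀ ∘ e, hh, Tuple.monotone_sort fun i => lam (x₀ (e₀ i)), fun x w hw =>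
    hdist _ (e w).2 _ (hmem x w hw) _ (hx₀ _)⟩

theorem exists_continuous_nonconstant_eqOn [TopologicalSpace X] [NormalSpace X] {k : ℕ} [NeZero k]
    {A O : Set X} (hA : IsClosed A) (hO : IsOpen O) (hAO : A ⊆ O) {φ G : X → Fin (k + 1) → ℝ}
    (hφ : Continuous φ) (hφ_mem : ∀ x, φ x ∈ simplex (k + 1)) (hφ_zero : ∀ x ∈ O, ∃ i, φ x i = 0)
    (hG : Continuous G) (hG_mem : ∀ x, G x ∈ nonconstant k)
    (hGφ : ∀ x ∈ O, G x = pushToVertex 1 (φ x)) :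
    ∃ f : X → Fin (k + 1) → ℝ, Continuous f ∧ (∀ x, f x ∈ nonconstant k) ∧ EqOn f φ A := by
  classical
  obtain ⟨W, hW, hAW, hWO⟩ := normal_exists_closure_subset hA hO hAO
  obtain ⟨t, ht₀, ht₁, ht⟩ := exists_continuous_zero_one_of_isClosed hA hW.isClosed_compl
    (disjoint_compl_right_iff_subset.2 hAW)
  refine ⟨W.piecewise (fun x => pushToVertex (t x) (φ x)) G, ?_, fun x => ?_, fun x hx => ?_⟩
  · refine Continuous.piecewise (fun x hx => ?_)
      (continuous_pushToVertex.comp (t.continuous.prodMk hφ)) hG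
    rw [hGφ x (hWO (frontier_subset_closure hx)), ht₁ (hW.frontier_eq ▸ hx).2, Pi.one_apply]
  · by_cases hx : x ∈ W
    · obtain ⟨i, hi⟩ := hφ_zero x (hWO (subset_closure hx))
      rw [piecewise_eq_of_mem _ _ _ hx]
      exact pushToVertex_mem_nonconstant (hφ_mem x) hi (ht x)
    · rw [piecewise_eq_of_notMem _ _ _ hx]
      exact hG_mem x
  · rw [piecewise_eq_of_mem _ _ _ (hAW hx), ht₀ hx, Pi.zero_apply, pushToVertex_zero]

theorem exists_isOpenShrinking_of_nonconstant [TopologicalSpace X] {k : ℕ}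
    {f : X → Fin (k + 1) → ℝ} (hf : Continuous f) (hf_mem : ∀ x, f x ∈ nonconstant k)
    {U : Fin (k + 1) → Set X} (hU : ∀ i, ∀ x ∉ U i, ∀ j, f x i ≤ f x j) :
    ∃ V, IsOpenShrinking V U ∧ ∀ x, ∃ i, x ∉ V i := by
  refine ⟨fun i => ⋃ j, {x | f x j < f x i}, ⟨fun i => isOpen_iUnion fun j =>
    isOpen_lt ((continuous_apply j).comp hf) ((continuous_apply i).comp hf), fun i x hx => ?_,
    fun x => ?_⟩, fun x => ?_⟩
  · obtain ⟨j, hj⟩ := mem_iUnion.1 hx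
    by_contra hxi
    exact hj.not_ge (hU i x hxi j)
  · obtain ⟨i, j, hij⟩ := hf_mem x
    rcases lt_or_gt_of_ne hij with h | h
    · exact ⟨j, mem_iUnion.2 ⟨i, h⟩⟩
    · exact ⟨i, mem_iUnion.2 ⟨j, h⟩⟩
  · obtain ⟨i, hi⟩ := Finite.exists_min (f x)
    exact ⟨i, fun hx => let ⟨j, hj⟩ := mem_iUnion.1 hx; (hi j).not_gt hj⟩

variable [MetricSpace X]

theorem exists_isSupportedIn_labelCochain [CompactSpace X] {q : ℕ} (hℚ : ApproxDimLE ℚ X q)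
    (hX : ∀ p : ℕ, [Fact p.Prime] → ApproxDimLE (ZMod p) X q) {U : Fin (q + 3) → Set X}
    {lam : X → Fin (q + 3)} {ε : ℝ} (hε : 0 < ε)
    (hlam : ∀ x, Metric.ball x (4 * ε) ⊆ U (lam x)) :
    ∃ δ > 0, ∃ b : List X → ℤ, CoboundaryEq δ (q + 3) b (labelCochain lam (List.ofFn id)) ∧
      IsSupportedIn b (Metric.thickening (ε / 2) {v | ∀ i, Metric.ball v (3 * ε) ⊆ U i}) := by
  refine exists_int_coboundaryEq hℚ hX hε
    (fun l _ hl => linearCombination_labelCochain_id_boundary lam hl)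
    (fun m hm _ hne v hv i y hy => ?_) (half_pos hε)
  obtain ⟨u, hu, rfl⟩ := exists_mem_of_labelCochain_ne_zero lam hne (List.mem_ofFn.2 ⟨i, rfl⟩)
  refine hlam u ?_
  rw [Metric.mem_ball] at hy ⊢
  linarith [dist_triangle y v u, hm v hv u hu]

theorem exists_label_ne_of_mem_thickening {U : ι → Set X} {lam : X → ι} {ε : ℝ}
    (hlam : ∀ x, Metric.ball x (4 * ε) ⊆ U (lam x)) {x : X}
    (hx : x ∈ Metric.thickening (2 * ε) {x | ∃ i, x ∉ U i}) :
    ∃ i, ∀ y, dist x y < ε → lam y ≠ i := by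
  obtain ⟨a, ⟨i, hai⟩, hxa⟩ := Metric.mem_thickening_iff.1 hx
  refine ⟨i, fun y hy hl => hai (hl ▸ hlam y ?_)⟩
  rw [Metric.mem_ball']
  linarith [dist_triangle_left y a x, dist_nonneg (x := x) (y := y)]

theorem notMem_thickening_of_mem_thickening {U : ι → Set X} {ε : ℝ} {x y : X}
    (hx : x ∈ Metric.thickening (2 * ε) {x | ∃ i, x ∉ U i}) (hxy : dist x y < ε / 2) :
    y ∉ Metric.thickening (ε / 2) {v | ∀ i, Metric.ball v (3 * ε) ⊆ U i} := by
  obtain ⟨a, ⟨i, hai⟩, hxa⟩ := Metric.mem_thickening_iff.1 hx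
  intro hy
  obtain ⟨s, hs, hys⟩ := Metric.mem_thickening_iff.1 hy
  refine hai (hs i ?_)
  rw [Metric.mem_ball]
  linarith [dist_triangle4_left x a y s, dist_triangle4 a x y s, dist_comm a x]

theorem exists_nonconstant_eq_pushedMap [CompactSpace X] {q : ℕ} (hq : 1 ≤ q)
    (hX : topDim X ≤ (q + 2 : ℕ)) (hℚ : ApproxDimLE ℚ X q)
    (hp : ∀ p : ℕ, [Fact p.Prime] → ApproxDimLE (ZMod p) X q) {U : Fin (q + 3) → Set X}
    {lam : X → Fin (q + 3)} {ε : ℝ} (hε : 0 < ε)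
    (hlam : ∀ x, Metric.ball x (4 * ε) ⊆ U (lam x)) :
    ∃ (M : ℕ) (h : X → Fin M → ℝ) (xw : Fin M → X) (G : X → Fin (q + 3) → ℝ),
      IsSkeletal (q + 2) h ∧ (∀ x, ∀ w ∈ support (h x), dist x (xw w) < ε) ∧ Continuous G ∧
      (∀ x, G x ∈ nonconstant (q + 2)) ∧
      ∀ x ∈ Metric.thickening (2 * ε) {x | ∃ i, x ∉ U i},
        G x = pushedMap (lam ∘ xw) (h x) := by
  obtain ⟨δ, hδ, b, hb, hbS⟩ := exists_isSupportedIn_labelCochain hℚ hp hε hlam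
  obtain ⟨M, h, xw, hh, hmono, hdist⟩ :=
    exists_isSkeletal_dist_lt hX (lt_min (half_pos hε) (half_pos hδ)) lam
  have hdist_ε : ∀ x, ∀ w ∈ support (h x), dist x (xw w) < ε / 2 := fun x w hw =>
    (hdist x w hw).trans_le (min_le_left _ _)
  have hcell : ∀ e : Fin (q + 3) → Fin M, IsCell h e → IsSmall δ (List.ofFn (xw ∘ e)) := by
    rintro e ⟨-, x, hx⟩
    simp only [IsSmall, List.forall_mem_ofFn_iff]
    intro i j
    have hi := (hdist x _ (hx ⟨i, rfl⟩)).trans_le (min_le_right _ _)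
    have hj := (hdist x _ (hx ⟨j, rfl⟩)).trans_le (min_le_right _ _)
    exact (dist_triangle_left _ _ x).trans_lt (by simp only [Function.comp_apply]; linarith)
  obtain ⟨G, hG, hG_mem, hG_eq⟩ := hh.exists_continuous_nonconstant (by omega) hmono
    fun e he => hb _ (hcell e he) List.length_ofFn
  refine ⟨M, h, xw, G, hh, fun x w hw => (hdist_ε x w hw).trans (half_lt_self hε), hG, hG_mem,
    fun x hx => hG_eq x ?_ fun e he => ?_⟩
  · obtain ⟨i, hi⟩ := exists_label_ne_of_mem_thickening hlam hx
    exact ⟨i, fun w hw => hi _ ((hdist_ε x w hw).trans (half_lt_self hε))⟩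
  · by_contra hne
    exact notMem_thickening_of_mem_thickening hx (hdist_ε x (e 0) (he ⟨0, rfl⟩))
      (hbS _ hne _ (List.mem_ofFn.2 ⟨0, rfl⟩))

theorem exists_isOpenShrinking_fin [CompactSpace X] {q : ℕ} (hq : 1 ≤ q)
    (hX : topDim X ≤ (q + 2 : ℕ)) (hℚ : ApproxDimLE ℚ X q)
    (hp : ∀ p : ℕ, [Fact p.Prime] → ApproxDimLE (ZMod p) X q) {U : Fin (q + 3) → Set X}
    (hU : ∀ i, IsOpen (U i)) (hcov : ∀ x, ∃ i, x ∈ U i) :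
    ∃ V, IsOpenShrinking V U ∧ ∀ x, ∃ i, x ∉ V i := by
  obtain ⟨δ, hδ, hball⟩ := lebesgue_number_lemma_of_metric isCompact_univ hU
    fun x _ => mem_iUnion.2 (hcov x)
  choose lam hlam using fun x => hball x (mem_univ x)
  obtain ⟨ε, hε, rfl⟩ : ∃ ε > 0, 4 * ε = δ := ⟨δ / 4, by positivity, by ring⟩
  obtain ⟨M, h, xw, G, hh, hdist, hG, hG_mem, hG_eq⟩ :=
    exists_nonconstant_eq_pushedMap hq hX hℚ hp hε hlam
  have hA : IsClosed {x | ∃ i, x ∉ U i} := by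
    simp only [ofPred_exists]
    exact isClosed_iUnion_of_finite fun i => (hU i).isClosed_compl
  obtain ⟨f, hf, hf_mem, hf_eq⟩ := exists_continuous_nonconstant_eqOn hA Metric.isOpen_thickening
    (Metric.self_subset_thickening (by positivity) _)
    ((FunOnFinite.continuous_linearMap ℝ ℝ (lam ∘ xw)).comp hh.continuous)
    (fun x => simplicialMap_mem_simplex _ (hh.mem x)) (fun x hx =>
      let ⟨i, hi⟩ := exists_label_ne_of_mem_thickening hlam hx
      ⟨i, simplicialMap_apply_eq_zero fun w hw => hi _ (hdist x w hw)⟩) hG hG_mem hG_eq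
  refine exists_isOpenShrinking_of_nonconstant hf hf_mem fun i x hxi j => ?_
  have hi : simplicialMap (lam ∘ xw) (h x) i = 0 :=
    simplicialMap_apply_eq_zero fun w hw (hl : lam (xw w) = i) => hxi <| hl ▸ hlam (xw w) <|
      Metric.mem_ball.2 ((hdist x w hw).trans (by linarith))
  rw [hf_eq ⟨i, hxi⟩, Function.comp_apply, hi]
  exact (simplicialMap_mem_simplex _ (hh.mem x)).1 j

theorem exists_isOpenShrinking_comp [CompactSpace X] {q : ℕ} (hq : 1 ≤ q)
    (hX : topDim X ≤ (q + 2 : ℕ)) (hℚ : ApproxDimLE ℚ X q)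
    (hp : ∀ p : ℕ, [Fact p.Prime] → ApproxDimLE (ZMod p) X q) {U : ι → Set X}
    (hU : ∀ i, IsOpen (U i)) (hcov : ∀ x, ∃ i, x ∈ U i) {s : Fin (q + 3) → ι}
    (hs : Function.Injective s) :
    ∃ V, IsOpenShrinking V U ∧ ∀ x, ∃ j, x ∉ V (s j) := by
  let r := Function.invFun s
  obtain ⟨W, hW, hW'⟩ := exists_isOpenShrinking_fin hq hX hℚ hp
    (U := fun j => ⋃ i ∈ r ⁻¹' {j}, U i) (fun j => isOpen_biUnion fun i _ => hU i) fun x =>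
      let ⟨i, hi⟩ := hcov x
      ⟨r i, mem_biUnion rfl hi⟩
  refine ⟨fun i => U i ∩ W (r i), ⟨fun i => (hU i).inter (hW.isOpen _), fun i => inter_subset_left,
    fun x => ?_⟩, fun x => ?_⟩
  · obtain ⟨j, hj⟩ := hW.exists_mem x
    obtain ⟨i, rfl, hi⟩ := mem_iUnion₂.1 (hW.subset j hj)
    exact ⟨i, hi, hj⟩
  · obtain ⟨j, hj⟩ := hW' x
    exact ⟨j, fun h => hj (Function.leftInverse_invFun hs j ▸ h.2)⟩

theorem exists_isOpenShrinking_forall_injective [CompactSpace X] {q : ℕ} (hq : 1 ≤ q)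
    (hX : topDim X ≤ (q + 2 : ℕ)) (hℚ : ApproxDimLE ℚ X q)
    (hp : ∀ p : ℕ, [Fact p.Prime] → ApproxDimLE (ZMod p) X q) [Finite ι] {U : ι → Set X}
    (hU : ∀ i, IsOpen (U i)) (hcov : ∀ x, ∃ i, x ∈ U i) :
    ∃ V, IsOpenShrinking V U ∧
      ∀ s : Fin (q + 3) → ι, Function.Injective s → ∀ x, ∃ j, x ∉ V (s j) := by
  suffices H : ∀ T : Set (Fin (q + 3) → ι), (∀ s ∈ T, Function.Injective s) →
      ∃ V, IsOpenShrinking V U ∧ ∀ s ∈ T, ∀ x, ∃ j, x ∉ V (s j) from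
    H {s | Function.Injective s} fun _ hs => hs
  intro T
  induction T, T.toFinite using Set.Finite.induction_on with
  | empty => exact fun _ => ⟨U, ⟨hU, fun _ => Subset.rfl, hcov⟩, fun _ hs => hs.elim⟩
  | @insert s T _ _ ih =>
    intro hT
    obtain ⟨V, hV, hV_miss⟩ := ih fun s hs => hT s (mem_insert_of_mem _ hs)
    obtain ⟨W, hW, hW_miss⟩ := exists_isOpenShrinking_comp hq hX hℚ hp hV.isOpen hV.exists_mem
      (hT s (mem_insert _ _))
    refine ⟨W, ⟨hW.isOpen, fun i => (hW.subset i).trans (hV.subset i), hW.exists_mem⟩, ?_⟩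
    rintro s' (rfl | hs') x
    · exact hW_miss x
    · obtain ⟨j, hj⟩ := hV_miss s' hs' x
      exact ⟨j, fun h => hj (hW.subset _ h)⟩

/-- Integral cocycles of degree `q + 2` are coboundaries at small scales, so there is no obstruction
to deforming a map to the nerve of a fine cover off the interiors of the `(q + 2)`-simplices. -/
theorem topDim_le_succ_of_le_add_two [CompactSpace X] {q : ℕ} (hq : 1 ≤ q)
    (hX : topDim X ≤ (q + 2 : ℕ)) (hℚ : ApproxDimLE ℚ X q)
    (hp : ∀ p : ℕ, [Fact p.Prime] → ApproxDimLE (ZMod p) X q) : topDim X ≤ (q + 1 : ℕ) := by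
  refine topDim_le_of_forall_refinement fun α hα => ?_
  obtain ⟨β, hfin, hβ, hβα, -, -⟩ := exists_finite_refinement_ord_le hX hα
  have : Finite β := hfin
  obtain ⟨V, hV, hV_miss⟩ := exists_isOpenShrinking_forall_injective hq hX hℚ hp
    (fun U : β => hβ.1 U U.2) hβ.exists_mem
  refine ⟨range V, isOpenCover_range hV.isOpen hV.exists_mem, ?_, ?_⟩
  · rintro _ ⟨i, rfl⟩
    obtain ⟨U, hU, h⟩ := hβα i.1 i.2
    exact ⟨U, hU, (hV.subset i).trans h⟩
  · refine ord_range_le fun x L hL hx => ?_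
    by_contra! hlen
    obtain ⟨j, hj⟩ := hV_miss (fun j => L.get ⟨j.val, by omega⟩)
      (fun a b hab => Fin.ext (by simpa using hL.injective_get hab)) x
    exact hj (hx _ (List.get_mem _ _))

end Descent

section ProductDimension

theorem topDim_le_succ_of_approxDimLE {X : Type*} [MetricSpace X] [CompactSpace X] {n q : ℕ}
    (hX : topDim X ≤ n) (hq : 1 ≤ q) (hℚ : ApproxDimLE ℚ X q)
    (hp : ∀ p : ℕ, [Fact p.Prime] → ApproxDimLE (ZMod p) X q) : topDim X ≤ (q + 1 : ℕ) := by
  have hlower (j : ℕ) : topDim X ≤ (q + 1 + j : ℕ) → topDim X ≤ (q + 1 : ℕ) := by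
    induction j with
    | zero => exact id
    | succ j ih =>
      intro h
      refine ih ?_
      rw [Nat.add_right_comm] at h ⊢
      exact topDim_le_succ_of_le_add_two (by omega) h (hℚ.mono (by omega))
        fun p _ => (hp p).mono (by omega)
  exact hlower n (hX.trans (by exact_mod_cast Nat.le_add_left n (q + 1)))

variable {K : Type*} [MetricSpace K] [CompactSpace K]

theorem topDim_pi_le_pow {n : ℕ} (hK : topDim K ≤ n) (N : ℕ) :
    topDim (Fin N → K) ≤ ((n + 1) ^ N : ℕ) := by
  classical
  refine topDim_le_of_forall_dist_lt fun ε hε => ?_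
  obtain ⟨β, hfin, hβ, hord, -, hdist⟩ := exists_finite_cover_dist_lt hK hε
  have : Fintype β := hfin.fintype
  let box (s : Fin N → β) : Set (Fin N → K) := {x | ∀ i, x i ∈ (s i).1}
  have hopen (s : Fin N → β) : IsOpen (box s) := by
    simp only [box, Set.ofPred_forall]
    exact isOpen_iInter_of_finite fun i => (hβ.1 _ (s i).2).preimage (continuous_apply i)
  have hcov (x : Fin N → K) : ∃ s, x ∈ box s := by
    choose s hs using fun i => hβ.exists_mem (x i)
    exact ⟨s, hs⟩
  refine ⟨range box, isOpenCover_range hopen hcov, ord_range_le fun x L hL hx => ?_, ?_⟩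
  · let B (i : Fin N) : Finset β := {b | x i ∈ b.1}
    have hB (i : Fin N) : (B i).card ≤ n + 1 := by
      simpa using ord_le_iff.1 hord (x i) ((B i).toList.map Subtype.val)
        ((Finset.nodup_toList _).map Subtype.val_injective) (by simp [B])
    calc L.length = L.toFinset.card := (List.toFinset_card_of_nodup hL).symm
      _ ≤ (Fintype.piFinset B).card := Finset.card_le_card fun s hs => by
        simpa [B, box] using hx s (by simpa using hs)
      _ ≤ (n + 1) ^ N := by
        simpa [Fintype.card_piFinset] using
          Finset.prod_le_pow_card Finset.univ _ _ fun i _ => hB i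
      _ ≤ (n + 1) ^ N + 1 := Nat.le_succ _
  · rintro _ ⟨s, rfl⟩ x hx y hy
    exact (dist_pi_lt_iff hε).2 fun i => hdist _ (s i).2 _ (hx i) _ (hy i)

theorem topDim_pi_le_of_approxDimLE {n q N : ℕ} (hK : topDim K ≤ n) (hN : 1 ≤ N * q)
    (hℚ : ApproxDimLE ℚ K q) (hp : ∀ p : ℕ, [Fact p.Prime] → ApproxDimLE (ZMod p) K q) :
    topDim (Fin N → K) ≤ (N * q + 1 : ℕ) :=
  topDim_le_succ_of_approxDimLE (topDim_pi_le_pow hK N) hN (hℚ.pow N) fun p _ => (hp p).pow N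

/-- An essential class of degree `q + 1` in `K` would have an essential square of degree
`2 * q + 2` in `K × K`. -/
theorem approxDimLE_of_topDim_prod_le {F : Type*} [Field F] {q : ℕ}
    (hK : topDim K ≤ (q + 1 : ℕ)) (hKK : topDim (K × K) ≤ (2 * q + 1 : ℕ)) :
    ApproxDimLE F K q := by
  refine .of_not_hasEssentialClass hK fun ε hε hess => ?_
  obtain ⟨β, -, hβ, hord, -, hdist⟩ := exists_finite_cover_dist_lt hKK (by positivity : 0 < ε / 4)
  have hsq : HasEssentialClass F (K × K) (2 * q + 1 + 1) ε := by
    convert hess.prod hess using 1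
    ring
  exact hsq.not_ord_le hε hβ hdist hord

end ProductDimension

section CompatMetric

variable {X : Type*} {d : X → X → ℝ}

theorem dynDist_le {T : X → X} {n : ℕ} {C : ℝ} (hC : 0 ≤ C) {x y : X}
    (h : ∀ i < n, d (T^[i] x) (T^[i] y) ≤ C) : dynDist d T n x y ≤ C := by
  refine Real.sSup_le ?_ hC
  rintro _ ⟨i, hi, rfl⟩
  exact h i hi

theorem le_dynDist (T : X → X) {n i : ℕ} (hi : i < n) {C : ℝ} (hC : ∀ x y, d x y ≤ C) (x y : X) :
    d (T^[i] x) (T^[i] y) ≤ dynDist d T n x y := by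
  refine le_csSup ⟨C, ?_⟩ ⟨i, hi, rfl⟩
  rintro _ ⟨i, -, rfl⟩
  exact hC _ _

theorem mesh_le {α : Set (Set X)} {C : ℝ} (hC : 0 ≤ C)
    (h : ∀ U ∈ α, ∀ x ∈ U, ∀ y ∈ U, d x y ≤ C) : mesh d α ≤ C := by
  refine Real.sSup_le ?_ hC
  rintro _ ⟨U, hU, rfl⟩
  refine Real.sSup_le ?_ hC
  rintro _ ⟨x, hx, y, hy, rfl⟩
  exact h U hU x hx y hy

theorem le_mesh {C : ℝ} (hC₀ : 0 ≤ C) (hC : ∀ x y, d x y ≤ C) {α : Set (Set X)} {U : Set X}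
    (hU : U ∈ α) {x y : X} (hx : x ∈ U) (hy : y ∈ U) : d x y ≤ mesh d α := by
  have hdiam : d x y ≤ diamD d U := by
    refine le_csSup ⟨C, ?_⟩ ⟨x, hx, y, hy, rfl⟩
    rintro _ ⟨x, -, y, -, rfl⟩
    exact hC x y
  refine hdiam.trans (le_csSup ⟨C, ?_⟩ ⟨U, hU, rfl⟩)
  rintro _ ⟨V, -, rfl⟩
  refine Real.sSup_le ?_ hC₀
  rintro _ ⟨x, -, y, -, rfl⟩
  exact hC x y

variable [TopologicalSpace X]

theorem IsCompatMetric.nonneg (hd : IsCompatMetric d) (x y : X) : 0 ≤ d x y := by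
  have h := hd.triangle x y x
  rw [hd.refl, hd.symm y x] at h
  linarith

theorem IsCompatMetric.isOpen_ball (hd : IsCompatMetric d) (x : X) (r : ℝ) :
    IsOpen {y | d x y < r} := by
  rw [hd.isOpen_iff]
  intro y (hy : d x y < r)
  refine ⟨r - d x y, sub_pos.2 hy, fun z hz => ?_⟩
  change d x z < r
  linarith [hd.triangle x y z]

theorem IsCompatMetric.continuous (hd : IsCompatMetric d) :
    Continuous fun p : X × X => d p.1 p.2 := by
  rw [continuous_iff_continuousAt]
  rintro ⟨x, y⟩
  rw [ContinuousAt, Metric.tendsto_nhds]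
  intro ε hε
  have hball (z : X) : {w | d z w < ε / 2} ∈ nhds z :=
    (hd.isOpen_ball z _).mem_nhds (by simp [hd.refl, hε])
  filter_upwards [prod_mem_nhds (hball x) (hball y)]
  rintro ⟨x', y'⟩ ⟨hx : d x x' < ε / 2, hy : d y y' < ε / 2⟩
  rw [Real.dist_eq, abs_lt]
  have h₁ := hd.triangle x x' y
  have h₂ := hd.triangle x' y' y
  have h₃ := hd.triangle x' x y'
  have h₄ := hd.triangle x y y'
  rw [hd.symm y' y] at h₂
  rw [hd.symm x' x] at h₃
  constructor <;> simp only <;> linarith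

theorem IsCompatMetric.exists_le [CompactSpace X] (hd : IsCompatMetric d) :
    ∃ C, 0 ≤ C ∧ ∀ x y, d x y ≤ C := by
  obtain ⟨C, hC⟩ := (isCompact_range hd.continuous).bddAbove
  exact ⟨max C 0, le_max_right _ _, fun x y => (hC ⟨(x, y), rfl⟩).trans (le_max_left _ _)⟩

end CompatMetric

section Covers

variable {X Y : Type*} [TopologicalSpace X] [TopologicalSpace Y]

theorem IsOpenCover.exists_ord_le_mapsTo {f : X → Y} (hf : Continuous f) {β : Set (Set Y)}
    (hβ : IsOpenCover β) {n : ℕ} (hord : ord β ≤ n) :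
    ∃ α, IsOpenCover α ∧ ord α ≤ n ∧ ∀ U ∈ α, ∃ V ∈ β, MapsTo f U V := by
  refine ⟨range fun V : β => f ⁻¹' V.1, isOpenCover_range (fun V => (hβ.1 _ V.2).preimage hf)
    fun x => hβ.exists_mem (f x), ord_range_le fun x L hL hx => ?_, ?_⟩
  · simpa using ord_le_iff.1 hord (f x) (L.map Subtype.val) (hL.map Subtype.val_injective)
      (by simpa using fun V hV hVL => ⟨hV, hx ⟨V, hV⟩ hVL⟩)
  · rintro _ ⟨V, rfl⟩
    exact ⟨V.1, V.2, mapsTo_preimage f V.1⟩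

theorem nonempty_of_not_topDim_le_zero (h : ¬ topDim X ≤ 0) : Nonempty X := by
  by_contra hX
  rw [not_nonempty_iff] at hX
  refine h (topDim_le_of_forall_refinement fun α _ =>
    ⟨∅, ⟨by simp, Subsingleton.elim _ _⟩, by simp [Refines], iSup₂_le ?_⟩)
  rintro n ⟨f, -, hf, -⟩
  exact absurd (hf 0) (notMem_empty _)

end Covers

theorem HasEssentialClass.le_covD {R : Type*} [CommRing R] [Nontrivial R] {X Y : Type*}
    [MetricSpace X] [CompactSpace X] [TopologicalSpace Y] {n : ℕ} {ε : ℝ} (hε : 0 < ε)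
    (hess : HasEssentialClass R X n ε) {f : X → Y} (hf : Continuous f) {α : Set (Set Y)}
    (hsmall : ∀ U ∈ α, ∀ x, f x ∈ U → ∀ y, f y ∈ U → dist x y < ε / 4) : n ≤ covD α := by
  by_contra! hlt
  obtain _ | k := n
  · simp at hlt
  have hle : covD α ≤ k := ENat.lt_natCast_add_one_iff.1 (by exact_mod_cast hlt)
  obtain ⟨β, hβ, hβα, hord⟩ := exists_refinement_ord_le_of_covD_le hle
  obtain ⟨γ, hγ, hγord, hγβ⟩ := hβ.exists_ord_le_mapsTo hf hord
  refine hess.not_ord_le hε hγ (fun U hU x hx y hy => ?_) hγord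
  obtain ⟨V, hV, hUV⟩ := hγβ U hU
  obtain ⟨W, hW, hVW⟩ := hβα V hV
  exact hsmall W hW x (hVW (hUV hx)) y (hVW (hUV hy))

section FullShift

variable {K : Type*}

theorem shift_iterate_apply (i : ℕ) (x : ℤ → K) (j : ℤ) : (shift K)^[i] x j = x (j + i) := by
  induction i generalizing x with
  | zero => simp
  | succ i ih =>
    rw [Function.iterate_succ_apply, ih, shift]
    congr 1
    push_cast
    ring

variable [MetricSpace K] [CompactSpace K] {d : (ℤ → K) → (ℤ → K) → ℝ}

theorem IsCompatMetric.exists_forall_dist_lt_imp_lt (hd : IsCompatMetric d) {ε : ℝ} (hε : 0 < ε) :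
    ∃ (m : ℕ) (η : ℝ), 0 < η ∧
      ∀ x y : ℤ → K, (∀ j : ℤ, |j| ≤ m → dist (x j) (y j) < η) → d x y < ε := by
  have hmem : {p : (ℤ → K) × (ℤ → K) | d p.1 p.2 < ε} ∈ uniformity (ℤ → K) := by
    rw [← nhdsSet_diagonal_eq_uniformity]
    refine (isOpen_lt hd.continuous continuous_const).mem_nhdsSet.2 ?_
    rintro ⟨x, y⟩ (rfl : x = y)
    simpa [hd.refl] using hε
  rw [Pi.uniformity, (HasBasis.iInf' fun j =>
    Metric.uniformity_basis_dist.comap _).mem_iff] at hmem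
  obtain ⟨⟨I, r⟩, ⟨hI, hr⟩, hsub⟩ := hmem
  have hev : ∀ᶠ η in nhdsWithin 0 (Ioi 0), ∀ j ∈ I, η < r j :=
    (eventually_all_finite hI).2 fun j hj => nhdsWithin_le_nhds (gt_mem_nhds (hr j hj))
  obtain ⟨η, hηr, hη : 0 < η⟩ := (hev.and self_mem_nhdsWithin).exists
  obtain ⟨m, hm⟩ := (hI.image Int.natAbs).bddAbove
  refine ⟨m, η, hη, fun x y hxy => @hsub (x, y) (mem_iInter₂.2 fun j hj => ?_)⟩
  have hjm : |j| ≤ m := by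
    rw [Int.abs_eq_natAbs]
    exact_mod_cast hm (mem_image_of_mem _ hj)
  exact (hxy j hjm).trans (hηr j hj)

theorem IsCompatMetric.exists_lt_imp_dist_lt (hd : IsCompatMetric d) {ε : ℝ} (hε : 0 < ε) :
    ∃ η > 0, ∀ x y : ℤ → K, d x y < η → dist (x 0) (y 0) < ε := by
  let far : Set ((ℤ → K) × (ℤ → K)) := {p | ε ≤ dist (p.1 0) (p.2 0)}
  have hfar : IsCompact far := (isClosed_le continuous_const (by fun_prop)).isCompact
  rcases far.eq_empty_or_nonempty with hempty | hne
  · refine ⟨1, one_pos, fun x y _ => not_le.1 fun h => ?_⟩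
    exact (hempty.subset (show (x, y) ∈ far from h)).elim
  · obtain ⟨⟨x₀, y₀⟩, h₀ : ε ≤ dist (x₀ 0) (y₀ 0), hmin⟩ :=
      hfar.exists_isMinOn hne hd.continuous.continuousOn
    refine ⟨d x₀ y₀, (hd.nonneg _ _).lt_of_ne fun h => ?_, fun x y hxy => not_le.1 fun h => ?_⟩
    · rw [hd.eq_of _ _ h.symm, dist_self] at h₀
      exact h₀.not_gt hε
    · exact hxy.not_ge (isMinOn_iff.1 hmin (x, y) h)

theorem exists_widim_dynDist_shift_le (hd : IsCompatMetric d) {b : ℕ}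
    (hdim : ∀ N : ℕ, 1 ≤ N → topDim (Fin N → K) ≤ (N + b : ℕ)) {ε : ℝ} (hε : 0 < ε) :
    ∃ m : ℕ, ∀ n : ℕ, 1 ≤ n → widim ε (dynDist d (shift K) n) ≤ (n + m : ℕ) := by
  obtain ⟨m, η, hη, hdη⟩ := hd.exists_forall_dist_lt_imp_lt (half_pos hε)
  refine ⟨2 * m + b, fun n hn => ?_⟩
  obtain ⟨β, -, hβ, hord, -, hdist⟩ :=
    exists_finite_cover_dist_lt (hdim (n + 2 * m) (by omega)) hη
  let window (x : ℤ → K) (j : Fin (n + 2 * m)) : K := x ((j : ℤ) - m)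
  have hwindow : Continuous window := continuous_pi fun j => continuous_apply _
  obtain ⟨α, hα, hαord, hαβ⟩ := hβ.exists_ord_le_mapsTo hwindow hord
  have hmesh : mesh (dynDist d (shift K) n) α ≤ ε / 2 := by
    refine mesh_le (half_pos hε).le fun U hU x hx y hy => ?_
    refine dynDist_le (half_pos hε).le fun i hi => (hdη _ _ fun j hj => ?_).le
    obtain ⟨V, hV, hUV⟩ := hαβ U hU
    rw [abs_le] at hj
    have hlt : (j + i + m).toNat < n + 2 * m := by omega
    have hj' : ((j + i + m).toNat : ℤ) - m = j + i := by omega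
    have hdist_j := (dist_pi_lt_iff hη).1 (hdist V hV _ (hUV hx) _ (hUV hy)) ⟨_, hlt⟩
    simp only [window, hj'] at hdist_j
    rwa [shift_iterate_apply, shift_iterate_apply]
  calc widim ε (dynDist d (shift K) n)
      ≤ covD α := iInf₂_le (i := α) ⟨hα, hmesh.trans_lt (half_lt_self hε)⟩
    _ ≤ ord α := iInf₂_le (i := α) ⟨hα, fun V hV => ⟨V, hV, subset_rfl⟩⟩
    _ ≤ (n + (2 * m + b) : ℕ) := by rwa [← Nat.add_assoc]

theorem exists_le_widim_dynDist_shift (hd : IsCompatMetric d) (h : ¬ topDim K ≤ 0) :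
    ∃ ε > 0, ∀ n : ℕ, n ≤ widim ε (dynDist d (shift K) n) := by
  obtain ⟨b⟩ := nonempty_of_not_topDim_le_zero h
  obtain ⟨ε₀, hε₀, hess⟩ := HasEssentialClass.one (R := ℚ) h
  obtain ⟨ε, hε, hdε⟩ := hd.exists_lt_imp_dist_lt (by positivity : 0 < ε₀ / 4)
  obtain ⟨C, hC₀, hC⟩ := hd.exists_le
  refine ⟨ε, hε, fun n => le_iInf₂ ?_⟩
  rintro α ⟨-, hmesh⟩
  let extend (v : Fin n → K) (j : ℤ) : K :=
    if hj : 0 ≤ j ∧ j < n then v ⟨j.toNat, by omega⟩ else b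
  have hextend : Continuous extend := by
    refine continuous_pi fun j => ?_
    by_cases hj : 0 ≤ j ∧ j < n
    · simpa only [extend, hj, and_self, dite_true] using continuous_apply _
    · simpa only [extend, hj, dite_false] using continuous_const
  have hiter (v : Fin n → K) (i : Fin n) : (shift K)^[i] (extend v) 0 = v i := by
    simp [shift_iterate_apply, extend]
  refine HasEssentialClass.le_covD hε₀ (by simpa using hess.pow n) hextend
    fun U hU v hv w hw => (dist_pi_lt_iff (by positivity)).2 fun i => ?_
  rw [← hiter v, ← hiter w]
  refine hdε _ _ (lt_of_le_of_lt ?_ hmesh)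
  have hdynC (x y) : dynDist d (shift K) n x y ≤ C := dynDist_le hC₀ fun _ _ => hC _ _
  exact (le_dynDist _ i.2 hC _ _).trans (le_mesh hC₀ hdynC hU hv hw)

theorem mdim_shift_le_one (hd : IsCompatMetric d) {b : ℕ}
    (hdim : ∀ N : ℕ, 1 ≤ N → topDim (Fin N → K) ≤ (N + b : ℕ)) : mdim (shift K) d ≤ 1 := by
  refine iSup₂_le fun ε hε => ?_
  obtain ⟨m, hm⟩ := exists_widim_dynDist_shift_le hd hdim hε
  have htendsto : Tendsto (fun n : ℕ => 1 + (m : ℝ≥0∞) / (n : ℝ≥0∞)) atTop (nhds 1) := by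
    simpa using (ENNReal.Tendsto.const_div (a := m) ENNReal.tendsto_nat_nhds_top
      (.inr (ENNReal.natCast_ne_top m))).const_add 1
  rw [← htendsto.liminf_eq]
  refine liminf_le_liminf ?_
  filter_upwards [eventually_ge_atTop 1] with n hn
  have hn₀ : (n : ℝ≥0∞) ≠ 0 := by exact_mod_cast Nat.one_le_iff_ne_zero.1 hn
  have hwidim : (widim ε (dynDist d (shift K) n) : ℝ≥0∞) ≤ n + m := by
    simpa using ENat.toENNReal_le.2 (hm n hn)
  calc _ ≤ ((n : ℝ≥0∞) + m) / n := ENNReal.div_le_div_right hwidim _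
    _ = 1 + (m : ℝ≥0∞) / n := by
      rw [ENNReal.add_div, ENNReal.div_self hn₀ (ENNReal.natCast_ne_top n)]

theorem one_le_mdim_shift (hd : IsCompatMetric d) (h : ¬ topDim K ≤ 0) :
    1 ≤ mdim (shift K) d := by
  obtain ⟨ε, hε, hwidim⟩ := exists_le_widim_dynDist_shift hd h
  refine le_iSup₂_of_le ε hε (le_liminf_of_le (by isBoundedDefault) ?_)
  filter_upwards [eventually_ge_atTop 1] with n hn
  have hn₀ : (n : ℝ≥0∞) ≠ 0 := by exact_mod_cast Nat.one_le_iff_ne_zero.1 hn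
  rw [← ENNReal.div_self hn₀ (ENNReal.natCast_ne_top n)]
  exact ENNReal.div_le_div_right (by simpa using ENat.toENNReal_le.2 (hwidim n)) _

end FullShift

theorem mdim_fullshift_boltyanskii_general {K : Type*} [MetricSpace K] [CompactSpace K]
    (h1 : topDim K ≠ 0) (h2 : topDim K ≤ 2) (h3 : topDim (K × K) ≤ 3)
    {d : (ℤ → K) → (ℤ → K) → ℝ} (hd : IsCompatMetric d) : mdim (shift K) d = 1 := by
  have happrox (F : Type) [Field F] : ApproxDimLE F K 1 := approxDimLE_of_topDim_prod_le h2 h3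
  have hpow (N : ℕ) (hN : 1 ≤ N) : topDim (Fin N → K) ≤ (N + 1 : ℕ) := by
    simpa using topDim_pi_le_of_approxDimLE (N := N) h2 (by simpa) (happrox ℚ)
      fun p _ => happrox (ZMod p)
  exact (mdim_shift_le_one hd hpow).antisymm
    (one_le_mdim_shift hd fun h => h1 (nonpos_iff_eq_zero.1 h))

/-- if `K` is a compact metric space with `dim K = 2` and `dim K² = 3`
(e.g. the Boltyanskiĭ surface), then the full shift on the alphabet `K` has mean
dimension `1`; in particular `mdim(K^ℤ, σ) < dim K`. -/
theorem mdim_fullshift_boltyanskii {K : Type*} [MetricSpace K] [CompactSpace K]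
    (h2 : topDim K = 2) (h3 : topDim (K × K) = 3)
    (d : (ℤ → K) → (ℤ → K) → ℝ) (hd : IsCompatMetric d) :
    mdim (shift K) d = 1 ∧ mdim (shift K) d < (topDim K : ℝ≥0∞) := by
  have h := mdim_fullshift_boltyanskii_general (by simp [h2]) h2.le h3.le hd
  exact ⟨h, by simp [h, h2]⟩

end MeanDimPaper
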